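/- arXiv:2301.09101 — 3 statements merged into one kernel-verified Lean document; each statement's English description precedes it below -/
import Mathlib

section
/- Let p be an odd prime and G₂ a special p-group with center of order p³, |G₂| ≥ p^{13}, and d(G₂) = d. Then |M(G₂)| ≤ p^{(1/2)d(d-1) + 2}. -/
/-- The Schur multiplier of a group `G`: the second cohomology group `H²(G, ℂˣ)`
of `G` with coefficients in `ℂˣ` (with trivial `G`-action), as in the paper. -/
noncomputable def schurMultiplier (G : Type) [Group G] : Type :=
  groupCohomology (Rep.trivial ℤ G (Additive ℂˣ)) 2


section Aux
open Module
open scoped commutatorElement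


section LA
variable {F V W : Type} [Field F] [AddCommGroup V] [Module F V] [AddCommGroup W] [Module F W]

/-- Jacobi pairings. -/
def jacS (B : V →ₗ[F] V →ₗ[F] W) : Submodule F (V →ₗ[F] Dual F W) where
  carrier := {φ | ∀ x y z, φ x (B y z) + φ y (B z x) + φ z (B x y) = 0}
  zero_mem' := by intro x y z; simp
  add_mem' := by
    intro a b ha hb x y z
    have h1 := ha x y z
    have h2 := hb x y z
    simp only [LinearMap.add_apply]
    linear_combination h1 + h2
  smul_mem' := by
    intro c a ha x y z
    have h1 := ha x y z
    simp only [LinearMap.smul_apply, smul_eq_mul]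
    linear_combination c * h1

/-- Vectors whose brackets are killed by `R`. -/
def nullR (B : V →ₗ[F] V →ₗ[F] W) (R : Submodule F (Dual F W)) : Submodule F V where
  carrier := {x | ∀ r ∈ R, ∀ y, r (B x y) = 0}
  zero_mem' := by intro r _ y; simp
  add_mem' := by
    intro a b ha hb r hr y
    simp [ha r hr y, hb r hr y]
  smul_mem' := by
    intro c a ha r hr y
    simp [ha r hr y]

set_option linter.unusedSectionVars false
lemma alt_neg {B : V →ₗ[F] V →ₗ[F] W} (hB : ∀ x, B x x = 0) (x y : V) : B x y = - B y x := by
  have h := hB (x + y)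
  simp only [map_add, LinearMap.add_apply, hB] at h
  rw [eq_neg_iff_add_eq_zero]
  simpa [add_comm] using h

variable [FiniteDimensional F V] [FiniteDimensional F W]


lemma exists_basis_sub {E : Type} [AddCommGroup E] [Module F E] [FiniteDimensional F E]
    (R : Submodule F E) (r : ℕ) (hr : finrank F R = r) :
    ∃ b : Fin r → E, LinearIndependent F b ∧ (∀ i, b i ∈ R) ∧
      ∀ s ∈ R, ∃ c : Fin r → F, s = ∑ i, c i • b i := by
  let b := finBasisOfFinrankEq F R hr
  refine ⟨fun i => b i, b.linearIndependent.map' R.subtype (by simp), fun i => (b i).2, ?_⟩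
  intro s hs
  refine ⟨fun i => b.repr ⟨s, hs⟩ i, ?_⟩
  have h1 := congrArg (fun t : R => (t : E)) (b.sum_repr ⟨s, hs⟩)
  simp only [Submodule.coe_sum, Submodule.coe_smul] at h1
  exact h1.symm

lemma sub_dim {E E' : Type} [AddCommGroup E] [Module F E] [AddCommGroup E'] [Module F E']
    [FiniteDimensional F E'] (S : Submodule F E)
    (T : E →ₗ[F] E') (h : ∀ x ∈ S, T x = 0 → x = 0) : finrank F S ≤ finrank F E' := by
  apply LinearMap.finrank_le_finrank_of_injective (f := T ∘ₗ S.subtype)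
  rw [injective_iff_map_eq_zero]
  rintro ⟨x, hx⟩ h0
  simpa using h x hx h0

lemma nullR_dim {B : V →ₗ[F] V →ₗ[F] W} (hB : ∀ x, B x x = 0) {φ : V →ₗ[F] Dual F W}
    (hφ : φ ∈ jacS B) (r : ℕ) (hr : finrank F (LinearMap.range φ) = r) :
    finrank F V ≤ finrank F (nullR B (LinearMap.range φ)) + r +
      Fintype.card {p : Fin r × Fin r // p.1 ≤ p.2} := by
  obtain ⟨b, hb, hbm, hbs⟩ := exists_basis_sub (LinearMap.range φ) r hr
  have hy : ∀ i, ∃ y, φ y = b i := fun i => hbm i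
  choose y hy using hy
  have hspan : ∀ s ∈ LinearMap.range φ, ∀ w : W, (∀ i, φ (y i) w = 0) → s w = 0 := by
    intro s hs w hw
    obtain ⟨c, rfl⟩ := hbs s hs
    simp only [LinearMap.coe_sum, Finset.sum_apply, LinearMap.smul_apply]
    refine Finset.sum_eq_zero fun i _ => ?_
    rw [← hy, hw, smul_zero]
  let T : LinearMap.ker φ →ₗ[F] ({p : Fin r × Fin r // p.1 ≤ p.2} → F) :=
    LinearMap.pi fun p => (φ (y p.1.1)) ∘ₗ (B.flip (y p.1.2)) ∘ₗ (LinearMap.ker φ).subtype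
  have hT : ∀ x p, T x p = φ (y p.1.1) (B x (y p.1.2)) := fun x p => rfl
  have h1 := LinearMap.finrank_range_add_finrank_ker T
  have h2 := LinearMap.finrank_range_add_finrank_ker φ
  have h3 : finrank F (LinearMap.range T) ≤ Fintype.card {p : Fin r × Fin r // p.1 ≤ p.2} := by
    refine (Submodule.finrank_le _).trans ?_
    simp
  have h4 : finrank F (LinearMap.ker T) ≤ finrank F (nullR B (LinearMap.range φ)) := by
    rw [(Submodule.equivMapOfInjective (LinearMap.ker φ).subtype
      (Submodule.injective_subtype _) (LinearMap.ker T)).finrank_eq]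
    apply Submodule.finrank_mono
    rintro _ ⟨x, hx, rfl⟩
    have hx0 : φ (x : V) = 0 := x.2
    have hsym : ∀ u v, φ v (B x u) = φ u (B x v) := by
      intro u v
      have h := hφ x u v
      rw [hx0, alt_neg hB v x] at h
      simp at h
      linear_combination h
    have hall : ∀ i j, φ (y i) (B x (y j)) = 0 := by
      intro i j
      rcases le_total i j with h | h
      · rw [← hT x ⟨(i, j), h⟩, show T x = 0 from hx]; rfl
      · rw [hsym, ← hT x ⟨(j, i), h⟩, show T x = 0 from hx]; rfl
    intro s hs v
    apply hspan s hs
    intro i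
    change φ (y i) (B x v) = 0
    rw [hsym]
    exact hspan _ ⟨v, rfl⟩ _ fun j => hall j i
  omega

variable {B : V →ₗ[F] V →ₗ[F] W}

lemma rank_le_two (hB : ∀ x, B x x = 0) (hrad : ∀ x, (∀ y, B x y = 0) → x = 0)
    (hW : finrank F W = 3) (hV : 10 ≤ finrank F V) {φ : V →ₗ[F] Dual F W}
    (hφ : φ ∈ jacS B) : finrank F (LinearMap.range φ) ≤ 2 := by
  by_contra hcon
  have h3 : finrank F (LinearMap.range φ) ≤ finrank F (Dual F W) := Submodule.finrank_le _
  have hD : finrank F (Dual F W) = 3 := by rw [Subspace.dual_finrank_eq, hW]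
  have hr : finrank F (LinearMap.range φ) = 3 := by omega
  have htop : LinearMap.range φ = ⊤ := Submodule.eq_top_of_finrank_eq (by omega)
  have h := nullR_dim hB hφ 3 hr
  have hc : Fintype.card {p : Fin 3 × Fin 3 // p.1 ≤ p.2} = 6 := by decide
  have hn : nullR B (LinearMap.range φ) = ⊥ := by
    rw [eq_bot_iff]
    intro x hx
    apply hrad
    intro y
    rw [← Module.forall_dual_apply_eq_zero_iff F]
    intro s
    exact hx s (by rw [htop]; trivial) y
  rw [hn, hc, finrank_bot] at h
  omega

lemma range_eq (hB : ∀ x, B x x = 0) (hrad : ∀ x, (∀ y, B x y = 0) → x = 0)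
    (hspan : ∀ r : Dual F W, (∀ x y, r (B x y) = 0) → r = 0)
    (hW : finrank F W = 3) (hV : 10 ≤ finrank F V) {φ ψ : V →ₗ[F] Dual F W}
    (hφ : φ ∈ jacS B) (hψ : ψ ∈ jacS B) (hr : finrank F (LinearMap.range φ) = 2)
    (hr' : finrank F (LinearMap.range ψ) = 2) : LinearMap.range φ = LinearMap.range ψ := by
  by_contra hne
  have hD : finrank F (Dual F W) = 3 := by rw [Subspace.dual_finrank_eq, hW]
  have hc : Fintype.card {p : Fin 2 × Fin 2 // p.1 ≤ p.2} = 3 := by decide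
  have h1 := nullR_dim hB hφ 2 hr
  have h2 := nullR_dim hB hψ 2 hr'
  rw [hc] at h1 h2
  set R := LinearMap.range φ
  set R' := LinearMap.range ψ
  have h3 := Submodule.finrank_sup_add_finrank_inf_eq R R'
  have h4 := Submodule.finrank_sup_add_finrank_inf_eq (nullR B R) (nullR B R')
  have h5 : finrank F ↥(R ⊔ R') ≤ 3 := hD ▸ Submodule.finrank_le _
  have h6 : finrank F ↥(R ⊓ R') < 2 := by
    by_contra hge
    have h7 : R ⊓ R' = R := Submodule.eq_of_le_of_finrank_le inf_le_left (by omega)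
    have h8 : R ⊓ R' = R' := Submodule.eq_of_le_of_finrank_le inf_le_right (by omega)
    exact hne (h7.symm.trans h8)
  have htop : R ⊔ R' = ⊤ := Submodule.eq_top_of_finrank_eq (by omega)
  have hbot : nullR B R ⊓ nullR B R' = ⊥ := by
    rw [eq_bot_iff]
    rintro x ⟨hx, hx'⟩
    apply hrad
    intro y
    rw [← Module.forall_dual_apply_eq_zero_iff F]
    intro s
    have hs : s ∈ R ⊔ R' := by rw [htop]; trivial
    obtain ⟨a, ha, b, hb, rfl⟩ := Submodule.mem_sup.1 hs
    simp [hx a ha y, hx' b hb y]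
  rw [hbot, finrank_bot] at h4
  have h9 : finrank F ↥(nullR B R ⊔ nullR B R') ≤ finrank F V := Submodule.finrank_le _
  have htop2 : nullR B R ⊔ nullR B R' = ⊤ := Submodule.eq_top_of_finrank_eq (by omega)
  have hne0 : R ⊓ R' ≠ ⊥ := by
    intro h
    rw [h, finrank_bot] at h3
    omega
  obtain ⟨r, ⟨hrR, hrR'⟩, hr0⟩ := (Submodule.ne_bot_iff _).1 hne0
  apply hr0
  apply hspan
  intro x y
  have hx : x ∈ nullR B R ⊔ nullR B R' := by rw [htop2]; trivial
  obtain ⟨a, ha, b, hb, rfl⟩ := Submodule.mem_sup.1 hx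
  simp [ha r hrR y, hb r hrR' y]

/-- A vector with two independent brackets. -/
lemma exists_good {B : V →ₗ[F] V →ₗ[F] W} (hB : ∀ x, B x x = 0)
    (ω : Fin 2 → Dual F W) (hω : LinearIndependent F ω)
    (hspan : ∀ r : Dual F W, (∀ x y, r (B x y) = 0) → r = 0) :
    ∃ y u v, LinearIndependent F ![fun i => ω i (B y u), fun i => ω i (B y v)] := by
  let M : V → V → (Fin 2 → F) := fun x y i => ω i (B x y)
  have hneg : ∀ x y, M x y = - M y x := by
    intro x y
    funext i
    simp only [M, Pi.neg_apply]
    rw [alt_neg hB x y, map_neg]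
  have hadd : ∀ x y z, M (x + y) z = M x z + M y z := by
    intro x y z
    funext i
    simp [M]
  change ∃ y u v, LinearIndependent F ![M y u, M y v]
  by_contra hcon
  push Not at hcon
  -- some two values are independent
  have hex : ∃ y u y' u', LinearIndependent F ![M y u, M y' u'] := by
    by_contra hc
    push Not at hc
    have h0 : ω 0 ≠ 0 := hω.ne_zero 0
    have : ∃ y u, ω 0 (B y u) ≠ 0 := by
      by_contra h
      push Not at h
      exact h0 (hspan _ h)
    obtain ⟨y, u, hyu⟩ := this
    have h2 : ω 0 (B y u) • ω 1 - ω 1 (B y u) • ω 0 = 0 := by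
      apply hspan
      intro x z
      have hd := hc y u x z
      by_contra hne
      apply hd
      rw [LinearIndependent.pair_iff]
      intro s t hst
      have e0 := congrFun hst 0
      have e1 := congrFun hst 1
      simp only [M, Pi.add_apply, Pi.smul_apply, smul_eq_mul, Pi.zero_apply] at e0 e1
      simp only [LinearMap.sub_apply, LinearMap.smul_apply, smul_eq_mul] at hne
      have ht : t = 0 := by
        have : t * (ω 0 (B y u) * ω 1 (B x z) - ω 1 (B y u) * ω 0 (B x z)) = 0 := by
          linear_combination ω 0 (B y u) * e1 - ω 1 (B y u) * e0
        exact (mul_eq_zero.1 this).resolve_right hne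
      refine ⟨?_, ht⟩
      rw [ht] at e0
      simp at e0
      exact e0.resolve_right hyu
    have h3 : LinearIndependent F ![ω 0, ω 1] := by
      convert hω using 1
      funext i; fin_cases i <;> rfl
    rw [LinearIndependent.pair_iff] at h3
    have := h3 (-ω 1 (B y u)) (ω 0 (B y u)) (by rw [← h2]; rw [neg_smul]; abel)
    exact hyu this.2
  obtain ⟨y, u, y', u', hi⟩ := hex
  have h1 := hcon y u u'
  have h2 := hcon y' u u'
  have h3 := hcon u y y'
  have h4 := hcon u' y y'
  have h5 := hcon (y + y') u u'
  rw [hadd, hadd] at h5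
  rw [hneg u y, hneg u y'] at h3
  rw [hneg u' y, hneg u' y'] at h4
  generalize M y u = w1 at *
  generalize M y' u' = w2 at *
  generalize M y u' = a at *
  generalize M y' u = b at *
  have hd : ∀ s t : Fin 2 → F, LinearIndependent F ![s, t] ↔ s 0 * t 1 - s 1 * t 0 ≠ 0 := by
    intro s t
    have := Matrix.linearIndependent_rows_iff_isUnit (A := Matrix.of ![s, t])
    rw [Matrix.isUnit_iff_isUnit_det, Matrix.det_fin_two, isUnit_iff_ne_zero] at this
    simp at this
    exact this
  simp only [hd, not_not, Pi.add_apply, Pi.neg_apply] at *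
  have ha : ∀ i, a i = 0 := by
    intro i
    apply (mul_eq_zero.1 (?_ : a i * (w1 0 * w2 1 - w1 1 * w2 0) = 0)).resolve_right hi
    fin_cases i
    · simp only [Fin.zero_eta]; linear_combination w2 0 * h1 + w1 0 * h4
    · simp only [Fin.mk_one]; linear_combination w2 1 * h1 + w1 1 * h4
  have hb : ∀ i, b i = 0 := by
    intro i
    apply (mul_eq_zero.1 (?_ : b i * (w1 0 * w2 1 - w1 1 * w2 0) = 0)).resolve_right hi
    fin_cases i
    · simp only [Fin.zero_eta]; linear_combination w2 0 * h3 + w1 0 * h2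
    · simp only [Fin.mk_one]; linear_combination w2 1 * h3 + w1 1 * h2
  rw [ha, ha, hb, hb] at h5
  apply hi
  linear_combination h5

lemma dimS_of_range (hB : ∀ x, B x x = 0)
    (hspan : ∀ r : Dual F W, (∀ x y, r (B x y) = 0) → r = 0)
    (R : Submodule F (Dual F W)) (hR : finrank F R = 2)
    (hS : ∀ φ ∈ jacS B, LinearMap.range φ ≤ R) : finrank F (jacS B) ≤ 5 := by
  obtain ⟨ω, hω, hωm, hωs⟩ := exists_basis_sub R 2 hR
  obtain ⟨y, u, v, hD⟩ := exists_good hB ω hω hspan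
  have hd : ∀ s t : Fin 2 → F, LinearIndependent F ![s, t] ↔ s 0 * t 1 - s 1 * t 0 ≠ 0 := by
    intro s t
    have := Matrix.linearIndependent_rows_iff_isUnit (A := Matrix.of ![s, t])
    rw [Matrix.isUnit_iff_isUnit_det, Matrix.det_fin_two, isUnit_iff_ne_zero] at this
    simp at this
    exact this
  rw [hd] at hD
  have hrep : ∀ s ∈ R, ∃ c d : F, s = c • ω 0 + d • ω 1 := by
    intro s hs
    obtain ⟨c, hc⟩ := hωs s hs
    rw [Fin.sum_univ_two] at hc
    exact ⟨_, _, hc⟩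
  have hkill : ∀ s ∈ R, s (B y u) = 0 → s (B y v) = 0 → s = 0 := by
    intro s hs h1 h2
    obtain ⟨c, d, rfl⟩ := hrep s hs
    simp only [LinearMap.add_apply, LinearMap.smul_apply, smul_eq_mul] at h1 h2
    have hc : c = 0 := by
      apply (mul_eq_zero.1 (?_ : c * _ = 0)).resolve_right hD
      linear_combination ω 1 (B y v) * h1 - ω 1 (B y u) * h2
    have hd : d = 0 := by
      apply (mul_eq_zero.1 (?_ : d * _ = 0)).resolve_right hD
      linear_combination ω 0 (B y u) * h2 - ω 0 (B y v) * h1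
    simp [hc, hd]
  have hdec : ∀ x, ∃ a c : F, ∃ z, x = a • u + c • v + z ∧ ∀ i, ω i (B y z) = 0 := by
    intro x
    set D := ω 0 (B y u) * ω 1 (B y v) - ω 1 (B y u) * ω 0 (B y v) with hDD
    let a := (ω 0 (B y x) * ω 1 (B y v) - ω 1 (B y x) * ω 0 (B y v)) / D
    let c := (ω 0 (B y u) * ω 1 (B y x) - ω 1 (B y u) * ω 0 (B y x)) / D
    have hD' : D ≠ 0 := hD
    refine ⟨a, c, x - a • u - c • v, by abel, ?_⟩
    have ha : a * D = (ω 0 (B y x) * ω 1 (B y v) - ω 1 (B y x) * ω 0 (B y v)) :=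
      div_mul_cancel₀ _ hD'
    have hc : c * D = (ω 0 (B y u) * ω 1 (B y x) - ω 1 (B y u) * ω 0 (B y x)) :=
      div_mul_cancel₀ _ hD'
    intro i
    simp only [map_sub, map_smul, smul_eq_mul]
    apply (mul_eq_zero.1 (?_ : _ * D = 0)).resolve_right hD'
    fin_cases i
    · simp only [Fin.zero_eta]
      linear_combination - ω 0 (B y u) * ha - ω 0 (B y v) * hc + ω 0 (B y x) * hDD
    · simp only [Fin.mk_one]
      linear_combination - ω 1 (B y u) * ha - ω 1 (B y v) * hc + ω 1 (B y x) * hDD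
  let ev : V → W → ((V →ₗ[F] Dual F W) →ₗ[F] F) := fun x w =>
    LinearMap.applyₗ w ∘ₗ LinearMap.applyₗ x
  let T : (V →ₗ[F] Dual F W) →ₗ[F] (Fin 5 → F) := LinearMap.pi
    ![ev y (B y u), ev y (B y v), ev u (B y u), ev u (B y v), ev v (B y v)]
  have hT : ∀ φ ∈ jacS B, T φ = 0 → φ = 0 := by
    intro φ hφ hk'
    have k0 : φ y (B y u) = 0 := congrFun hk' 0
    have k1 : φ y (B y v) = 0 := congrFun hk' 1
    have k2 : φ u (B y u) = 0 := congrFun hk' 2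
    have k3 : φ u (B y v) = 0 := congrFun hk' 3
    have k4 : φ v (B y v) = 0 := congrFun hk' 4
    have hmem : ∀ x, φ x ∈ R := fun x => hS φ hφ ⟨x, rfl⟩
    have hy : φ y = 0 := hkill _ (hmem y) k0 k1
    have hu : φ u = 0 := hkill _ (hmem u) k2 k3
    have hv : φ v = 0 := by
      refine hkill _ (hmem v) ?_ k4
      have := hφ y u v
      rw [hy, hu] at this
      simpa using this
    have hz : ∀ z, (∀ i, ω i (B y z) = 0) → φ z = 0 := by
      intro z hz
      have key : ∀ x, φ z (B y x) = 0 := by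
        intro x
        have h1 := hφ y z x
        rw [hy, alt_neg hB x y] at h1
        obtain ⟨c, d, hcd⟩ := hrep _ (hmem x)
        rw [hcd] at h1
        simpa [hz] using h1
      exact hkill _ (hmem z) (key u) (key v)
    ext1 x
    obtain ⟨a, c, z, rfl, h⟩ := hdec x
    simp [hu, hv, hz z h]
  have := sub_dim (E := V →ₗ[F] Dual F W) (E' := Fin 5 → F) (jacS B) T hT
  simpa using this

lemma exists_plane (hW : finrank F W = 3) (L : Submodule F (Dual F W)) (hL : finrank F L ≤ 2) :
    ∃ R, L ≤ R ∧ finrank F R = 2 := by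
  have hD : finrank F (Dual F W) = 3 := by rw [Subspace.dual_finrank_eq, hW]
  have hlt : L < ⊤ := by
    rw [lt_top_iff_ne_top]
    rintro rfl
    rw [finrank_top] at hL
    omega
  obtain ⟨f, hf, hle⟩ := Submodule.exists_le_ker_of_lt_top L hlt
  refine ⟨LinearMap.ker f, hle, ?_⟩
  have h1 := LinearMap.finrank_range_add_finrank_ker f
  rw [LinearMap.range_eq_top.2 (LinearMap.surjective hf), finrank_top, finrank_self] at h1
  omega

theorem dimS (hB : ∀ x, B x x = 0) (hrad : ∀ x, (∀ y, B x y = 0) → x = 0)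
    (hspan : ∀ r : Dual F W, (∀ x y, r (B x y) = 0) → r = 0)
    (hW : finrank F W = 3) (hV : 10 ≤ finrank F V) : finrank F (jacS B) ≤ 5 := by
  have hD : finrank F (Dual F W) = 3 := by rw [Subspace.dual_finrank_eq, hW]
  have hle2 : ∀ φ ∈ jacS B, finrank F (LinearMap.range φ) ≤ 2 :=
    fun φ hφ => rank_le_two hB hrad hW hV hφ
  by_cases h2 : ∃ φ ∈ jacS B, finrank F (LinearMap.range φ) = 2
  · obtain ⟨φ, hφ, hr⟩ := h2
    refine dimS_of_range hB hspan _ hr fun ψ hψ => ?_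
    by_contra hnot
    have hne : finrank F (LinearMap.range ψ) ≠ 2 := fun h =>
      hnot (range_eq hB hrad hspan hW hV hψ hφ h hr).le
    have hψ1 : finrank F (LinearMap.range ψ) ≤ 1 := by have := hle2 ψ hψ; omega
    obtain ⟨_, ⟨x, rfl⟩, hx⟩ := SetLike.not_le_iff_exists.1 hnot
    have hsum : φ + ψ ∈ jacS B := add_mem hφ hψ
    -- an element of `ker ψ` outside `ker φ`
    have hk : ∃ k, ψ k = 0 ∧ φ k ≠ 0 := by
      by_contra hc
      push Not at hc
      have hle : LinearMap.ker ψ ≤ LinearMap.ker φ := fun k hk => hc k hk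
      have e1 := LinearMap.finrank_range_add_finrank_ker ψ
      have e2 := LinearMap.finrank_range_add_finrank_ker φ
      have e3 := Submodule.finrank_mono hle
      omega
    obtain ⟨k, hk1, hk2⟩ := hk
    have hk3 : (φ + ψ) k = φ k := by simp [hk1]
    have hnx : (φ + ψ) x ∉ LinearMap.range φ := by
      intro h
      apply hx
      have := Submodule.sub_mem _ h (LinearMap.mem_range_self φ x)
      simpa using this
    have h2' : finrank F (LinearMap.range (φ + ψ)) = 2 := by
      refine le_antisymm (hle2 _ hsum) ?_
      have hli : LinearIndependent F ![φ k, (φ + ψ) x] := by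
        rw [LinearIndependent.pair_iff' hk2]
        intro a ha
        apply hnx
        rw [← ha]
        exact Submodule.smul_mem _ _ ⟨k, rfl⟩
      have := finrank_span_eq_card hli
      rw [Fintype.card_fin] at this
      refine this.symm.le.trans ?_
      apply Submodule.finrank_mono
      rw [Submodule.span_le]
      rintro _ ⟨i, rfl⟩
      fin_cases i
      · exact ⟨k, hk3⟩
      · exact ⟨x, rfl⟩
    have := range_eq hB hrad hspan hW hV hsum hφ h2' hr
    exact hnx (this ▸ LinearMap.mem_range_self (φ + ψ) x)
  · push Not at h2
    have hle1 : ∀ φ ∈ jacS B, finrank F (LinearMap.range φ) ≤ 1 := by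
      intro φ hφ
      have := hle2 φ hφ
      have := h2 φ hφ
      omega
    have hprop : ∀ φ ∈ jacS B, ∀ x y, ¬ LinearIndependent F ![φ x, φ y] := by
      intro φ hφ x y hli
      have := finrank_span_eq_card hli
      rw [Fintype.card_fin] at this
      have h3 : finrank F (Submodule.span F (Set.range ![φ x, φ y])) ≤
          finrank F (LinearMap.range φ) := by
        apply Submodule.finrank_mono
        rw [Submodule.span_le]
        rintro _ ⟨i, rfl⟩
        fin_cases i
        · exact ⟨x, rfl⟩
        · exact ⟨y, rfl⟩
      have := hle1 φ hφ
      omega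
    by_cases hR : ∃ L : Submodule F (Dual F W), finrank F L ≤ 2 ∧
        ∀ φ ∈ jacS B, LinearMap.range φ ≤ L
    · obtain ⟨L, hL, h⟩ := hR
      obtain ⟨R, hLR, hR⟩ := exists_plane hW L hL
      exact dimS_of_range hB hspan R hR fun φ hφ => (h φ hφ).trans hLR
    push Not at hR
    -- two elements with different ranges have the same kernel
    have hker : ∀ φ ∈ jacS B, ∀ ψ ∈ jacS B, ∀ x y, LinearIndependent F ![φ x, ψ y] →
        ∀ k, φ k = 0 → ψ k = 0 := by
      intro φ hφ ψ hψ x y hli k hk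
      by_contra hne
      have hpk : ∀ z, ∃ c : F, c • ψ k = ψ z := by
        intro z
        by_contra hc
        push Not at hc
        exact hprop ψ hψ k z ((LinearIndependent.pair_iff' hne).2 hc)
      obtain ⟨c, hc⟩ := hpk y
      obtain ⟨e, he⟩ := hpk x
      apply hprop _ (add_mem hφ hψ) k x
      rw [LinearMap.add_apply, LinearMap.add_apply, hk, zero_add,
        LinearIndependent.pair_iff' hne]
      intro a ha
      have hx : φ x = (a - e) • ψ k := by
        ext w
        have h1 := LinearMap.congr_fun ha w
        have h2 := LinearMap.congr_fun he w
        simp only [LinearMap.smul_apply, LinearMap.add_apply, smul_eq_mul] at h1 h2 ⊢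
        linear_combination h2 - h1
      rw [LinearIndependent.pair_iff] at hli
      have h0 := hli c (-(a - e)) (by rw [hx, ← hc, smul_smul, smul_smul, ← add_smul]; ring_nf; simp)
      have h1 : ψ y = 0 := by rw [← hc, h0.1, zero_smul]
      have h2 := hli 0 1 (by rw [h1]; simp)
      exact one_ne_zero h2.2
    obtain ⟨φ, hφ, hnb⟩ := hR ⊥ (by simp)
    obtain ⟨_, ⟨x, rfl⟩, hx⟩ := SetLike.not_le_iff_exists.1 hnb
    have hx0 : φ x ≠ 0 := by simpa using hx
    obtain ⟨ψ, hψ, hnb'⟩ := hR (Submodule.span F {φ x})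
      ((finrank_span_le_card _).trans (by simp))
    obtain ⟨_, ⟨y, rfl⟩, hy⟩ := SetLike.not_le_iff_exists.1 hnb'
    rw [Submodule.mem_span_singleton] at hy
    push Not at hy
    have hli : LinearIndependent F ![φ x, ψ y] := (LinearIndependent.pair_iff' hx0).2 hy
    have hall : ∀ χ ∈ jacS B, ∀ k, φ k = 0 → χ k = 0 := by
      intro χ hχ k hk
      by_contra hne
      have hψk := hker φ hφ ψ hψ x y hli k hk
      by_cases h1 : LinearIndependent F ![φ x, χ k]
      · exact hne (hker φ hφ χ hχ x k h1 k hk)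
      rw [LinearIndependent.pair_iff' hx0] at h1
      push Not at h1
      obtain ⟨c, hc⟩ := h1
      have hψy : ψ y ≠ 0 := by
        intro h
        exact hy 0 (by rw [h, zero_smul])
      refine hne (hker ψ hψ χ hχ y k ?_ k hψk)
      rw [LinearIndependent.pair_iff' hψy]
      intro a ha
      rw [LinearIndependent.pair_iff] at hli
      have h0 := hli c (-a) (by rw [neg_smul, ha, hc, add_neg_cancel])
      apply hne
      rw [← hc, h0.1, zero_smul]
    have hT : ∀ χ ∈ jacS B, (LinearMap.applyₗ x : (V →ₗ[F] Dual F W) →ₗ[F] Dual F W) χ = 0 →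
        χ = 0 := by
      intro χ hχ hk'
      rw [LinearMap.applyₗ_apply_apply] at hk'
      ext1 v
      have hv : ∃ c : F, c • φ x = φ v := by
        by_contra hc
        push Not at hc
        exact hprop φ hφ x v ((LinearIndependent.pair_iff' hx0).2 hc)
      obtain ⟨c, hc⟩ := hv
      have h3 := hall χ hχ (v - c • x) (by simp [hc])
      simpa [hk', sub_eq_zero] using h3
    have := sub_dim (E := V →ₗ[F] Dual F W) (E' := Dual F W) (jacS B) _ hT
    omega

end LA


section GC
set_option linter.all false
variable {G A : Type} [Group G] [AddCommGroup A]

/-- 2-cocycles for the trivial action. -/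
def IsCoc (f : G → G → A) : Prop := ∀ g h j, f (g * h) j + f g h = f h j + f g (h * j)

/-- 2-coboundaries for the trivial action. -/
def IsCob (f : G → G → A) : Prop := ∃ u : G → A, ∀ g h, f g h = u g + u h - u (g * h)

lemma coc_comm_add {f : G → G → A} (hf : IsCoc f) {g h z : G} (h1 : g * z = z * g)
    (h2 : h * z = z * h) :
    f (g * h) z - f z (g * h) = (f g z - f z g) + (f h z - f z h) := by
  have a := hf g h z
  have b := hf z g h
  have c := hf g z h
  rw [h2] at a
  rw [h1] at c
  have a' := eq_sub_of_add_eq a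
  have b' := eq_sub_of_add_eq' b.symm
  have c' := eq_sub_of_add_eq' c.symm
  rw [a', b', c']
  abel

lemma coc_one_left {f : G → G → A} (hf : IsCoc f) (h : G) : f 1 h = f 1 1 := by
  have := hf 1 1 h
  simp only [one_mul, mul_one] at this
  exact (add_left_cancel this).symm

lemma coc_one_right {f : G → G → A} (hf : IsCoc f) (h : G) : f h 1 = f 1 1 := by
  have := hf h 1 1
  simp only [one_mul, mul_one] at this
  exact add_right_cancel this

lemma isCoc_cob (u : G → A) : IsCoc (fun g h => u g + u h - u (g * h)) := by
  intro g h j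
  simp only [mul_assoc]
  abel

lemma IsCoc.add {f f' : G → G → A} (h : IsCoc f) (h' : IsCoc f') :
    IsCoc (fun a b => f a b + f' a b) := by
  intro x y z
  have := congrArg₂ (· + ·) (h x y z) (h' x y z)
  simp only at this ⊢
  rw [add_add_add_comm, this]
  abel

lemma IsCoc.sub {f f' : G → G → A} (h : IsCoc f) (h' : IsCoc f') :
    IsCoc (fun a b => f a b - f' a b) := by
  intro x y z
  have := congrArg₂ (· - ·) (h x y z) (h' x y z)
  simp only at this ⊢
  rw [add_sub_add_comm] at this
  rw [this]
  abel

/-- The central extension attached to a cocycle. -/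
structure CExt (f : G → G → A) where
  a : A
  g : G

/-- Group structure on the extension. -/
@[reducible] def CExt.grp {f : G → G → A} (hf : IsCoc f) : Group (CExt f) :=
  letI : Mul (CExt f) := ⟨fun x y => ⟨x.a + y.a + f x.g y.g, x.g * y.g⟩⟩
  letI : One (CExt f) := ⟨⟨- f 1 1, 1⟩⟩
  letI : Inv (CExt f) := ⟨fun x => ⟨- x.a - f x.g⁻¹ x.g - f 1 1, x.g⁻¹⟩⟩
  Group.ofLeftAxioms
    (by
      rintro ⟨a, g⟩ ⟨b, h⟩ ⟨c, j⟩
      change CExt.mk _ _ = CExt.mk _ _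
      congr 1
      · change a + b + f g h + c + f (g * h) j = a + (b + c + f h j) + f g (h * j)
        have := hf g h j
        have h2 : f (g * h) j = f h j + f g (h * j) - f g h := eq_sub_of_add_eq this
        rw [h2]; abel
      · exact mul_assoc _ _ _)
    (by
      rintro ⟨a, g⟩
      change CExt.mk _ _ = CExt.mk _ _
      congr 1
      · change - f 1 1 + a + f 1 g = a
        rw [coc_one_left hf g]; abel
      · exact one_mul _)
    (by
      rintro ⟨a, g⟩
      change CExt.mk _ _ = CExt.mk _ _
      congr 1
      · change - a - f g⁻¹ g - f 1 1 + a + f g⁻¹ g = - f 1 1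
        abel
      · exact inv_mul_cancel _)

lemma CExt.mul_def {f : G → G → A} (hf : IsCoc f) (x y : CExt f) :
    letI := CExt.grp hf
    x * y = ⟨x.a + y.a + f x.g y.g, x.g * y.g⟩ := rfl

lemma sym_cob {Q : Type} [Group Q] (hm : ∀ x y : Q, x * y = y * x) [DivisibleBy A ℤ]
    {f : Q → Q → A} (hf : IsCoc f)
    (hs : ∀ x y, f x y = f y x) : IsCob f := by
  letI g0 : Group (CExt f) := CExt.grp hf
  letI : CommGroup (CExt f) := { g0 with
    mul_comm := by
      intro x y
      rw [CExt.mul_def hf, CExt.mul_def hf, hs, add_comm x.a, hm x.g] }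
  let i : A →+ Additive (CExt f) :=
    AddMonoidHom.mk' (fun a => Additive.ofMul (⟨a - f 1 1, 1⟩ : CExt f)) (by
      intro a b
      change Additive.ofMul _ = Additive.ofMul ((⟨a - f 1 1, 1⟩ : CExt f) * ⟨b - f 1 1, 1⟩)
      rw [CExt.mul_def hf]
      congr 2
      · simp only; abel
      · simp)
  have hi : Function.Injective i := by
    intro a b h
    have : (a - f 1 1) = (b - f 1 1) := congrArg (fun t => CExt.a (Additive.toMul t)) h
    simpa using this
  obtain ⟨r, hr⟩ := (Module.Baer.of_divisible A).extension_property_addMonoidHom i hi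
    (AddMonoidHom.id A)
  have hr' : ∀ a, r (i a) = a := fun a => DFunLike.congr_fun hr a
  refine ⟨fun q => r (Additive.ofMul ⟨0, q⟩), fun g h => ?_⟩
  have key : (Additive.ofMul (⟨0, g⟩ : CExt f)) + Additive.ofMul ⟨0, h⟩ =
      i (f g h) + Additive.ofMul ⟨0, g * h⟩ := by
    change Additive.ofMul ((⟨0, g⟩ : CExt f) * ⟨0, h⟩) =
      Additive.ofMul ((⟨f g h - f 1 1, 1⟩ : CExt f) * ⟨0, g * h⟩)
    rw [CExt.mul_def hf, CExt.mul_def hf]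
    congr 2
    · simp only; rw [coc_one_left hf (g * h)]; abel
    · simp
  have := congrArg r key
  rw [map_add, map_add, hr'] at this
  rw [this]; abel

/-- The commutator identity used for the Jacobi relation. -/
lemma hw {E : Type} [Group E] (x y z c d e P Q R : E)
    (hc : x * y = c * y * x) (hd : x * z = d * z * x) (he : y * z = e * z * y)
    (hP : x * e = P * e * x) (hQ : y * d = Q * d * y) (hR : z * c = R * c * z)
    (cP : ∀ t, P * t = t * P) (cQ : ∀ t, Q * t = t * Q) (cR : ∀ t, R * t = t * R)
    (hcd : c * d = d * c) (hce : c * e = e * c) (hde : d * e = e * d) : P * R = Q := by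
  -- compute `x y z` in two ways
  have h1 : x * y * z = Q * (c * d * e * z * y * x) := by
    calc x * y * z = c * y * (x * z) := by rw [hc]; group
      _ = c * (y * d) * z * x := by rw [hd]; group
      _ = (c * Q) * d * (y * z) * x := by rw [hQ]; group
      _ = (Q * c) * d * (e * z * y) * x := by rw [← cQ, he]
      _ = _ := by group
  have h2 : x * y * z = P * R * (c * d * e * z * y * x) := by
    calc x * y * z = x * (y * z) := by group
      _ = (x * e) * z * y := by rw [he]; group
      _ = P * e * (x * z) * y := by rw [hP]; group
      _ = P * e * d * z * (x * y) := by rw [hd]; group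
      _ = P * e * d * (z * c) * y * x := by rw [hc]; group
      _ = P * (e * d) * R * c * z * y * x := by rw [hR]; group
      _ = P * (R * (d * e)) * c * z * y * x := by rw [← hde, cR]; group
      _ = P * R * (d * (e * c)) * z * y * x := by group
      _ = P * R * ((d * c) * e) * z * y * x := by rw [← hce]; group
      _ = _ := by rw [← hcd]; group
  exact mul_right_cancel (h2.symm.trans h1)

lemma coc_jacobi {f : G → G → A} (hf : IsCoc f)
    (hcen : ∀ x y : G, ⁅x, y⁆ ∈ Subgroup.center G) (x y z : G) :
    (f x ⁅y, z⁆ - f ⁅y, z⁆ x) + (f z ⁅x, y⁆ - f ⁅x, y⁆ z) = f y ⁅x, z⁆ - f ⁅x, z⁆ y := by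
  letI g0 : Group (CExt f) := CExt.grp hf
  let i : A → CExt f := fun a => ⟨a - f 1 1, 1⟩
  have imul : ∀ a (t : CExt f), i a * t = ⟨a + t.a, t.g⟩ := by
    intro a t
    rw [CExt.mul_def hf]
    simp only [i, one_mul, coc_one_left hf t.g]
    congr 1; abel
  have muli : ∀ a (t : CExt f), t * i a = ⟨a + t.a, t.g⟩ := by
    intro a t
    rw [CExt.mul_def hf]
    simp only [i, mul_one, coc_one_right hf t.g]
    congr 1; abel
  have hcom : ∀ t s : CExt f, t.g * s.g = s.g * t.g → t * s = i (f t.g s.g - f s.g t.g) * s * t := by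
    intro t s h
    rw [mul_assoc, imul, CExt.mul_def hf, CExt.mul_def hf]
    simp only [h]
    congr 1; abel
  have gmul : ∀ t s : CExt f, (t * s).g = t.g * s.g := fun _ _ => rfl
  have ginv : ∀ t : CExt f, (t⁻¹).g = t.g⁻¹ := fun _ => rfl
  have gcomm : ∀ t s : CExt f, ⁅t, s⁆.g = ⁅t.g, s.g⁆ := fun _ _ => rfl
  have hcc : ∀ t s : CExt f, t * s = ⁅t, s⁆ * s * t := by
    intro t s; rw [commutatorElement_def]; group
  -- `φ(c, z) = 0` for commutators `c` and central `z`
  have hz0 : ∀ a b w : G, w ∈ Subgroup.center G → f ⁅a, b⁆ w - f w ⁅a, b⁆ = 0 := by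
    intro a b w hw
    let φ : G →* Multiplicative A := MonoidHom.mk' (fun g => Multiplicative.ofAdd (f g w - f w g))
      (by
        intro g h
        rw [coc_comm_add hf (Subgroup.mem_center_iff.1 hw g) (Subgroup.mem_center_iff.1 hw h)]
        rfl)
    have : φ ⁅a, b⁆ = 1 := by
      rw [map_commutatorElement, commutatorElement_eq_one_iff_mul_comm, mul_comm]
    exact this
  have hcomm0 : ∀ t s : CExt f, ∀ a b a' b' : G, t.g = ⁅a, b⁆ → s.g = ⁅a', b'⁆ → t * s = s * t := by
    intro t s a b a' b' ht hs
    rw [hcom t s (by rw [hs]; exact Subgroup.mem_center_iff.1 (hcen a' b') t.g), hs, ht,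
      hz0 a b _ (hcen a' b'), mul_assoc, imul]
    simp
  have key := hw (E := CExt f) ⟨0, x⟩ ⟨0, y⟩ ⟨0, z⟩ _ _ _ _ _ _ (hcc _ _) (hcc _ _) (hcc _ _)
    (hcom _ _ (Subgroup.mem_center_iff.1 (hcen y z) x))
    (hcom _ _ (Subgroup.mem_center_iff.1 (hcen x z) y))
    (hcom _ _ (Subgroup.mem_center_iff.1 (hcen x y) z))
    (fun t => by rw [imul, muli]) (fun t => by rw [imul, muli]) (fun t => by rw [imul, muli])
    (hcomm0 _ _ x y x z rfl rfl) (hcomm0 _ _ x y y z rfl rfl) (hcomm0 _ _ x z y z rfl rfl)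
  rw [imul] at key
  have k2 := congrArg CExt.a key
  simp only [i, gcomm] at k2
  rw [← sub_left_inj (a := f 1 1), ← k2]
  abel

/-- invariance under translation by the center -/
def ZInv (f : G → G → A) : Prop := ∀ z ∈ Subgroup.center G, ∀ g h,
  f (z * g) h = f g h ∧ f g (z * h) = f g h


lemma ZInv.sub {f f' : G → G → A} (h : ZInv f) (h' : ZInv f') :
    ZInv (fun a b => f a b - f' a b) := by
  intro z hz g k
  simp only [(h z hz g k).1, (h z hz g k).2, (h' z hz g k).1, (h' z hz g k).2, and_self]

lemma ZInv.add {f f' : G → G → A} (h : ZInv f) (h' : ZInv f') :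
    ZInv (fun a b => f a b + f' a b) := by
  intro z hz g k
  simp only [(h z hz g k).1, (h z hz g k).2, (h' z hz g k).1, (h' z hz g k).2, and_self]

/-- transversal decomposition -/
lemma exists_transversal (G : Type) [Group G] : ∃ s : G → G,
    (∀ g, g * (s g)⁻¹ ∈ Subgroup.center G) ∧ ∀ z ∈ Subgroup.center G, ∀ g, s (z * g) = s g := by
  refine ⟨fun g => Quotient.out (QuotientGroup.mk g : G ⧸ Subgroup.center G), ?_, ?_⟩
  · intro g
    have h : (QuotientGroup.mk (Quotient.out (QuotientGroup.mk g : G ⧸ Subgroup.center G)) :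
      G ⧸ Subgroup.center G) = QuotientGroup.mk g := Quotient.out_eq' _
    rw [QuotientGroup.eq] at h
    have h2 := (inferInstance : (Subgroup.center G).Normal).mem_comm h
    exact h2
  · intro z hz g
    have : (QuotientGroup.mk (z * g) : G ⧸ Subgroup.center G) = QuotientGroup.mk g := by
      rw [QuotientGroup.eq, mul_inv_rev, mul_assoc, ← Subgroup.mem_center_iff.1
        (inv_mem hz) g, inv_mul_cancel_left]
      exact inv_mem hz
    simp only [this]

lemma ZInv.descend {f : G → G → A} (hi : ZInv f) :
    ∃ F : G ⧸ Subgroup.center G → G ⧸ Subgroup.center G → A, ∀ g h : G, F g h = f g h := by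
  have key : ∀ a b c d : G, (a : G ⧸ Subgroup.center G) = c → (b : G ⧸ Subgroup.center G) = d →
      f a b = f c d := by
    intro a b c d h1 h2
    rw [QuotientGroup.eq] at h1 h2
    have e1 : c = (a⁻¹ * c) * a := by
      rw [← Subgroup.mem_center_iff.1 h1 a]; group
    have e2 : d = (b⁻¹ * d) * b := by
      rw [← Subgroup.mem_center_iff.1 h2 b]; group
    rw [e1, e2, (hi _ h1 a _).1, (hi _ h2 a b).2]
  exact ⟨fun x y => f x.out y.out, fun g h => key _ _ _ _ (Quotient.out_eq' _) (Quotient.out_eq' _)⟩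

/-- quotient is commutative -/
@[reducible] def qComm (hcen : ∀ x y : G, ⁅x, y⁆ ∈ Subgroup.center G) :
    CommGroup (G ⧸ Subgroup.center G) :=
  { (inferInstance : Group (G ⧸ Subgroup.center G)) with
    mul_comm := by
      intro x y
      induction x using QuotientGroup.induction_on with | _ x =>
      induction y using QuotientGroup.induction_on with | _ y =>
      change ((x * y : G) : G ⧸ Subgroup.center G) = ((y * x : G) : G ⧸ Subgroup.center G)
      rw [QuotientGroup.eq]
      have := hcen y⁻¹ x⁻¹
      rw [commutatorElement_def] at this
      simpa [mul_assoc] using this }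

lemma coc_descend {f : G → G → A} (hf : IsCoc f)
    {F : G ⧸ Subgroup.center G → G ⧸ Subgroup.center G → A} (hF : ∀ g h : G, F g h = f g h) :
    IsCoc F := by
  intro x y z
  induction x using QuotientGroup.induction_on with | _ x =>
  induction y using QuotientGroup.induction_on with | _ y =>
  induction z using QuotientGroup.induction_on with | _ z =>
  rw [← QuotientGroup.mk_mul, ← QuotientGroup.mk_mul, hF, hF, hF, hF]
  exact hf x y z

lemma zinv_add {f : G → G → A} (hf : IsCoc f) (hi : ZInv f)
    (hcen : ∀ x y : G, ⁅x, y⁆ ∈ Subgroup.center G) (g h z : G) :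
    f (g * h) z - f z (g * h) = (f g z - f z g) + (f h z - f z h) := by
  obtain ⟨F, hF⟩ := hi.descend
  have hc := coc_descend hf hF
  letI := qComm hcen
  have := coc_comm_add hc (g := g) (h := h) (z := z) (mul_comm _ _) (mul_comm _ _)
  rw [← QuotientGroup.mk_mul] at this
  simpa only [hF] using this

lemma zinv_sym_cob [DivisibleBy A ℤ] {f : G → G → A} (hf : IsCoc f) (hi : ZInv f)
    (hcen : ∀ x y : G, ⁅x, y⁆ ∈ Subgroup.center G) (hs : ∀ x y, f x y = f y x) : IsCob f := by
  obtain ⟨F, hF⟩ := hi.descend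
  have hc := coc_descend hf hF
  obtain ⟨u, hu⟩ := sym_cob (qComm hcen).mul_comm hc (by
    intro x y
    induction x using QuotientGroup.induction_on with | _ x =>
    induction y using QuotientGroup.induction_on with | _ y =>
    rw [hF, hF, hs])
  refine ⟨fun g => u g, fun g h => ?_⟩
  rw [← hF, hu]
  rfl

lemma exists_zinv [DivisibleBy A ℤ] {f : G → G → A} (hf : IsCoc f)
    (h0 : ∀ g, ∀ z ∈ Subgroup.center G, f g z = f z g) :
    ∃ U : G → A, ZInv (fun g h => f g h - (U g + U h - U (g * h))) := by
  have hcz : IsCoc (fun z w : Subgroup.center G => f z w) := fun a b c => hf a b c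
  have hm : ∀ x y : Subgroup.center G, x * y = y * x := fun x y =>
    Subtype.ext (Subgroup.mem_center_iff.1 y.2 x)
  obtain ⟨u, hu⟩ := sym_cob hm (f := fun z w : Subgroup.center G => f z w) hcz
    (fun x y => h0 x y y.2)
  obtain ⟨s, hs1, hs2⟩ := exists_transversal G
  let U : G → A := fun g => u ⟨g * (s g)⁻¹, hs1 g⟩ - f (g * (s g)⁻¹) (s g)
  have hU : ∀ z (hz : z ∈ Subgroup.center G) g, U (z * g) = u ⟨z, hz⟩ + U g - f z g := by
    intro z hz g
    simp only [U, hs2 z hz g]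
    have e1 := hu ⟨z, hz⟩ ⟨g * (s g)⁻¹, hs1 g⟩
    have e2 := hf z (g * (s g)⁻¹) (s g)
    simp only [MulMemClass.mk_mul_mk] at e1
    rw [inv_mul_cancel_right] at e2
    simp only [mul_assoc] at e1 e2 ⊢
    rw [e1] at e2
    have e3 := eq_sub_of_add_eq e2
    rw [e3]
    abel
  refine ⟨U, fun z hz g h => ⟨?_, ?_⟩⟩
  · have e1 := hf z g h
    have e3 := eq_sub_of_add_eq e1
    simp only [mul_assoc, hU z hz] at e3 ⊢
    rw [e3]
    abel
  · have e1 := hf z g h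
    have e2 := hf g z h
    have hgz : g * z = z * g := Subgroup.mem_center_iff.1 hz g
    rw [hgz, h0 g z hz, e1] at e2
    have e3 := eq_sub_of_add_eq' e2.symm
    have e4 : g * (z * h) = z * (g * h) := by rw [← mul_assoc, hgz, mul_assoc]
    simp only [e4, hU z hz] at e3 ⊢
    rw [e3]
    abel

end GC


section CT
set_option linter.all false
variable {p : ℕ} [Fact p.Prime] {G A V W : Type} [Group G] [AddCommGroup A]
  [AddCommGroup V] [Module (ZMod p) V] [AddCommGroup W] [Module (ZMod p) W]

lemma exists_bil (ι : ZMod p →+ A) (hι : Function.Injective ι)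
    (htor : ∀ a : A, p • a = 0 → ∃ k, ι k = a) (b : V → W → A)
    (h1 : ∀ x y w, b (x + y) w = b x w + b y w) (h2 : ∀ x w w', b x (w + w') = b x w + b x w') :
    ∃ β : V →ₗ[ZMod p] W →ₗ[ZMod p] ZMod p, ∀ x w, ι (β x w) = b x w := by
  have hp : ∀ x w, p • b x w = 0 := by
    intro x w
    let φ : V →+ A := AddMonoidHom.mk' (fun x => b x w) (fun x y => h1 x y w)
    have : p • φ x = 0 := by
      rw [← map_nsmul, ← Nat.cast_smul_eq_nsmul (ZMod p)]
      simp
    exact this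
  choose k hk using fun x w => htor _ (hp x w)
  let β1 : V → (W →ₗ[ZMod p] ZMod p) := fun x =>
    (AddMonoidHom.mk' (k x) (fun w w' => hι (by rw [map_add, hk, hk, hk, h2]))).toZModLinearMap p
  let β : V →+ (W →ₗ[ZMod p] ZMod p) := AddMonoidHom.mk' β1 (by
    intro x y
    ext w
    apply hι
    change ι (k (x + y) w) = ι (k x w + k y w)
    rw [map_add, hk, hk, hk, h1])
  exact ⟨β.toZModLinearMap p, fun x w => hk x w⟩

variable {q : G → V} {e : W → G} {B : V →ₗ[ZMod p] V →ₗ[ZMod p] W}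

lemma exists_pairing (ι : ZMod p →+ A) (hι : Function.Injective ι)
    (htor : ∀ a : A, p • a = 0 → ∃ k, ι k = a)
    (hq : ∀ g h, q (g * h) = q g + q h) (hqs : Function.Surjective q)
    (hqk : ∀ g, q g = 0 ↔ g ∈ Subgroup.center G)
    (he : ∀ w w', e (w + w') = e w * e w')
    (her : ∀ g, g ∈ Subgroup.center G ↔ ∃ w, e w = g)
    (hBe : ∀ g h, e (B (q g) (q h)) = ⁅g, h⁆)
    (hzc : Subgroup.center G ≤ commutator G) (hB : ∀ x, B x x = 0)
    {f : G → G → A} (hf : IsCoc f) :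
    ∃ s ∈ jacS B, ∀ g w, ι (s (q g) w) = f g (e w) - f (e w) g := by
  have hew : ∀ w, e w ∈ Subgroup.center G := fun w => (her _).2 ⟨w, rfl⟩
  have hcen : ∀ x y : G, ⁅x, y⁆ ∈ Subgroup.center G := fun x y => by rw [← hBe]; exact hew _
  have hew' : ∀ w g, g * e w = e w * g := fun w g => Subgroup.mem_center_iff.1 (hew w) g
  let φ : W → (G →* Multiplicative A) := fun w =>
    MonoidHom.mk' (fun g => Multiplicative.ofAdd (f g (e w) - f (e w) g)) (by
      intro g h
      rw [coc_comm_add hf (hew' w g) (hew' w h)]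
      rfl)
  have hφ : ∀ w g g', q g = q g' → f g (e w) - f (e w) g = f g' (e w) - f (e w) g' := by
    intro w g g' h
    have h1 : q (g * g'⁻¹) = 0 := by
      have h2 := hq (g * g'⁻¹) g'
      rw [inv_mul_cancel_right, h] at h2
      simpa using h2
    rw [hqk] at h1
    have h3 : φ w (g * g'⁻¹) = 1 := Abelianization.commutator_subset_ker (φ w) (hzc h1)
    rw [map_mul, map_inv, mul_inv_eq_one] at h3
    exact h3
  choose σ hσ using hqs
  obtain ⟨s, hs⟩ := exists_bil ι hι htor (fun x w => f (σ x) (e w) - f (e w) (σ x))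
    (by
      intro x y w
      rw [hφ w (σ (x + y)) (σ x * σ y) (by rw [hq, hσ, hσ, hσ])]
      exact coc_comm_add hf (hew' w _) (hew' w _))
    (by
      intro x w w'
      have := coc_comm_add hf (g := e w) (h := e w') (z := σ x) (hew' w _).symm (hew' w' _).symm
      rw [he]
      rw [← neg_sub, this]
      abel)
  have hs' : ∀ g w, ι (s (q g) w) = f g (e w) - f (e w) g := by
    intro g w
    rw [hs]
    exact hφ w _ _ (hσ _)
  refine ⟨s, ?_, hs'⟩
  intro x y z
  obtain ⟨x, rfl⟩ : ∃ g, q g = x := ⟨_, hσ x⟩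
  obtain ⟨y, rfl⟩ : ∃ g, q g = y := ⟨_, hσ y⟩
  obtain ⟨z, rfl⟩ : ∃ g, q g = z := ⟨_, hσ z⟩
  have hneg : B (q z) (q x) = - B (q x) (q z) := alt_neg hB _ _
  apply hι
  rw [hneg, map_neg, map_zero, map_add, map_add, map_neg, hs', hs', hs', hBe, hBe, hBe,
    ← coc_jacobi hf hcen x y z]
  abel

/-- the cocycle attached to an alternating form -/
def fB (ι : ZMod p →+ A) (q : G → V) (β : V →ₗ[ZMod p] V →ₗ[ZMod p] ZMod p) : G → G → A :=
  fun g h => ι ((2 : ZMod p)⁻¹ * β (q g) (q h))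

lemma fB_coc (ι : ZMod p →+ A) (hq : ∀ g h, q (g * h) = q g + q h)
    (β : V →ₗ[ZMod p] V →ₗ[ZMod p] ZMod p) : IsCoc (fB ι q β) := by
  intro g h j
  simp only [fB, hq, map_add, LinearMap.add_apply, mul_add]
  abel

lemma fB_zinv (ι : ZMod p →+ A) (hq : ∀ g h, q (g * h) = q g + q h)
    (hqk : ∀ g, q g = 0 ↔ g ∈ Subgroup.center G)
    (β : V →ₗ[ZMod p] V →ₗ[ZMod p] ZMod p) : ZInv (fB ι q β) := by
  intro z hz g h
  simp [fB, hq, (hqk z).2 hz]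

lemma fB_sub (ι : ZMod p →+ A) (β β' : V →ₗ[ZMod p] V →ₗ[ZMod p] ZMod p) (g h : G) :
    fB ι q (β - β') g h = fB ι q β g h - fB ι q β' g h := by
  simp [fB, mul_sub]

lemma fB_anti (hp2 : p ≠ 2) (ι : ZMod p →+ A) (β : V →ₗ[ZMod p] V →ₗ[ZMod p] ZMod p)
    (hβ : ∀ x, β x x = 0) (g h : G) :
    fB ι q β g h - fB ι q β h g = ι (β (q g) (q h)) := by
  have h2 : (2 : ZMod p) ≠ 0 := by
    intro h
    have h3 : ((2 : ℕ) : ZMod p) = 0 := by exact_mod_cast h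
    rw [ZMod.natCast_eq_zero_iff] at h3
    exact hp2 ((Nat.prime_dvd_prime_iff_eq Fact.out Nat.prime_two).1 h3)
  have h3 := alt_neg hβ (q h) (q g)
  simp only [fB, ← map_sub]
  congr 1
  rw [h3]
  field_simp
  ring

lemma exists_alt [DivisibleBy A ℤ] (hp2 : p ≠ 2) (ι : ZMod p →+ A) (hι : Function.Injective ι)
    (htor : ∀ a : A, p • a = 0 → ∃ k, ι k = a)
    (hq : ∀ g h, q (g * h) = q g + q h) (hqs : Function.Surjective q)
    (hqk : ∀ g, q g = 0 ↔ g ∈ Subgroup.center G)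
    (hcen : ∀ x y : G, ⁅x, y⁆ ∈ Subgroup.center G)
    {f : G → G → A} (hf : IsCoc f) (h0 : ∀ g, ∀ z ∈ Subgroup.center G, f g z = f z g) :
    ∃ β : V →ₗ[ZMod p] V →ₗ[ZMod p] ZMod p, (∀ x, β x x = 0) ∧
      IsCob (fun g h => f g h - fB ι q β g h) := by
  obtain ⟨U, hU⟩ := exists_zinv hf h0
  have hc : IsCoc (fun g h => f g h - (U g + U h - U (g * h))) := hf.sub (isCoc_cob U)
  set f' : G → G → A := fun g h => f g h - (U g + U h - U (g * h)) with hf'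
  have hinv : ∀ g g' h, q g = q g' → f' g h - f' h g = f' g' h - f' h g' := by
    intro g g' h hg
    have h1 : q (g * g'⁻¹) = 0 := by
      have h2 := hq (g * g'⁻¹) g'
      rw [inv_mul_cancel_right, hg] at h2
      simpa using h2
    rw [hqk] at h1
    have h3 := (hU _ h1 g' h).1
    have h4 := (hU _ h1 h g').2
    rw [inv_mul_cancel_right] at h3 h4
    rw [h3, h4]
  choose σ hσ using hqs
  obtain ⟨β, hβ⟩ := exists_bil ι hι htor (fun x y => f' (σ x) (σ y) - f' (σ y) (σ x))
    (by
      intro x y w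
      rw [hinv (σ (x + y)) (σ x * σ y) _ (by rw [hq, hσ, hσ, hσ])]
      exact zinv_add hc hU hcen _ _ _)
    (by
      intro w x y
      rw [← neg_sub, hinv (σ (x + y)) (σ x * σ y) _ (by rw [hq, hσ, hσ, hσ]),
        zinv_add hc hU hcen]
      abel)
  have hβ' : ∀ g h, ι (β (q g) (q h)) = f' g h - f' h g := by
    intro g h
    rw [hβ]
    rw [hinv (σ (q g)) g _ (hσ _), ← neg_sub, hinv (σ (q h)) h _ (hσ _), neg_sub]
  have halt : ∀ x, β x x = 0 := by
    intro x
    apply hι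
    rw [hβ, sub_self, map_zero]
  refine ⟨β, halt, ?_⟩
  obtain ⟨u, hu⟩ := zinv_sym_cob (hc.sub (fB_coc ι hq β)) (hU.sub (fB_zinv ι hq hqk β)) hcen (by
    intro g h
    rw [sub_eq_sub_iff_sub_eq_sub, fB_anti hp2 ι β halt, hβ'])
  refine ⟨fun g => u g + U g, fun g h => ?_⟩
  have := hu g h
  simp only [hf'] at this
  have h2 : f g h - fB ι q β g h = u g + u h - u (g * h) + (U g + U h - U (g * h)) := by
    rw [← this]; abel
  change f g h - fB ι q β g h = (u g + U g) + (u h + U h) - (u (g * h) + U (g * h))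
  rw [h2]
  abel

lemma chi_cob [DivisibleBy A ℤ] (hp2 : p ≠ 2) (ι : ZMod p →+ A)
    (hq : ∀ g h, q (g * h) = q g + q h)
    (hqk : ∀ g, q g = 0 ↔ g ∈ Subgroup.center G)
    (he : ∀ w w', e (w + w') = e w * e w') (hei : Function.Injective e)
    (her : ∀ g, g ∈ Subgroup.center G ↔ ∃ w, e w = g)
    (hBe : ∀ g h, e (B (q g) (q h)) = ⁅g, h⁆) (hB : ∀ x, B x x = 0)
    (χ : Dual (ZMod p) W) : IsCob (fB ι q (B.compr₂ χ)) := by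
  have hew : ∀ w, e w ∈ Subgroup.center G := fun w => (her _).2 ⟨w, rfl⟩
  have hcen : ∀ x y : G, ⁅x, y⁆ ∈ Subgroup.center G := fun x y => by rw [← hBe]; exact hew _
  obtain ⟨s, hs1, hs2⟩ := exists_transversal G
  choose w hw using fun g => (her _).1 (hs1 g)
  have hwz : ∀ v g, w (e v * g) = v + w g := by
    intro v g
    apply hei
    rw [he, hw, hw, hs2 _ (hew v), mul_assoc]
  let T : G → A := fun g => ι (χ (w g))
  have hT : ∀ v g, T (e v * g) = ι (χ v) + T g := by
    intro v g
    simp only [T, hwz, map_add]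
  have hTi : ZInv (fun g h => T g + T h - T (g * h)) := by
    intro z hz g h
    obtain ⟨v, rfl⟩ := (her _).1 hz
    have h1 : g * (e v * h) = e v * (g * h) := by
      rw [← mul_assoc, Subgroup.mem_center_iff.1 hz g, mul_assoc]
    simp only [h1, mul_assoc, hT]
    constructor <;> abel
  obtain ⟨u, hu⟩ := zinv_sym_cob ((fB_coc ι hq (B.compr₂ χ)).add (isCoc_cob T))
    ((fB_zinv ι hq hqk (B.compr₂ χ)).add hTi) hcen (by
      intro g h
      have h1 := fB_anti (q := q) hp2 ι (B.compr₂ χ) (by intro x; simp [hB]) g h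
      have h2 : T (g * h) = ι (χ (B (q g) (q h))) + T (h * g) := by
        rw [← hT, hBe]
        congr 1
        rw [commutatorElement_def]; group
      rw [sub_eq_iff_eq_add] at h1
      rw [h1, h2]
      simp only [LinearMap.compr₂_apply]
      abel)
  refine ⟨fun g => u g - T g, fun g h => ?_⟩
  have hu' : fB ι q (B.compr₂ χ) g h + (T g + T h - T (g * h)) = u g + u h - u (g * h) := hu g h
  change _ = (u g - T g) + (u h - T h) - (u (g * h) - T (g * h))
  rw [eq_sub_of_add_eq hu']
  abel

end CT


section CN
set_option linter.all false
variable {p : ℕ} [Fact p.Prime] {G A V W : Type} [Group G] [AddCommGroup A]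
  [AddCommGroup V] [Module (ZMod p) V] [AddCommGroup W] [Module (ZMod p) W]

/-- alternating forms -/
def altS (F V : Type) [Field F] [AddCommGroup V] [Module F V] :
    Submodule F (V →ₗ[F] V →ₗ[F] F) where
  carrier := {β | ∀ x, β x x = 0}
  zero_mem' := by intro x; simp
  add_mem' := by
    intro a b ha hb x
    simp [ha x, hb x]
  smul_mem' := by
    intro c a ha x
    simp [ha x]

lemma altS_dim {F V : Type} [Field F] [AddCommGroup V] [Module F V]
    [FiniteDimensional F V] :
    finrank F (altS F V) ≤ (finrank F V).choose 2 := by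
  let b := Module.finBasis F V
  let T : (V →ₗ[F] V →ₗ[F] F) →ₗ[F]
      ({a : Sym2 (Fin (finrank F V)) // ¬ a.IsDiag} → F) :=
    { toFun := fun β a => β (b (Quot.out a.1).1) (b (Quot.out a.1).2)
      map_add' := by intro x y; rfl
      map_smul' := by intro c y; rfl }
  have h := sub_dim (F := F) (E := V →ₗ[F] V →ₗ[F] F)
    (E' := {a : Sym2 (Fin (finrank F V)) // ¬ a.IsDiag} → F) (altS F V) T (by
    intro β hβ h0
    have hβ' : ∀ x, β x x = 0 := hβ
    refine b.ext fun i => b.ext fun j => ?_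
    by_cases hij : i = j
    · subst hij; simpa using hβ' (b i)
    · have h1 := congrFun h0 ⟨s(i, j), by simpa using hij⟩
      have h2 : s((Quot.out s(i, j)).1, (Quot.out s(i, j)).2) = s(i, j) := Quot.out_eq _
      have h3 : β (b (Quot.out s(i, j)).1) (b (Quot.out s(i, j)).2) = 0 := h1
      rcases Sym2.eq_iff.1 h2 with ⟨ha, hb⟩ | ⟨ha, hb⟩
      · rw [ha, hb] at h3
        simpa using h3
      · rw [ha, hb] at h3
        rw [alt_neg hβ', h3]; simp)
  refine h.trans ?_
  rw [Module.finrank_fintype_fun_eq_card, Sym2.card_subtype_not_diag, Fintype.card_fin]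

lemma exists_quot {F E D : Type} [Field F] [Finite F] [AddCommGroup E] [Module F E] [AddCommGroup D]
    [Module F D] [FiniteDimensional F E] (S : Submodule F E) (L : D →ₗ[F] E)
    (hL : ∀ d, L d = 0 → d = 0) (hLS : ∀ d, L d ∈ S) :
    ∃ (Q : Type) (m : S → Q) (o : Q → S), Finite Q ∧ (∀ s, ∃ d, L d = (o (m s)).1 - s.1) ∧
      Nat.card Q = Nat.card F ^ (finrank F S - finrank F D) := by
  let L' : D →ₗ[F] S := L.codRestrict S hLS
  have hL' : Function.Injective L' := by
    rw [injective_iff_map_eq_zero]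
    intro d hd
    exact hL d (congrArg Subtype.val hd)
  refine ⟨S ⧸ LinearMap.range L', Submodule.Quotient.mk, Quotient.out, ?_, ?_, ?_⟩
  · exact Module.finite_of_finite F
  · intro s
    have hc : (Submodule.Quotient.mk (Quotient.out (Submodule.Quotient.mk s :
      S ⧸ LinearMap.range L')) : S ⧸ LinearMap.range L') = Submodule.Quotient.mk s :=
      Quotient.out_eq' _
    rw [Submodule.Quotient.eq] at hc
    obtain ⟨d, hd⟩ := hc
    exact ⟨d, congrArg Subtype.val hd⟩
  · rw [Module.natCard_eq_pow_finrank (K := F)]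
    have h1 := Submodule.finrank_quotient_add_finrank (LinearMap.range L')
    rw [LinearMap.finrank_range_of_inj hL'] at h1
    congr 1
    omega

lemma card_sub {F E : Type} [Field F] [Finite F] [AddCommGroup E] [Module F E]
    [FiniteDimensional F E] (S : Submodule F E) :
    Finite S ∧ Nat.card S = Nat.card F ^ finrank F S :=
  ⟨Module.finite_of_finite F, Module.natCard_eq_pow_finrank (K := F)⟩

variable {q : G → V} {e : W → G} {B : V →ₗ[ZMod p] V →ₗ[ZMod p] W}

theorem count_bound [DivisibleBy A ℤ] [FiniteDimensional (ZMod p) V] [FiniteDimensional (ZMod p) W]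
    (hp2 : p ≠ 2) (ι : ZMod p →+ A) (hι : Function.Injective ι)
    (htor : ∀ a : A, p • a = 0 → ∃ k, ι k = a)
    (hq : ∀ g h, q (g * h) = q g + q h) (hqs : Function.Surjective q)
    (hqk : ∀ g, q g = 0 ↔ g ∈ Subgroup.center G)
    (he : ∀ w w', e (w + w') = e w * e w') (hei : Function.Injective e)
    (her : ∀ g, g ∈ Subgroup.center G ↔ ∃ w, e w = g)
    (hBe : ∀ g h, e (B (q g) (q h)) = ⁅g, h⁆)
    (hzc : Subgroup.center G ≤ commutator G) (hB : ∀ x, B x x = 0)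
    (hrad : ∀ x, (∀ y, B x y = 0) → x = 0)
    (hspan : ∀ r : Dual (ZMod p) W, (∀ x y, r (B x y) = 0) → r = 0)
    (hW : finrank (ZMod p) W = 3) (hV : 10 ≤ finrank (ZMod p) V)
    {H : Type} (π : ∀ f : G → G → A, IsCoc f → H)
    (hπs : ∀ x, ∃ f hf, π f hf = x)
    (hπ : ∀ f f' hf hf', IsCob (fun g h => f g h - f' g h) → π f hf = π f' hf') :
    Nat.card H ≤ p ^ ((finrank (ZMod p) V).choose 2 + 2) := by
  classical
  have hcen : ∀ x y : G, ⁅x, y⁆ ∈ Subgroup.center G := fun x y => by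
    rw [← hBe]; exact (her _).2 ⟨_, rfl⟩
  let L : Dual (ZMod p) W →ₗ[ZMod p] (V →ₗ[ZMod p] V →ₗ[ZMod p] ZMod p) :=
    { toFun := fun χ => B.compr₂ χ
      map_add' := by intro x y; rfl
      map_smul' := by intro c y; rfl }
  obtain ⟨Q, m, o, hQf, hmo, hQ⟩ := exists_quot (F := ZMod p) (E := V →ₗ[ZMod p] V →ₗ[ZMod p] ZMod p)
    (D := Dual (ZMod p) W) (altS (ZMod p) V) L (by
      intro χ hχ
      apply hspan
      intro x y
      have h1 : B.compr₂ χ = 0 := hχ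
      exact LinearMap.congr_fun (LinearMap.congr_fun h1 x) y) (by
      intro χ x
      change χ (B x x) = 0
      rw [hB, map_zero])
  rw [Subspace.dual_finrank_eq, hW] at hQ
  have hS := dimS hB hrad hspan hW hV
  have hA := altS_dim (F := ZMod p) (V := V)
  -- chosen representatives
  let P : jacS B → (G → G → A) → Prop := fun s f =>
    IsCoc f ∧ ∀ g w, ι (s.1 (q g) w) = f g (e w) - f (e w) g
  let fs : jacS B → (G → G → A) := fun s => if h : ∃ f, P s f then h.choose else fun _ _ => 0
  have hfs : ∀ s, IsCoc (fs s) := by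
    intro s
    by_cases h : ∃ f, P s f
    · simp only [fs, dif_pos h]; exact h.choose_spec.1
    · simp only [fs, dif_neg h]; intro a b c; rfl
  have hfs2 : ∀ s, (∃ f, P s f) → P s (fs s) := by
    intro s h
    simp only [fs, dif_pos h]; exact h.choose_spec
  let Φ : jacS B × Q → H := fun x =>
    π _ ((hfs x.1).add (fB_coc ι hq (o x.2).1))
  have hΦ : Function.Surjective Φ := by
    intro x
    obtain ⟨f, hf, rfl⟩ := hπs x
    obtain ⟨s, hs, hsf⟩ := exists_pairing ι hι htor hq hqs hqk he her hBe hzc hB hf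
    have hP := hfs2 ⟨s, hs⟩ ⟨f, hf, hsf⟩
    obtain ⟨β, hβ, u, hu⟩ := exists_alt hp2 ι hι htor hq hqs hqk hcen (hf.sub hP.1) (by
      intro g z hz
      obtain ⟨w, rfl⟩ := (her _).1 hz
      have h1 := hsf g w
      have h2 := hP.2 g w
      rw [h1] at h2
      rw [sub_eq_sub_iff_sub_eq_sub]
      exact h2)
    refine ⟨(⟨s, hs⟩, m ⟨β, hβ⟩), ?_⟩
    obtain ⟨χ, hχ⟩ := hmo ⟨β, hβ⟩
    have hχ' : B.compr₂ χ = (o (m ⟨β, hβ⟩)).1 - β := hχ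
    obtain ⟨v, hv⟩ := chi_cob hp2 ι hq hqk he hei her hBe hB χ
    apply hπ
    refine ⟨fun g => v g - u g, fun g h => ?_⟩
    have h1 := hv g h
    rw [hχ', fB_sub] at h1
    have h2 : f g h - fs ⟨s, hs⟩ g h - fB ι q β g h = u g + u h - u (g * h) := hu g h
    change fs ⟨s, hs⟩ g h + fB ι q (o (m ⟨β, hβ⟩)).1 g h - f g h =
      (v g - u g) + (v h - u h) - (v (g * h) - u (g * h))
    have h3 := eq_add_of_sub_eq h1
    have h4 := eq_add_of_sub_eq (eq_add_of_sub_eq h2 |> fun t => t)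
    rw [h3, h4]
    abel
  obtain ⟨hjf, hjc⟩ := card_sub (F := ZMod p) (E := V →ₗ[ZMod p] Dual (ZMod p) W) (jacS B)
  refine (Nat.card_le_card_of_surjective Φ hΦ).trans ?_
  rw [Nat.card_prod, hjc, hQ, Nat.card_zmod, ← pow_add]
  apply Nat.pow_le_pow_right (Fact.out : p.Prime).pos
  have h3 : 3 ≤ (finrank (ZMod p) V).choose 2 :=
    (by decide : 3 ≤ Nat.choose 10 2).trans (Nat.choose_le_choose 2 hV)
  omega

end CN

section FA
set_option linter.all false

/-- `ℂˣ` is divisible. -/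
@[reducible] noncomputable def divC : DivisibleBy (Additive ℂˣ) ℤ :=
  divisibleByOfSMulRightSurj _ _ (by
    intro n hn a
    have key : ∀ (m : ℕ), m ≠ 0 → ∀ a : Additive ℂˣ, ∃ b : Additive ℂˣ, m • b = a := by
      intro m hm a
      obtain ⟨z, hz⟩ := IsAlgClosed.exists_pow_nat_eq ((Additive.toMul a : ℂˣ) : ℂ)
        (Nat.pos_of_ne_zero hm)
      have hz0 : z ≠ 0 := by
        rintro rfl
        rw [zero_pow hm] at hz
        exact (Additive.toMul a).ne_zero hz.symm
      refine ⟨Additive.ofMul (Units.mk0 z hz0), ?_⟩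
      rw [← ofMul_pow]
      apply Additive.toMul.injective
      apply Units.ext
      simpa using hz
    obtain ⟨b, hb⟩ := key n.natAbs (by simpa using hn) a
    rcases Int.natAbs_eq n with h | h
    · refine ⟨b, ?_⟩
      change n • b = a
      rw [h, natCast_zsmul, hb]
    · refine ⟨-b, ?_⟩
      change n • (-b) = a
      rw [h, neg_smul, smul_neg, neg_neg, natCast_zsmul, hb])

lemma exists_iota (p : ℕ) (hp : p.Prime) : ∃ ι : ZMod p →+ Additive ℂˣ, Function.Injective ι ∧
    ∀ a : Additive ℂˣ, p • a = 0 → ∃ k, ι k = a := by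
  haveI : NeZero p := ⟨hp.ne_zero⟩
  have hζ := (Complex.isPrimitiveRoot_exp p hp.ne_zero)
  obtain ⟨ζ, hζ'⟩ : ∃ ζ : ℂˣ, IsPrimitiveRoot ζ p := by
    refine ⟨hζ.toRootsOfUnity.1, ?_⟩
    rw [← IsPrimitiveRoot.coe_units_iff]
    simpa using hζ
  let f := ZMod.lift p ⟨(zmultiplesHom (Additive ℂˣ)) (Additive.ofMul ζ), by
    simp [← ofMul_pow, hζ'.pow_eq_one]⟩
  refine ⟨f, ?_, ?_⟩
  · rw [injective_iff_map_eq_zero]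
    intro k hk
    obtain ⟨m, rfl⟩ := ZMod.intCast_surjective k
    have h1 : (ZMod.lift p ⟨(zmultiplesHom (Additive ℂˣ)) (Additive.ofMul ζ), by
      simp [← ofMul_pow, hζ'.pow_eq_one]⟩) (m : ZMod p) = 0 := hk
    rw [ZMod.lift_coe] at h1
    have h2 : ζ ^ m = 1 := h1
    rw [hζ'.zpow_eq_one_iff_dvd] at h2
    rwa [ZMod.intCast_zmod_eq_zero_iff_dvd]
  · intro a ha
    have h1 : ((Additive.toMul a : ℂˣ) : ℂ) ^ p = 1 := by
      have : (Additive.toMul a) ^ p = 1 := ha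
      rw [← Units.val_pow_eq_pow_val, this]; rfl
    obtain ⟨i, -, hi⟩ := (IsPrimitiveRoot.coe_units_iff.2 hζ').eq_pow_of_pow_eq_one h1
    refine ⟨((i : ℤ) : ZMod p), ?_⟩
    change (ZMod.lift p ⟨(zmultiplesHom (Additive ℂˣ)) (Additive.ofMul ζ), by
      simp [← ofMul_pow, hζ'.pow_eq_one]⟩) ((i : ℤ) : ZMod p) = a
    rw [ZMod.lift_coe]
    apply Additive.toMul.injective
    change ζ ^ (i : ℤ) = Additive.toMul a
    apply Units.ext
    simpa using hi

lemma schur_pi (G : Type) [Group G] : ∃ π : ∀ f : G → G → Additive ℂˣ, IsCoc f → schurMultiplier G,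
    (∀ x, ∃ f hf, π f hf = x) ∧
    ∀ f f' hf hf', IsCob (fun g h => f g h - f' g h) → π f hf = π f' hf' := by
  let M := Rep.trivial ℤ G (Additive ℂˣ)
  have hc : ∀ f : G → G → Additive ℂˣ, IsCoc f →
      (fun x : G × G => (f x.1 x.2 : M)) ∈ groupCohomology.cocycles₂ M := by
    intro f hf
    rw [groupCohomology.mem_cocycles₂_iff]
    intro g h j
    exact hf g h j
  refine ⟨fun f hf => (groupCohomology.H2π M) ⟨_, hc f hf⟩, ?_, ?_⟩
  · intro x
    refine groupCohomology.H2_induction_on (A := M)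
      (C := fun x => ∃ f hf, (groupCohomology.H2π M) ⟨_, hc f hf⟩ = x) x ?_
    intro c
    refine ⟨fun g h => c.1 (g, h), ?_, rfl⟩
    have h := (groupCohomology.mem_cocycles₂_iff (A := M) c.1).1 c.2
    exact fun g h' j => h g h' j
  · rintro f f' hf hf' ⟨u, hu⟩
    refine (groupCohomology.H2π_eq_iff (A := M) _ _).2 ?_
    refine ⟨(u : G → M), ?_⟩
    funext x
    rw [groupCohomology.d₁₂_hom_apply]
    have h : f x.1 x.2 - f' x.1 x.2 = u x.1 + u x.2 - u (x.1 * x.2) := hu x.1 x.2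
    change u x.2 - u (x.1 * x.2) + u x.1 = f x.1 x.2 - f' x.1 x.2
    rw [h]
    abel
end FA


section FG
set_option linter.all false
variable {G : Type} [Group G]

lemma pow_mem_frattini [Finite G] [Group.IsNilpotent G] {p : ℕ} (hp : p.Prime)
    (hpG : IsPGroup p G) (g : G) : g ^ p ∈ frattini G := by
  haveI : Fact p.Prime := ⟨hp⟩
  have key : ∀ M : Subgroup G, IsCoatom M → g ^ p ∈ M := by
    intro M hM
    haveI : M.Normal := 
      ((Group.isNilpotent_of_finite_tfae (G := G)).out 0 2 rfl rfl).1 inferInstance M hM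
    have hQ : IsPGroup p (G ⧸ M) := hpG.to_quotient M
    by_contra hg
    have hne : ((g ^ p : G) : G ⧸ M) ≠ 1 := by
      rwa [Ne, QuotientGroup.eq_one_iff]
    have hgM : g ∉ M := fun h => hg (pow_mem h p)
    -- the subgroup generated by `M` and `g ^ p`
    let N : Subgroup G := (Subgroup.zpowers ((g ^ p : G) : G ⧸ M)).comap (QuotientGroup.mk' M)
    have hMN : M < N := by
      refine lt_of_le_of_ne ?_ ?_
      · intro x hx
        change (x : G ⧸ M) ∈ Subgroup.zpowers _
        rw [(QuotientGroup.eq_one_iff x).2 hx]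
        exact one_mem _
      · intro h
        apply hg
        rw [h]
        exact Subgroup.mem_zpowers _
    have hN := hM.2 N hMN
    have hgN : (g : G ⧸ M) ∈ Subgroup.zpowers ((g ^ p : G) : G ⧸ M) := by
      have : g ∈ N := by rw [hN]; trivial
      exact this
    obtain ⟨k, hk⟩ := Subgroup.mem_zpowers_iff.1 hgN
    -- g^(pk - 1) = 1 so the order of g is prime to p
    have h1 : (g : G ⧸ M) ^ ((p : ℤ) * k - 1) = 1 := by
      rw [zpow_sub, zpow_mul, zpow_one, zpow_natCast, ← QuotientGroup.mk_pow, hk, mul_inv_cancel]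
    obtain ⟨n, hn⟩ := (IsPGroup.iff_orderOf.1 hQ) (g : G ⧸ M)
    rw [← orderOf_dvd_iff_zpow_eq_one, hn] at h1
    have hn0 : n ≠ 0 := by
      rintro rfl
      rw [pow_zero, orderOf_eq_one_iff, QuotientGroup.eq_one_iff] at hn
      exact hgM hn
    have h2 : (p : ℤ) ∣ (p : ℤ) * k - 1 := by
      refine dvd_trans ?_ h1
      push_cast
      exact dvd_pow_self _ hn0
    have h3 : (p : ℤ) ∣ 1 := by
      have := dvd_sub (dvd_mul_right (p : ℤ) k) h2
      simpa using this
    have h4 := Int.eq_one_of_dvd_one (by positivity) h3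
    exact hp.one_lt.ne' (by exact_mod_cast h4)
  rw [frattini, Order.radical, Subgroup.mem_iInf]
  intro M
  rw [Subgroup.mem_iInf]
  exact key M

lemma comm_mul_left (hcen : ∀ x y : G, ⁅x, y⁆ ∈ Subgroup.center G) (a b c : G) :
    ⁅a * b, c⁆ = ⁅a, c⁆ * ⁅b, c⁆ := by
  have h1 := Subgroup.mem_center_iff.1 (hcen b c)
  have h2 := Subgroup.mem_center_iff.1 (hcen a c)
  have : ⁅a * b, c⁆ = a * ⁅b, c⁆ * a⁻¹ * ⁅a, c⁆ := by
    simp only [commutatorElement_def]; group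
  rw [this, h1 a, mul_inv_cancel_right, h2]

lemma comm_mul_right (hcen : ∀ x y : G, ⁅x, y⁆ ∈ Subgroup.center G) (a b c : G) :
    ⁅a, b * c⁆ = ⁅a, b⁆ * ⁅a, c⁆ := by
  rw [← commutatorElement_inv, comm_mul_left hcen, mul_inv_rev, commutatorElement_inv,
    commutatorElement_inv]
  exact Subgroup.mem_center_iff.1 (hcen a b) _

lemma comm_pow (hcen : ∀ x y : G, ⁅x, y⁆ ∈ Subgroup.center G) (a b : G) (n : ℕ) :
    ⁅a ^ n, b⁆ = ⁅a, b⁆ ^ n := by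
  induction n with
  | zero => simp
  | succ n ih => rw [pow_succ, comm_mul_left hcen, ih, pow_succ]

lemma center_exp {p : ℕ} (hcen : ∀ x y : G, ⁅x, y⁆ ∈ Subgroup.center G)
    (hzc : Subgroup.center G = commutator G) (hpow : ∀ g : G, g ^ p ∈ Subgroup.center G)
    (z : G) (hz : z ∈ Subgroup.center G) : z ^ p = 1 := by
  have key : ∀ z ∈ commutator G, z ∈ Subgroup.center G ∧ z ^ p = 1 := by
    intro z hz
    rw [commutator_eq_closure] at hz
    induction hz using Subgroup.closure_induction with
    | mem x hx =>
      obtain ⟨a, b, rfl⟩ := hx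
      refine ⟨hcen a b, ?_⟩
      rw [← comm_pow hcen, commutatorElement_eq_one_iff_mul_comm]
      exact (Subgroup.mem_center_iff.1 (hpow a) b).symm
    | one => exact ⟨one_mem _, one_pow _⟩
    | mul x y _ _ hx hy =>
      refine ⟨mul_mem hx.1 hy.1, ?_⟩
      have : Commute x y := Subgroup.mem_center_iff.1 hy.1 x
      rw [this.mul_pow, hx.2, hy.2, one_mul]
    | inv x _ hx => exact ⟨inv_mem hx.1, by rw [inv_pow, hx.2, inv_one]⟩
  exact (key z (hzc ▸ hz)).2
end FG


section FH
set_option linter.all false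
variable {p : ℕ} [Fact p.Prime] {G V W : Type} [Group G]
  [AddCommGroup V] [Module (ZMod p) V] [AddCommGroup W] [Module (ZMod p) W]
  {q : G → V} {e : W → G}

lemma exists_comm_form
    (hq : ∀ g h, q (g * h) = q g + q h) (hqs : Function.Surjective q)
    (hqk : ∀ g, q g = 0 ↔ g ∈ Subgroup.center G)
    (he : ∀ w w', e (w + w') = e w * e w') (hei : Function.Injective e)
    (her : ∀ g, g ∈ Subgroup.center G ↔ ∃ w, e w = g)
    (hcen : ∀ x y : G, ⁅x, y⁆ ∈ Subgroup.center G) :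
    ∃ B : V →ₗ[ZMod p] V →ₗ[ZMod p] W, ∀ g h, e (B (q g) (q h)) = ⁅g, h⁆ := by
  have hl : ∀ g g' h : G, q g = q g' → ⁅g, h⁆ = ⁅g', h⁆ := by
    intro g g' h hg
    have h1 : q (g * g'⁻¹) = 0 := by
      have h2 := hq (g * g'⁻¹) g'
      rw [inv_mul_cancel_right, hg] at h2
      simpa using h2
    rw [hqk] at h1
    have h3 : ⁅g * g'⁻¹, h⁆ = 1 := by
      rw [commutatorElement_eq_one_iff_mul_comm]
      exact (Subgroup.mem_center_iff.1 h1 h).symm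
    have h4 := comm_mul_left hcen (g * g'⁻¹) g' h
    rwa [inv_mul_cancel_right, h3, one_mul] at h4
  have hr : ∀ g h h' : G, q h = q h' → ⁅g, h⁆ = ⁅g, h'⁆ := by
    intro g h h' hh
    rw [← commutatorElement_inv, hl h h' g hh, commutatorElement_inv]
  choose σ hσ using hqs
  choose k hk using fun x y => (her _).1 (hcen (σ x) (σ y))
  let β1 : V → (V →ₗ[ZMod p] W) := fun x =>
    (AddMonoidHom.mk' (k x) (fun y y' => hei (by
      rw [he, hk, hk, hk, ← comm_mul_right hcen]
      exact hr _ _ _ (by rw [hq, hσ, hσ, hσ])))).toZModLinearMap p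
  let β : V →+ (V →ₗ[ZMod p] W) := AddMonoidHom.mk' β1 (by
    intro x y
    ext w
    apply hei
    change e (k (x + y) w) = e (k x w + k y w)
    rw [he, hk, hk, hk, ← comm_mul_left hcen]
    exact hl _ _ _ (by rw [hq, hσ, hσ, hσ]))
  refine ⟨β.toZModLinearMap p, fun g h => ?_⟩
  change e (k (q g) (q h)) = _
  rw [hk, hl _ g _ (hσ _), hr _ _ h (hσ _)]

theorem abstract_bound [Finite G] [Finite V] [Finite W] (hp2 : p ≠ 2)
    (hq : ∀ g h, q (g * h) = q g + q h) (hqs : Function.Surjective q)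
    (hqk : ∀ g, q g = 0 ↔ g ∈ Subgroup.center G)
    (he : ∀ w w', e (w + w') = e w * e w') (hei : Function.Injective e)
    (her : ∀ g, g ∈ Subgroup.center G ↔ ∃ w, e w = g)
    (hcen : ∀ x y : G, ⁅x, y⁆ ∈ Subgroup.center G)
    (hzc : Subgroup.center G = commutator G)
    (hW : Nat.card W = p ^ 3) (hV : p ^ 10 ≤ Nat.card V) :
    ∃ n : ℕ, n ≤ Group.rank G ∧ Nat.card (schurMultiplier G) ≤ p ^ (n.choose 2 + 2) := by
  have hp : p.Prime := Fact.out
  obtain ⟨B, hBe⟩ := exists_comm_form (p := p) hq hqs hqk he hei her hcen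
  obtain ⟨ι, hι, htor⟩ := exists_iota p hp
  obtain ⟨π, hπs, hπ⟩ := schur_pi G
  letI := divC
  haveI : FiniteDimensional (ZMod p) V := Module.Finite.of_finite
  haveI : FiniteDimensional (ZMod p) W := Module.Finite.of_finite
  have hW' : finrank (ZMod p) W = 3 := by
    rw [Module.natCard_eq_pow_finrank (K := ZMod p), Nat.card_zmod] at hW
    exact Nat.pow_right_injective hp.two_le hW
  have hV' : 10 ≤ finrank (ZMod p) V := by
    rw [Module.natCard_eq_pow_finrank (K := ZMod p), Nat.card_zmod] at hV
    exact (Nat.pow_le_pow_iff_right hp.one_lt).1 hV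
  have he0 : e 0 = 1 := by
    have := he 0 0
    rw [add_zero] at this
    simpa using this
  have hB : ∀ x, B x x = 0 := by
    intro x
    obtain ⟨g, rfl⟩ := hqs x
    apply hei
    rw [hBe, commutatorElement_self, he0]
  have hrad : ∀ x, (∀ y, B x y = 0) → x = 0 := by
    intro x hx
    obtain ⟨g, rfl⟩ := hqs x
    rw [hqk, Subgroup.mem_center_iff]
    intro h
    have h1 := hBe g h
    rw [hx, he0, eq_comm, commutatorElement_eq_one_iff_mul_comm] at h1
    exact h1.symm
  have hspan : ∀ r : Dual (ZMod p) W, (∀ x y, r (B x y) = 0) → r = 0 := by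
    intro r hr
    have key : ∀ z ∈ commutator G, ∃ w, e w = z ∧ r w = 0 := by
      intro z hz
      rw [commutator_eq_closure] at hz
      induction hz using Subgroup.closure_induction with
      | mem x hx =>
        obtain ⟨a, b, rfl⟩ := hx
        exact ⟨B (q a) (q b), hBe a b, hr _ _⟩
      | one => exact ⟨0, he0, map_zero r⟩
      | mul x y _ _ hx hy =>
        obtain ⟨w, rfl, h1⟩ := hx
        obtain ⟨w', rfl, h2⟩ := hy
        exact ⟨w + w', he w w', by rw [map_add, h1, h2, add_zero]⟩
      | inv x _ hx =>
        obtain ⟨w, rfl, h1⟩ := hx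
        refine ⟨-w, ?_, by rw [map_neg, h1, neg_zero]⟩
        rw [eq_inv_iff_mul_eq_one, ← he, neg_add_cancel, he0]
    ext w
    obtain ⟨w', h1, h2⟩ := key (e w) (by rw [← hzc]; exact (her _).2 ⟨w, rfl⟩)
    rw [← hei h1, h2]; rfl
  refine ⟨finrank (ZMod p) V, ?_, ?_⟩
  · obtain ⟨S, hS, hcl⟩ := Group.rank_spec G
    classical
    rw [← hS]
    have hsp : Submodule.span (ZMod p) ((S.image q : Finset V) : Set V) = ⊤ := by
      rw [eq_top_iff]
      intro x _
      obtain ⟨g, rfl⟩ := hqs x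
      have hg : g ∈ Subgroup.closure (S : Set G) := by rw [hcl]; trivial
      have hq1 : q 1 = 0 := (hqk 1).2 (one_mem _)
      induction hg using Subgroup.closure_induction with
      | mem x hx =>
        apply Submodule.subset_span
        exact Finset.mem_coe.2 (Finset.mem_image_of_mem q hx)
      | one => rw [hq1]; exact zero_mem _
      | mul x y _ _ hx hy => rw [hq]; exact add_mem (hx trivial) (hy trivial)
      | inv x _ hx =>
        have h1 : q x⁻¹ = - q x := by
          rw [eq_neg_iff_add_eq_zero, ← hq, inv_mul_cancel, hq1]
        rw [h1]; exact neg_mem (hx trivial)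
    have h1 := finrank_span_finset_le_card (R := ZMod p) (S.image q)
    rw [Set.finrank, hsp, finrank_top] at h1
    exact h1.trans Finset.card_image_le
  · exact count_bound hp2 ι hι htor hq hqs hqk he hei her hBe hzc.le hB hrad hspan hW' hV' π hπs hπ

end FH


end Aux

open scoped commutatorElement

/-- Corollary 3, first part: if `p` is odd and `G₂` is a special `p`-group with
center of order `p ^ 3` and `|G₂| ≥ p ^ 13`, then `|M(G₂)| ≤ p ^ (d * (d - 1) / 2 + 2)`. -/
theorem schur_multiplier_bound_special_center_p_cube_large (p d : ℕ) (hp : p.Prime)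
    (hodd : p ≠ 2)
    (G : Type) [Group G] [Finite G] [Group.IsNilpotent G]
    (hpG : IsPGroup p G)
    (hc : Group.nilpotencyClass G = 2)
    (hzc : Subgroup.center G = commutator G)
    (hzf : Subgroup.center G = frattini G)
    (hz : Nat.card (Subgroup.center G) = p ^ 3)
    (hbig : p ^ 13 ≤ Nat.card G)
    (hd : Group.rank G = d) :
    (Nat.card (schurMultiplier G) : ℝ) ≤ (p : ℝ) ^ ((d : ℝ) * ((d : ℝ) - 1) / 2 + 2) := by
  haveI : Fact p.Prime := ⟨hp⟩
  have hcen : ∀ x y : G, ⁅x, y⁆ ∈ Subgroup.center G := by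
    intro x y
    rw [hzc, commutator_eq_closure]
    exact Subgroup.subset_closure ⟨x, y, rfl⟩
  have hpow : ∀ g : G, g ^ p ∈ Subgroup.center G := by
    intro g
    rw [hzf]
    exact pow_mem_frattini hp hpG g
  have hexp := center_exp hcen hzc hpow
  letI : CommGroup (G ⧸ Subgroup.center G) := qComm hcen
  letI : CommGroup (Subgroup.center G) :=
    { (inferInstance : Group (Subgroup.center G)) with
      mul_comm := fun x y => Subtype.ext (Subgroup.mem_center_iff.1 y.2 x) }
  letI : Module (ZMod p) (Additive (G ⧸ Subgroup.center G)) := AddCommGroup.zmodModule (by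
    intro x
    change Additive.ofMul ((Additive.toMul x) ^ p) = Additive.ofMul 1
    congr 1
    generalize Additive.toMul x = y
    induction y using QuotientGroup.induction_on with | _ y =>
    exact (QuotientGroup.eq_one_iff (y ^ p)).2 (hpow y))
  letI : Module (ZMod p) (Additive (Subgroup.center G)) := AddCommGroup.zmodModule (by
    intro x
    change Additive.ofMul ((Additive.toMul x) ^ p) = Additive.ofMul 1
    congr 1
    exact Subtype.ext (hexp _ (Additive.toMul x).2))
  have hV : p ^ 10 ≤ Nat.card (Additive (G ⧸ Subgroup.center G)) := by
    have h1 := Subgroup.card_eq_card_quotient_mul_card_subgroup (Subgroup.center G)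
    rw [hz] at h1
    have h2 : Nat.card (Additive (G ⧸ Subgroup.center G)) = Nat.card (G ⧸ Subgroup.center G) := rfl
    rw [h2]
    rw [h1] at hbig
    refine Nat.le_of_mul_le_mul_right ?_ (pow_pos hp.pos 3)
    rwa [← pow_add]
  obtain ⟨n, hn, hcard⟩ := abstract_bound (p := p) (G := G)
    (V := Additive (G ⧸ Subgroup.center G)) (W := Additive (Subgroup.center G))
    (q := fun g => Additive.ofMul (g : G ⧸ Subgroup.center G))
    (e := fun w => (Additive.toMul w).1) hodd
    (fun g h => rfl)
    (fun x => by
      obtain ⟨g, hg⟩ := QuotientGroup.mk_surjective (Additive.toMul x)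
      exact ⟨g, congrArg Additive.ofMul hg⟩)
    (fun g => QuotientGroup.eq_one_iff g)
    (fun w w' => rfl)
    (fun w w' h => Additive.toMul.injective (Subtype.ext h))
    (fun g => ⟨fun h => ⟨Additive.ofMul ⟨g, h⟩, rfl⟩, by rintro ⟨w, rfl⟩; exact (Additive.toMul w).2⟩)
    hcen hzc hz hV
  rw [hd] at hn
  have h1 : (Nat.card (schurMultiplier G) : ℝ) ≤ (p : ℝ) ^ (d.choose 2 + 2) := by
    have h2 : Nat.card (schurMultiplier G) ≤ p ^ (d.choose 2 + 2) :=
      hcard.trans (Nat.pow_le_pow_right hp.pos (by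
        have := Nat.choose_le_choose 2 hn
        omega))
    exact_mod_cast h2
  refine h1.trans (le_of_eq ?_)
  rw [← Real.rpow_natCast]
  congr 1
  push_cast
  rw [Nat.cast_choose_two]
end

section
/- Let p be an odd prime and G₂ a special p-group with center of order p³, |G₂| ≥ p^{13}, d(G₂) = d, and suppose additionally that G₂^p = γ₂(G₂). Then |M(G₂)| ≤ p^{(1/2)d(d-1) − 2}. -/
namespace SchurAux

open scoped commutatorElement

/-- The central extension attached to a 2-cocycle. -/
structure CExt {G A : Type} (α : G → G → A) where
  a : A
  g : G

theorem CExt.ext' {G A : Type} {α : G → G → A} {x y : CExt α} (h1 : x.a = y.a) (h2 : x.g = y.g) :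
    x = y := by
  cases x; cases y; simp_all

section
variable {G A : Type} [Group G] [CommGroup A] {α : G → G → A}

theorem coc_one_left (hα : ∀ g h j, α (g * h) j * α g h = α h j * α g (h * j)) (g : G) :
    α 1 g = α 1 1 := by
  have := hα 1 1 g
  simp only [one_mul] at this
  exact (mul_left_cancel this).symm

theorem coc_one_right (hα : ∀ g h j, α (g * h) j * α g h = α h j * α g (h * j)) (g : G) :
    α g 1 = α 1 1 := by
  have := hα g 1 1
  simp only [mul_one] at this
  exact mul_right_cancel this

/-- group structure on the extension -/
@[reducible] def CExt.group (hα : ∀ g h j, α (g * h) j * α g h = α h j * α g (h * j)) :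
    Group (CExt α) :=
  letI : Mul (CExt α) := ⟨fun x y => ⟨x.a * y.a * α x.g y.g, x.g * y.g⟩⟩
  letI : One (CExt α) := ⟨⟨(α 1 1)⁻¹, 1⟩⟩
  letI : Inv (CExt α) := ⟨fun x => ⟨x.a⁻¹ * (α x.g⁻¹ x.g)⁻¹ * (α 1 1)⁻¹, x.g⁻¹⟩⟩
  Group.ofLeftAxioms
    (by
      intro x y z
      refine CExt.ext' ?_ (mul_assoc _ _ _)
      show x.a * y.a * α x.g y.g * z.a * α (x.g * y.g) z.g
        = x.a * (y.a * z.a * α y.g z.g) * α x.g (y.g * z.g)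
      have := hα x.g y.g z.g
      calc _ = x.a * y.a * z.a * (α (x.g * y.g) z.g * α x.g y.g) := by
            simp only [mul_comm, mul_left_comm]
        _ = _ := by rw [this]; simp only [mul_comm, mul_left_comm, mul_assoc])
    (by
      intro x
      refine CExt.ext' ?_ (one_mul _)
      show (α 1 1)⁻¹ * x.a * α 1 x.g = x.a
      rw [coc_one_left hα x.g, mul_comm (α 1 1)⁻¹, inv_mul_cancel_right])
    (by
      intro x
      refine CExt.ext' ?_ (inv_mul_cancel _)
      show x.a⁻¹ * (α x.g⁻¹ x.g)⁻¹ * (α 1 1)⁻¹ * x.a * α x.g⁻¹ x.g = (α 1 1)⁻¹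
      rw [mul_comm x.a⁻¹, mul_assoc, mul_assoc, mul_comm, mul_assoc]
      simp [mul_assoc, mul_comm])

theorem lift_exists (hα : ∀ g h j, α (g * h) j * α g h = α h j * α g (h * j))
    {F : Type} (π : FreeGroup F →* G) :
    ∃ u : (FreeGroup F ⧸ (⁅π.ker, (⊤ : Subgroup (FreeGroup F))⁆)) → A, 
      ∀ x y : FreeGroup F, u ((x * y : FreeGroup F)) = u x * u y * α (π x) (π y) := by
  letI := CExt.group hα
  let pr : CExt α →* G := { toFun := CExt.g, map_one' := rfl, map_mul' := fun _ _ => rfl }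
  let θ : FreeGroup F →* CExt α := FreeGroup.lift (fun f => ⟨1, π (FreeGroup.of f)⟩)
  have hθ : pr.comp θ = π := by
    ext f
    simp [θ, pr]
  have hcen : ∀ r ∈ π.ker, ∀ x : CExt α, ⁅θ r, x⁆ = 1 := by
    intro r hr x
    rw [commutatorElement_eq_one_iff_mul_comm]
    have hr1 : (θ r).g = 1 := by
      have : pr (θ r) = π r := DFunLike.congr_fun hθ r
      rw [MonoidHom.mem_ker.1 hr] at this
      exact this
    refine CExt.ext' ?_ ?_
    · show (θ r).a * x.a * α (θ r).g x.g = x.a * (θ r).a * α x.g (θ r).g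
      rw [hr1, coc_one_left hα x.g, coc_one_right hα x.g, mul_comm x.a]
    · show (θ r).g * x.g = x.g * (θ r).g
      rw [hr1]; simp
  have hle : ⁅π.ker, (⊤ : Subgroup (FreeGroup F))⁆ ≤ θ.ker := by
    rw [Subgroup.commutator_le]
    intro r hr x _
    rw [MonoidHom.mem_ker, map_commutatorElement]
    exact hcen r hr _
  refine ⟨fun x => (QuotientGroup.lift _ θ hle x).a, fun x y => ?_⟩
  simp only [QuotientGroup.lift_mk]
  rw [map_mul]
  have h1 : ∀ z, (θ z).g = π z := fun z => DFunLike.congr_fun hθ z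
  rw [← h1, ← h1]
  rfl
end

theorem char_extend {H : Type} [Group H] (R : Subgroup H) (χ : R →* ℂˣ)
    (hχ : ∀ r : R, (r : H) ∈ commutator H → χ r = 1) :
    ∃ w : H →* ℂˣ, ∀ r : R, w r = χ r := by
  letI : RootableBy ℂˣ ℕ := rootableByOfPowLeftSurj _ _ (by
    intro n hn x
    obtain ⟨z, hz⟩ := IsAlgClosed.exists_pow_nat_eq (x : ℂ) (Nat.pos_of_ne_zero hn)
    have hz0 : z ≠ 0 := by
      rintro rfl
      rw [zero_pow hn] at hz
      exact x.ne_zero hz.symm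
    exact ⟨Units.mk0 z hz0, Units.ext (by simpa using hz)⟩)
  letI : RootableBy ℂˣ ℤ := Group.rootableByIntOfRootableByNat _
  letI : DivisibleBy (Additive ℂˣ) ℤ :=
    { div := fun a n => Additive.ofMul (RootableBy.root a.toMul n)
      div_zero := fun a => RootableBy.root_zero (α := ℤ) a.toMul
      div_cancel := fun {n} a hn => RootableBy.root_cancel (α := ℤ) a.toMul hn }
  let q : R →* Abelianization H := Abelianization.of.comp R.subtype
  let q' := q.rangeRestrict
  have hq' : Function.Surjective q' := q.rangeRestrict_surjective
  have hk : q'.ker ≤ χ.ker := by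
    intro r hr
    rw [MonoidHom.mem_ker] at hr ⊢
    apply hχ
    have : Abelianization.of (r : H) = 1 := congrArg Subtype.val hr
    rwa [← MonoidHom.mem_ker, Abelianization.ker_of] at this
  let χ' : q.range →* ℂˣ := q'.liftOfSurjective hq' ⟨χ, hk⟩
  have hχ' : ∀ r, χ' (q' r) = χ r := fun r => MonoidHom.liftOfRightInverse_comp_apply _ _ _ ⟨χ, hk⟩ r
  obtain ⟨w, hw⟩ := (Module.Baer.of_divisible (Additive ℂˣ)).extension_property_addMonoidHom
    (MonoidHom.toAdditive q.range.subtype) (Subtype.val_injective) (MonoidHom.toAdditive χ')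
  refine ⟨(MonoidHom.toAdditive.symm w).comp Abelianization.of, fun r => ?_⟩
  rw [← hχ' r]
  exact DFunLike.congr_fun hw (Additive.ofMul (q' r))

theorem diff_coboundary {G H : Type} [Group G] [Group H] (π : H →* G) (hπ : Function.Surjective π)
    (α α' : G → G → ℂˣ)
    (hα : ∀ g h j, α (g * h) j * α g h = α h j * α g (h * j))
    (hα' : ∀ g h j, α' (g * h) j * α' g h = α' h j * α' g (h * j))
    (u u' : H → ℂˣ)
    (hu : ∀ x y, u (x * y) = u x * u y * α (π x) (π y))
    (hu' : ∀ x y, u' (x * y) = u' x * u' y * α' (π x) (π y))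
    (heq : ∀ x ∈ π.ker ⊓ commutator H, u x * α 1 1 = u' x * α' 1 1) :
    ∃ w : G → ℂˣ, ∀ g h, w g * w h * α g h = w (g * h) * α' g h := by
  let c : ℂˣ := α 1 1 / α' 1 1
  let v : H → ℂˣ := fun x => u x / u' x
  have hv : ∀ x y, v (x * y) = v x * v y * (α (π x) (π y) / α' (π x) (π y)) := by
    intro x y
    simp only [v, hu, hu']
    rw [mul_div_mul_comm, mul_div_mul_comm]
  have hvr : ∀ x, ∀ r ∈ π.ker, v (x * r) = v x * (v r * c) := by
    intro x r hr
    rw [hv, MonoidHom.mem_ker.1 hr, coc_one_right hα, coc_one_right hα', mul_assoc]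
  have h1 : v 1 * c = 1 := by
    have := hvr 1 1 (one_mem _)
    rw [mul_one] at this
    exact (mul_eq_left.1 this.symm)
  let χ : π.ker →* ℂˣ :=
    { toFun := fun r => v r * c
      map_one' := h1
      map_mul' := by
        intro r s
        show v (r * s) * c = _
        rw [hvr _ _ s.2]; simp only [mul_assoc, mul_comm, mul_left_comm] }
  have hχ : ∀ r : π.ker, (r : H) ∈ commutator H → χ r = 1 := by
    intro r hr
    show u r / u' r * (α 1 1 / α' 1 1) = 1
    rw [div_mul_div_comm, heq r ⟨r.2, hr⟩, div_self']
  obtain ⟨w, hw⟩ := char_extend π.ker χ hχ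
  have hconst : ∀ x y, π x = π y → v x / w x = v y / w y := by
    intro x y hxy
    have hr : x⁻¹ * y ∈ π.ker := by
      rw [MonoidHom.mem_ker, map_mul, map_inv, hxy, inv_mul_cancel]
    have e1 := hvr x _ hr
    have e2 := hw ⟨_, hr⟩
    have e3 : w (x⁻¹ * y) = v (x⁻¹ * y) * c := e2
    rw [mul_inv_cancel_left, ← e3] at e1
    rw [e1, map_mul, map_inv]
    rw [div_eq_div_iff_mul_eq_mul]
    simp [mul_assoc]
  choose s hs using hπ
  refine ⟨fun g => v (s g) / w (s g), fun g h => ?_⟩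
  have e := hconst (s (g * h)) (s g * s h) (by simp [hs])
  show v (s g) / w (s g) * (v (s h) / w (s h)) * α g h = v (s (g * h)) / w (s (g * h)) * α' g h
  rw [e, hv, map_mul, hs, hs]
  generalize v (s g) = a
  generalize v (s h) = b
  generalize w (s g) = k
  generalize w (s h) = l
  rw [div_mul_div_comm, div_mul_eq_mul_div, div_mul_eq_mul_div, mul_assoc (a * b), div_mul_cancel]

open groupCohomology in
theorem card_H2_le {G H : Type} [Group G] [Group H] (π : H →* G) (hπ : Function.Surjective π)
    (hcen : π.ker ≤ Subgroup.center H)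
    (hlift : ∀ α : G → G → ℂˣ, (∀ g h j, α (g * h) j * α g h = α h j * α g (h * j)) →
      ∃ u : H → ℂˣ, ∀ x y, u (x * y) = u x * u y * α (π x) (π y))
    [Finite (π.ker ⊓ commutator H : Subgroup H)] :
    Nat.card (groupCohomology (Rep.trivial ℤ G (Additive ℂˣ)) 2) ≤
      Nat.card (π.ker ⊓ commutator H : Subgroup H) := by
  let S : Subgroup H := π.ker ⊓ commutator H
  letI : CommGroup S :=
    { (inferInstance : Group S) with
      mul_comm := fun a b => Subtype.ext ((Subgroup.mem_center_iff.1 (hcen a.2.1)) b).symm }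
  have hS : Finite S := inferInstanceAs (Finite (π.ker ⊓ commutator H : Subgroup H))
  let M := Rep.trivial ℤ G (Additive ℂˣ)
  have hrep : ∀ c : H2 M, ∃ x : cocycles₂ M, H2π M x = c := by
    intro c
    induction c using H2_induction_on with
    | h x => exact ⟨x, rfl⟩
  choose rep hrepc using hrep
  let al : H2 M → G → G → ℂˣ := fun c g h => Additive.toMul (rep c (g, h))
  have hal : ∀ c, ∀ g h j, al c (g * h) j * al c g h = al c h j * al c g (h * j) := by
    intro c g h j
    exact (mem_cocycles₂_iff (A := M) (rep c)).1 (rep c).2 g h j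
  have hu := fun c => hlift (al c) (hal c)
  choose u hu using hu
  let χ : H2 M → S →* ℂˣ := fun c =>
    { toFun := fun s => u c s * al c 1 1
      map_one' := by
        have := hu c 1 1
        rw [mul_one, mul_assoc, map_one] at this
        exact mul_eq_left.1 this.symm
      map_mul' := by
        intro s t
        show u c (s * t) * al c 1 1 = _
        rw [hu, MonoidHom.mem_ker.1 s.2.1, MonoidHom.mem_ker.1 t.2.1]
        simp only [mul_assoc, mul_comm, mul_left_comm] }
  have hinj : Function.Injective χ := by
    intro c c' hcc
    obtain ⟨w, hw⟩ := diff_coboundary π hπ (al c) (al c') (hal c) (hal c') (u c) (u c')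
      (hu c) (hu c') (fun x hx => DFunLike.congr_fun hcc (⟨x, hx⟩ : S))
    rw [← hrepc c, ← hrepc c', H2π_eq_iff]
    refine ⟨fun g => (Additive.ofMul (w g)⁻¹ : Additive ℂˣ), ?_⟩
    funext ⟨g, h⟩
    change Additive.ofMul ((w h)⁻¹ / (w (g * h))⁻¹ * (w g)⁻¹)
      = Additive.ofMul (al c g h / al c' g h)
    congr 1
    have := hw g h
    rw [eq_div_iff_mul_eq', div_inv_eq_mul]
    calc _ = w (g * h) * al c' g h * (w g * w h)⁻¹ := by
          rw [mul_inv]; simp only [mul_comm, mul_left_comm, mul_assoc]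
      _ = _ := by rw [← this, mul_comm, inv_mul_cancel_left]
  have hcard : Nat.card (S →* ℂˣ) = Nat.card S :=
    CommGroup.card_monoidHom_of_hasEnoughRootsOfUnity S ℂ
  have hfin : Finite (S →* ℂˣ) :=
    Nat.finite_of_card_ne_zero (by rw [hcard]; exact Nat.card_pos.ne')
  calc Nat.card (H2 M) ≤ Nat.card (S →* ℂˣ) := Nat.card_le_card_of_injective χ hinj
    _ = Nat.card S := hcard


theorem LA_case2 {F W K : Type*} [Field F] [AddCommGroup W] [Module F W] [FiniteDimensional F W]
    [AddCommGroup K] [Module F K] [FiniteDimensional F K]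
    (hW : Module.finrank F W = 3) (hK : 7 ≤ Module.finrank F K)
    (φ : W →ₗ[F] W →ₗ[F] F) (hφ : ∀ w, φ w w = 0)
    (A : K →ₗ[F] W →ₗ[F] W) (hA : Function.Injective A)
    (hsym : ∀ x y z, φ y (A x z) = φ z (A x y)) : φ = 0 := by
  by_contra hne
  have hanti : ∀ u v, φ u v = - φ v u := by
    intro u v
    have h := hφ (u + v)
    simp only [map_add, LinearMap.add_apply, hφ, zero_add, add_zero] at h
    exact eq_neg_of_add_eq_zero_right h
  obtain ⟨u, hu⟩ : ∃ u, φ u ≠ 0 := by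
    by_contra! h; exact hne (LinearMap.ext h)
  obtain ⟨v', hv'⟩ : ∃ v, φ u v ≠ 0 := by
    by_contra! h; exact hu (LinearMap.ext h)
  obtain ⟨v, huv⟩ : ∃ v, φ u v = 1 := ⟨(φ u v')⁻¹ • v', by simp [hv']⟩
  have hvu : φ v u = -1 := by rw [hanti, huv]
  obtain ⟨e, he0, heu, hev⟩ : ∃ e : W, e ≠ 0 ∧ φ u e = 0 ∧ φ v e = 0 := by
    have : 0 < Module.finrank F (LinearMap.ker ((φ u).prod (φ v))) := by
      have h1 := LinearMap.finrank_range_add_finrank_ker ((φ u).prod (φ v))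
      have h2 := Submodule.finrank_le (LinearMap.range ((φ u).prod (φ v)))
      simp only [Module.finrank_prod, Module.finrank_self] at h2
      omega
    obtain ⟨x, hx⟩ := Module.finrank_pos_iff_exists_ne_zero.1 this
    have hx2 := x.2
    rw [LinearMap.mem_ker] at hx2
    exact ⟨x, fun h => hx (Subtype.ext h), congrArg Prod.fst hx2, congrArg Prod.snd hx2⟩
  have hli : LinearIndependent F ![u, v, e] := by
    rw [Fintype.linearIndependent_iff]
    intro g hg
    simp only [Fin.sum_univ_three, Matrix.cons_val] at hg
    have h1 : g 1 = 0 := by simpa [hφ, huv, heu] using congrArg (φ u) hg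
    have h0 : g 0 = 0 := by simpa [hφ, hvu, hev] using congrArg (φ v) hg
    have h2 : g 2 = 0 := by simpa [h1, h0, he0] using hg
    intro i
    fin_cases i <;> assumption
  let B := basisOfLinearIndependentOfCardEqFinrank hli (by simp [hW])
  have hB : ∀ w, w = B.coord 0 w • u + B.coord 1 w • v + B.coord 2 w • e := by
    intro w
    conv_lhs => rw [← B.sum_repr w]
    simp [Fin.sum_univ_three, B]
  have hz : ∀ w, φ u w = 0 → φ v w = 0 → B.coord 2 w = 0 → w = 0 := by
    intro w h1 h2 h3
    have h4 := hB w
    rw [h3] at h4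
    rw [h4] at h1 h2
    simp [hφ, huv] at h1
    simp [hφ, hvu] at h2
    rw [h4, Module.Basis.coord_apply, Module.Basis.coord_apply, h1, h2]; simp
  have he : ∀ w, φ e w = 0 := by
    intro w
    rw [hanti, hB w]; simp [heu, hev, hφ]
  let Ψ : K →ₗ[F] W × F × F × F :=
    (A.flip u).prod (((φ v).comp (A.flip v)).prod
      (((B.coord 2).comp (A.flip v)).prod ((B.coord 2).comp (A.flip e))))
  have hΨ : Function.Injective Ψ := by
    rw [← LinearMap.ker_eq_bot, LinearMap.ker_eq_bot']
    intro x hx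
    have h1 : A x u = 0 := congrArg (fun t => t.1) hx
    have h2 : φ v (A x v) = 0 := congrArg (fun t => t.2.1) hx
    have h3 : B.coord 2 (A x v) = 0 := congrArg (fun t => t.2.2.1) hx
    have h4 : B.coord 2 (A x e) = 0 := congrArg (fun t => t.2.2.2) hx
    have hv : A x v = 0 := by
      apply hz _ _ h2 h3
      rw [hsym, h1, map_zero]
    have he' : A x e = 0 := by
      apply hz _ _ _ h4
      · rw [hsym, he]
      · rw [hsym, he]
    have : A x = 0 := by
      ext w
      rw [hB w]; simp [h1, hv, he']
    exact hA (by rw [this, map_zero])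
  have := LinearMap.finrank_le_finrank_of_injective hΨ
  simp only [Module.finrank_prod, Module.finrank_self, hW] at this
  omega

theorem LA {F V W N : Type*} [Field F] [AddCommGroup V] [Module F V] [FiniteDimensional F V]
    [AddCommGroup W] [Module F W] [FiniteDimensional F W] [AddCommGroup N] [Module F N]
    (hW : Module.finrank F W = 3) (hV : 10 ≤ Module.finrank F V)
    (f : V →ₗ[F] W) (hf : Function.Surjective f)
    (c : V →ₗ[F] V →ₗ[F] W) (hc : ∀ x, c x x = 0) (hnd : ∀ x, (∀ y, c x y = 0) → x = 0)
    (b : V →ₗ[F] W →ₗ[F] N) (hb : ∀ x, b x (f x) = 0)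
    (hJ : ∀ x y z, b x (c y z) + b y (c z x) + b z (c x y) = 0)
    (hspan : Submodule.span F {n | ∃ x w, b x w = n} = ⊤) :
    Module.finrank F N ≤ 1 := by
  have hcanti : ∀ u v, c u v = - c v u := by
    intro u v
    have h := hc (u + v)
    simp only [map_add, LinearMap.add_apply, hc, zero_add, add_zero] at h
    exact eq_neg_of_add_eq_zero_right h
  have hpol : ∀ x y, b x (f y) = - b y (f x) := by
    intro u v
    have h := hb (u + v)
    simp only [map_add, LinearMap.add_apply, hb, zero_add, add_zero] at h
    exact eq_neg_of_add_eq_zero_right h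
  have hK : ∀ y, f y = 0 → b y = 0 := by
    intro y hy
    ext w
    obtain ⟨x, rfl⟩ := hf w
    rw [hpol, hy]; simp
  obtain ⟨s, hs⟩ := f.exists_rightInverse_of_surjective (LinearMap.range_eq_top.2 hf)
  have hs' : ∀ w, f (s w) = w := fun w => LinearMap.congr_fun hs w
  let B : W →ₗ[F] W →ₗ[F] N := b.comp s
  have hbB : ∀ v w, b v w = B (f v) w := by
    intro v w
    have : b (v - s (f v)) = 0 := hK _ (by simp [hs'])
    rw [map_sub, sub_eq_zero] at this
    rw [this]; rfl
  have hBalt : ∀ w, B w w = 0 := by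
    intro w
    have := hb (s w)
    rwa [hs'] at this
  have hBanti : ∀ u v, B u v = - B v u := by
    intro u v
    have h := hBalt (u + v)
    simp only [map_add, LinearMap.add_apply, hBalt, zero_add, add_zero] at h
    exact eq_neg_of_add_eq_zero_right h
  by_cases hcase : ∃ x y, f x = 0 ∧ f y = 0 ∧ c x y ≠ 0
  · obtain ⟨x, y, hx, hy, hxy⟩ := hcase
    set w0 := c x y with hw0
    have h0 : ∀ w, B w w0 = 0 := by
      intro w
      have := hJ x y (s w)
      rw [hK x hx, hK y hy] at this
      rw [LinearMap.zero_apply, LinearMap.zero_apply, zero_add, zero_add] at this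
      exact this
    have h0' : ∀ w, B w0 w = 0 := by
      intro w; rw [hBanti, h0, neg_zero]
    have hq : Module.finrank F (W ⧸ (F ∙ w0)) = 2 := by
      have h1 := Submodule.finrank_quotient_add_finrank (F ∙ w0)
      rw [finrank_span_singleton hxy] at h1
      omega
    let e := Module.finBasisOfFinrankEq F _ hq
    obtain ⟨w1, h1⟩ := Submodule.mkQ_surjective _ (e 0)
    obtain ⟨w2, h2⟩ := Submodule.mkQ_surjective _ (e 1)
    have hgen : ∀ w, ∃ a1 a2 a0 : F, w = a1 • w1 + a2 • w2 + a0 • w0 := by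
      intro w
      have h3 := e.sum_repr ((F ∙ w0).mkQ w)
      rw [Fin.sum_univ_two, ← h1, ← h2, ← map_smul, ← map_smul, ← map_add, eq_comm,
        ← sub_eq_zero, ← map_sub, ← LinearMap.mem_ker, Submodule.ker_mkQ,
        Submodule.mem_span_singleton] at h3
      obtain ⟨a0, h4⟩ := h3
      exact ⟨_, _, a0, by rw [h4]; abel⟩
    apply finrank_le_one (B w1 w2)
    intro n
    have hn : n ∈ Submodule.span F {n | ∃ x w, b x w = n} := by rw [hspan]; trivial
    have hle : Submodule.span F {n | ∃ x w, b x w = n} ≤ F ∙ (B w1 w2) := by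
      rw [Submodule.span_le]
      rintro _ ⟨v, w, rfl⟩
      rw [hbB]
      obtain ⟨a1, a2, a0, h3⟩ := hgen (f v)
      obtain ⟨b1, b2, b0, h4⟩ := hgen w
      rw [h3, h4]
      simp only [map_add, map_smul, LinearMap.add_apply, LinearMap.smul_apply, h0, h0', hBalt,
        smul_zero, add_zero, zero_add]
      rw [hBanti w2 w1]
      apply Submodule.mem_span_singleton.2
      exact ⟨a1 * b2 - a2 * b1, by module⟩
    exact Submodule.mem_span_singleton.1 (hle hn)
  · push Not at hcase
    have hB0 : B = 0 := by
      by_contra hne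
      obtain ⟨u, hu⟩ : ∃ u, B u ≠ 0 := by
        by_contra! h; exact hne (LinearMap.ext h)
      obtain ⟨v, hv⟩ : ∃ v, B u v ≠ 0 := by
        by_contra! h; exact hu (LinearMap.ext h)
      obtain ⟨l, hl⟩ : ∃ l : Module.Dual F N, l (B u v) ≠ 0 := by
        by_contra! h
        exact hv ((Module.forall_dual_apply_eq_zero_iff F _).1 h)
      let A : LinearMap.ker f →ₗ[F] W →ₗ[F] W := 
        (LinearMap.lcomp F W s).comp (c.comp (LinearMap.ker f).subtype)
      have hAapp : ∀ x w, A x w = c x (s w) := fun _ _ => rfl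
      have hAV : ∀ (x : LinearMap.ker f) (v : V), c x v = A x (f v) := by
        intro x v
        have := hcase x (v - s (f v)) x.2 (by simp [hs'])
        rw [map_sub, sub_eq_zero] at this
        exact this
      have := LA_case2 (K := LinearMap.ker f) hW (by
          have := LinearMap.finrank_range_add_finrank_ker f
          rw [LinearMap.range_eq_top.2 hf, finrank_top] at this
          omega) (B.compr₂ l) (fun w => by simp [hBalt]) A (by
          rw [← LinearMap.ker_eq_bot, LinearMap.ker_eq_bot']
          intro x hx
          apply Subtype.ext
          apply hnd
          intro y
          rw [hAV, hx]; rfl) (by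
          intro x y z
          have h := hJ x (s y) (s z)
          rw [hK x x.2, hcanti (s z) x, ← hAapp, ← hAapp] at h
          simp only [LinearMap.zero_apply, zero_add, hbB, hs', map_neg] at h
          rw [neg_add_eq_zero] at h
          simp [h])
      have h2 := LinearMap.congr_fun (LinearMap.congr_fun this u) v
      exact hl h2
    have : (⊤ : Submodule F N) = ⊥ := by
      rw [← hspan, Submodule.span_eq_bot]
      rintro _ ⟨v, w, rfl⟩
      rw [hbB, hB0]; rfl
    rw [← finrank_top, this]; simp

theorem LA_mul (p : ℕ) [hp : Fact p.Prime] {V W N : Type} [CommGroup V] [CommGroup W] [CommGroup N]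
    [Finite V] [Finite W] (hVp : ∀ x : V, x ^ p = 1) (hWp : ∀ x : W, x ^ p = 1)
    (hW : Nat.card W = p ^ 3) (hV : p ^ 10 ≤ Nat.card V)
    (f : V → W) (hfm : ∀ x y, f (x * y) = f x * f y) (hf : Function.Surjective f)
    (c : V → V → W) (hc1 : ∀ x y z, c (x * y) z = c x z * c y z)
    (hc2 : ∀ x y z, c x (y * z) = c x y * c x z) (hcalt : ∀ x, c x x = 1)
    (hnd : ∀ x, (∀ y, c x y = 1) → x = 1)
    (b : V → W → N) (hb1 : ∀ x y z, b (x * y) z = b x z * b y z)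
    (hb2 : ∀ x y z, b x (y * z) = b x y * b x z) (hbf : ∀ x, b x (f x) = 1)
    (hJ : ∀ x y z, b x (c y z) * b y (c z x) * b z (c x y) = 1)
    (hspan : Subgroup.closure {n | ∃ x w, b x w = n} = ⊤) :
    Finite N ∧ Nat.card N ≤ p := by
  have hNp : ∀ n : N, n ^ p = 1 := by
    intro n
    have hn : n ∈ Subgroup.closure {n | ∃ x w, b x w = n} := by rw [hspan]; trivial
    have hle : Subgroup.closure {n | ∃ x w, b x w = n} ≤ (powMonoidHom p : N →* N).ker := by
      rw [Subgroup.closure_le]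
      rintro _ ⟨x, w, rfl⟩
      let bx : W →* N := MonoidHom.mk' (b x) (hb2 x)
      show b x w ^ p = 1
      have : bx w ^ p = bx (w ^ p) := (map_pow bx w p).symm
      rw [hWp, map_one] at this
      exact this
    exact hle hn
  letI : Module (ZMod p) (Additive V) := AddCommGroup.zmodModule (n := p) hVp
  letI : Module (ZMod p) (Additive W) := AddCommGroup.zmodModule (n := p) hWp
  letI : Module (ZMod p) (Additive N) := AddCommGroup.zmodModule (n := p) hNp
  let f' : Additive V →ₗ[ZMod p] Additive W :=
    (AddMonoidHom.mk' (fun v : Additive V => Additive.ofMul (f v.toMul)) hfm).toZModLinearMap p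
  let c' : Additive V →ₗ[ZMod p] Additive V →ₗ[ZMod p] Additive W :=
    AddMonoidHom.toZModLinearMap p (AddMonoidHom.mk' (fun v : Additive V =>
      (AddMonoidHom.mk' (fun v' : Additive V => Additive.ofMul (c v.toMul v'.toMul))
        (hc2 v.toMul)).toZModLinearMap p) (fun x y => LinearMap.ext fun z => hc1 x.toMul y.toMul z.toMul))
  let b' : Additive V →ₗ[ZMod p] Additive W →ₗ[ZMod p] Additive N :=
    AddMonoidHom.toZModLinearMap p (AddMonoidHom.mk' (fun v : Additive V =>
      (AddMonoidHom.mk' (fun v' : Additive W => Additive.ofMul (b v.toMul v'.toMul))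
        (hb2 v.toMul)).toZModLinearMap p) (fun x y => LinearMap.ext fun z => hb1 x.toMul y.toMul z.toMul))
  haveI : Finite (Additive V) := inferInstanceAs (Finite V)
  haveI : Finite (Additive W) := inferInstanceAs (Finite W)
  have hp1 := hp.out.one_lt
  have cW := Module.natCard_eq_pow_finrank (K := ZMod p) (V := Additive W)
  have cV := Module.natCard_eq_pow_finrank (K := ZMod p) (V := Additive V)
  rw [Nat.card_zmod] at cW cV
  have hW3 : Module.finrank (ZMod p) (Additive W) = 3 := by
    have : Nat.card (Additive W) = p ^ 3 := hW
    rw [this] at cW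
    exact (Nat.pow_right_injective hp1 cW).symm
  have hV10 : 10 ≤ Module.finrank (ZMod p) (Additive V) := by
    have : p ^ 10 ≤ Nat.card (Additive V) := hV
    rw [cV] at this
    exact (Nat.pow_le_pow_iff_right hp1).1 this
  have hsp : Submodule.span (ZMod p) {n | ∃ x w, b' x w = n} = ⊤ := by
    rw [eq_top_iff]
    intro n _
    have hn : n.toMul ∈ Subgroup.closure {n | ∃ x w, b x w = n} := by rw [hspan]; trivial
    have hle : Subgroup.closure {n | ∃ x w, b x w = n} ≤
        AddSubgroup.toSubgroup' (Submodule.span (ZMod p) {n | ∃ x w, b' x w = n}).toAddSubgroup := by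
      rw [Subgroup.closure_le]
      rintro _ ⟨x, w, rfl⟩
      exact Submodule.subset_span (R := ZMod p) (M := Additive N)
        (s := {n | ∃ x w, b' x w = n}) ⟨Additive.ofMul x, Additive.ofMul w, rfl⟩
    exact hle hn
  have hfr := LA hW3 hV10 f' hf c' hcalt hnd b' hbf hJ hsp
  haveI : Module.Finite (ZMod p) (Additive N) := by
    refine ⟨?_⟩
    rw [← hsp]
    apply Submodule.fg_span
    have : {n | ∃ x w, b' x w = n} = Set.range (fun q : Additive V × Additive W => b' q.1 q.2) := by
      ext n; simp
    rw [this]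
    exact Set.finite_range _
  have hfin : Finite (Additive N) := Module.finite_of_finite (ZMod p)
  refine ⟨hfin, ?_⟩
  have cN := Module.natCard_eq_pow_finrank (K := ZMod p) (V := Additive N)
  rw [Nat.card_zmod] at cN
  calc Nat.card N = p ^ Module.finrank (ZMod p) (Additive N) := cN
    _ ≤ p ^ 1 := Nat.pow_le_pow_right hp1.le hfr
    _ = p := pow_one p

theorem card_closure_le (p : ℕ) [hp : Fact p.Prime] {C ι : Type} [CommGroup C] [Fintype ι]
    (y : ι → C) (hy : ∀ i, y i ^ p = 1) :
    Finite (Subgroup.closure (Set.range y)) ∧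
      Nat.card (Subgroup.closure (Set.range y)) ≤ p ^ Fintype.card ι := by
  classical
  let Φ : Multiplicative (ι → ZMod p) →* C :=
    MonoidHom.mk' (fun a => ∏ i, y i ^ (a.toAdd i).val) (by
      intro a b
      rw [← Finset.prod_mul_distrib]
      refine Finset.prod_congr rfl fun i _ => ?_
      rw [← pow_add, toAdd_mul, Pi.add_apply, ZMod.val_add, ← pow_eq_pow_mod _ (hy i)])
  have hle : Subgroup.closure (Set.range y) ≤ Φ.range := by
    rw [Subgroup.closure_le]
    rintro _ ⟨i, rfl⟩
    refine ⟨Multiplicative.ofAdd (Pi.single i 1), ?_⟩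
    show ∏ j, y j ^ ((Pi.single i 1 : ι → ZMod p) j).val = y i
    rw [Finset.prod_eq_single i]
    · haveI : Fact (1 < p) := ⟨hp.out.one_lt⟩
      simp [ZMod.val_one]
    · intro j _ hj
      simp [Pi.single_eq_of_ne hj]
    · simp
  have hs : Function.Surjective Φ.rangeRestrict := Φ.rangeRestrict_surjective
  haveI : Finite (Multiplicative (ι → ZMod p)) := inferInstanceAs (Finite (ι → ZMod p))
  haveI : Finite Φ.range := Finite.of_surjective _ hs
  have h1 := Nat.card_le_card_of_surjective _ hs
  have h2 : Nat.card (Multiplicative (ι → ZMod p)) = p ^ Fintype.card ι := by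
    have : Nat.card (ι → ZMod p) = p ^ Fintype.card ι := by
      rw [Nat.card_fun, Nat.card_zmod, Nat.card_eq_fintype_card]
    exact this
  have hinj := Subgroup.inclusion_injective hle
  exact ⟨Finite.of_injective _ hinj, (Nat.card_le_card_of_injective _ hinj).trans (h1.trans h2.le)⟩

theorem card_alt_le (p : ℕ) [hp : Fact p.Prime] {G C : Type} [Group G] [CommGroup C]
    (e : G → G → C) (h1 : ∀ x y z, e (x * y) z = e x z * e y z)
    (h2 : ∀ x y z, e x (y * z) = e x y * e x z) (halt : ∀ x, e x x = 1)
    (hep : ∀ x y, e x y ^ p = 1) (S : Finset G) (hS : Subgroup.closure (S : Set G) = ⊤) :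
    ∃ D : Subgroup C, (∀ x y, e x y ∈ D) ∧ Finite D ∧ Nat.card D ≤ p ^ (S.card.choose 2) := by
  classical
  let ι := {a : Sym2 S // ¬ a.IsDiag}
  let y : ι → C := fun a => e a.1.out.1 a.1.out.2
  have hanti : ∀ x z, e x z = (e z x)⁻¹ := by
    intro x z
    have := halt (x * z)
    rw [h1, h2, h2, halt, halt, one_mul, mul_one] at this
    exact eq_inv_of_mul_eq_one_left this
  let D := Subgroup.closure (Set.range y)
  obtain ⟨hf, hc⟩ := card_closure_le p y (fun i => hep _ _)
  refine ⟨D, ?_, hf, ?_⟩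
  · have key : ∀ s ∈ S, ∀ t ∈ S, e s t ∈ D := by
      intro s hs t ht
      by_cases hst : s = t
      · subst hst; rw [halt]; exact one_mem _
      let z : ι := ⟨s(⟨s, hs⟩, ⟨t, ht⟩), by simpa using hst⟩
      have hz : y z ∈ D := Subgroup.subset_closure ⟨z, rfl⟩
      have hout : s(z.1.out.1, z.1.out.2) = s((⟨s, hs⟩ : S), (⟨t, ht⟩ : S)) := Quot.out_eq z.1
      rw [Sym2.eq_iff] at hout
      have hy : y z = e z.1.out.1 z.1.out.2 := rfl
      rcases hout with ⟨ha, hb⟩ | ⟨ha, hb⟩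
      · rw [ha, hb] at hy
        rw [hy] at hz; exact hz
      · rw [ha, hb] at hy
        rw [hanti, ← inv_mem_iff, inv_inv]
        rw [hy] at hz; exact hz
    have key2 : ∀ s ∈ S, ∀ t, e s t ∈ D := by
      intro s hs t
      let es : G →* C := MonoidHom.mk' (e s) (h2 s)
      have : Subgroup.closure (S : Set G) ≤ D.comap es := by
        rw [Subgroup.closure_le]
        exact fun t ht => key s hs t ht
      exact this (by rw [hS]; trivial)
    intro x t
    let es : G →* C := MonoidHom.mk' (fun x => e x t) (fun a b => h1 a b t)
    have : Subgroup.closure (S : Set G) ≤ D.comap es := by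
      rw [Subgroup.closure_le]
      exact fun s hs => key2 s hs t
    exact this (show x ∈ _ by rw [hS]; trivial)
  · have : Fintype.card ι = S.card.choose 2 := by
      rw [Sym2.card_subtype_not_diag, Fintype.card_coe]
    rw [← this]; exact hc


section grp
variable {H : Type} [Group H]

theorem comm_mul_left' {x y t : H} (h : ⁅y, t⁆ ∈ Subgroup.center H) :
    ⁅x * y, t⁆ = ⁅x, t⁆ * ⁅y, t⁆ := by
  have e : ⁅x * y, t⁆ = x * ⁅y, t⁆ * x⁻¹ * ⁅x, t⁆ := by
    simp [commutatorElement_def, mul_assoc]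
  have hc := Subgroup.mem_center_iff.1 h
  rw [e, hc x, mul_inv_cancel_right, hc]

theorem comm_mul_right' {x t s : H} (h : ⁅x, s⁆ ∈ Subgroup.center H) :
    ⁅x, t * s⁆ = ⁅x, t⁆ * ⁅x, s⁆ := by
  have e : ⁅x, t * s⁆ = ⁅x, t⁆ * (t * ⁅x, s⁆ * t⁻¹) := by
    simp [commutatorElement_def, mul_assoc]
  have hc := Subgroup.mem_center_iff.1 h
  rw [e, hc t, mul_inv_cancel_right]

theorem comm_center_right {x r : H} (h : r ∈ Subgroup.center H) : ⁅x, r⁆ = 1 :=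
  commutatorElement_eq_one_iff_mul_comm.2 (Subgroup.mem_center_iff.1 h x)

theorem comm_center_left {x r : H} (h : r ∈ Subgroup.center H) : ⁅r, x⁆ = 1 :=
  commutatorElement_eq_one_iff_mul_comm.2 (Subgroup.mem_center_iff.1 h x).symm

theorem comm_mem (x y : H) : ⁅x, y⁆ ∈ commutator H :=
  Subgroup.commutator_mem_commutator (Subgroup.mem_top x) (Subgroup.mem_top y)

/-- In class two, powers come out of commutators. -/
theorem comm_pow_left (h2 : ∀ x y : H, ⁅x, y⁆ ∈ Subgroup.center H) (x y : H) (n : ℕ) :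
    ⁅x ^ n, y⁆ = ⁅x, y⁆ ^ n := by
  induction n with
  | zero => simp
  | succ n ih => rw [pow_succ, comm_mul_left' (h2 _ _), ih, pow_succ]

theorem mul_pow_class2 (h2 : ∀ x y : H, ⁅x, y⁆ ∈ Subgroup.center H) (x y : H) (n : ℕ) :
    (x * y) ^ n = x ^ n * y ^ n * ⁅y, x⁆ ^ (n.choose 2) := by
  induction n with
  | zero => simp
  | succ n ih =>
    have hc : ∀ k : ℕ, ∀ g, g * ⁅y, x⁆ ^ k = ⁅y, x⁆ ^ k * g := fun k g =>
      Subgroup.mem_center_iff.1 (pow_mem (h2 y x) k) g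
    have hyx : y ^ n * x = x * y ^ n * ⁅y, x⁆ ^ n := by
      rw [← comm_pow_left h2, (Subgroup.mem_center_iff.1 (h2 (y ^ n) x) (x * y ^ n))]
      simp [commutatorElement_def, mul_assoc]
    rw [pow_succ (x * y) n, ih, Nat.choose_succ_succ, Nat.choose_one_right, pow_add ⁅y, x⁆,
      pow_succ x n, pow_succ y n, mul_assoc, ← hc]
    calc x ^ n * y ^ n * (x * y * ⁅y, x⁆ ^ n.choose 2)
        = x ^ n * (y ^ n * x) * y * ⁅y, x⁆ ^ n.choose 2 := by simp only [mul_assoc]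
      _ = x ^ n * x * y ^ n * (⁅y, x⁆ ^ n * y) * ⁅y, x⁆ ^ n.choose 2 := by
          rw [hyx]; simp only [mul_assoc]
      _ = _ := by rw [← hc]; simp only [mul_assoc]

end grp

open scoped IsMulCommutative in
set_option maxHeartbeats 1000000 in
theorem main_group (p : ℕ) [hp : Fact p.Prime] (hodd : p ≠ 2) {G H : Type} [Group G] [Finite G]
    [Group H] (π : H →* G) (hπ : Function.Surjective π) (hcen : π.ker ≤ Subgroup.center H)
    (hzc : Subgroup.center G = commutator G)
    (hz : Nat.card (Subgroup.center G) = p ^ 3)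
    (hbig : p ^ 13 ≤ Nat.card G)
    (hGp : Subgroup.closure (Set.range fun x : G => x ^ p) = commutator G)
    (S : Finset G) (hS : Subgroup.closure (S : Set G) = ⊤) :
    Finite (commutator H) ∧
      Nat.card (π.ker ⊓ commutator H : Subgroup H) * p ^ 3 ≤ p ^ (S.card.choose 2) * p := by
  classical
  -- facts about `G`
  have g2 : ∀ x y : G, ⁅x, y⁆ ∈ Subgroup.center G := fun x y => by
    rw [hzc]; exact comm_mem x y
  have gpow : ∀ x : G, x ^ p ∈ Subgroup.center G := fun x => by
    rw [hzc, ← hGp]; exact Subgroup.subset_closure ⟨x, rfl⟩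
  have zexp : ∀ w : Subgroup.center G, w ^ p = 1 := by
    let P : Subgroup G :=
      { carrier := {g | g ∈ Subgroup.center G ∧ g ^ p = 1}
        one_mem' := ⟨one_mem _, one_pow p⟩
        mul_mem' := fun {x y} hx hy => ⟨mul_mem hx.1 hy.1, by
          have h : Commute x y := Subgroup.mem_center_iff.1 hy.1 x
          rw [h.mul_pow, hx.2, hy.2, one_mul]⟩
        inv_mem' := fun {x} hx => ⟨inv_mem hx.1, by rw [inv_pow, hx.2, inv_one]⟩ }
    have hle : commutator G ≤ P := by
      rw [commutator_def, Subgroup.commutator_le]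
      intro x _ y _
      refine ⟨g2 x y, ?_⟩
      rw [← comm_pow_left g2]
      exact comm_center_left (gpow x)
    intro w
    have hw : (w : G) ∈ commutator G := by rw [← hzc]; exact w.2
    exact Subtype.ext (hle hw).2
  have pmul : ∀ x y : G, (x * y) ^ p = x ^ p * y ^ p := by
    intro x y
    have hdvd : p ∣ p.choose 2 :=
      hp.out.dvd_choose_self (by norm_num) (lt_of_le_of_ne hp.out.two_le (Ne.symm hodd))
    obtain ⟨k, hk⟩ := hdvd
    have h1 : ⁅y, x⁆ ^ p = 1 := congrArg Subtype.val (zexp ⟨⁅y, x⁆, g2 y x⟩)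
    rw [mul_pow_class2 g2, hk, pow_mul, h1, one_pow, mul_one]
  -- facts about `H`
  have hR : ∀ h t : H, π t ∈ Subgroup.center G → ⁅h, t⁆ ∈ Subgroup.center H := by
    intro h t ht
    apply hcen
    rw [MonoidHom.mem_ker, map_commutatorElement]
    exact comm_center_right ht
  have hTT : ∀ t t' : H, π t ∈ Subgroup.center G → π t' ∈ Subgroup.center G → ⁅t', t⁆ = 1 := by
    intro t t' ht ht'
    let ct : H →* Subgroup.center H := MonoidHom.mk' (fun h => ⟨⁅h, t⁆, hR h t ht⟩)
      (fun x y => Subtype.ext (comm_mul_left' (hR y t ht)))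
    have h1 : commutator H ≤ ct.ker := by
      rw [commutator_def, Subgroup.commutator_le]
      intro x _ y _
      rw [MonoidHom.mem_ker, map_commutatorElement]
      exact commutatorElement_eq_one_iff_mul_comm.2
        (Subtype.ext (Subgroup.mem_center_iff.1 (ct y).2 (ct x)))
    have h3 : π t' ∈ (commutator H).map π := by
      rw [commutator_def, Subgroup.map_commutator, Subgroup.map_top_of_surjective π hπ,
        ← commutator_def, ← hzc]
      exact ht'
    obtain ⟨k, hk, hk2⟩ := h3
    have h4 : k⁻¹ * t' ∈ Subgroup.center H := hcen (by
      rw [MonoidHom.mem_ker, map_mul, map_inv, hk2, inv_mul_cancel])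
    have h5 : ct t' = 1 := by
      have : t' = k * (k⁻¹ * t') := by group
      rw [this, map_mul, MonoidHom.mem_ker.1 (h1 hk), one_mul]
      exact Subtype.ext (comm_center_left h4)
    exact congrArg Subtype.val h5
  -- the spaces
  let V := Abelianization G
  have ofs : ∀ v : V, ∃ g : G, Abelianization.of g = v := fun v => QuotientGroup.mk_surjective v
  have ofeq : ∀ x y : G, Abelianization.of x = Abelianization.of y →
      ∃ z ∈ Subgroup.center G, y = x * z := by
    intro x y hxy
    refine ⟨x⁻¹ * y, ?_, by group⟩
    rw [hzc, ← Abelianization.ker_of, MonoidHom.mem_ker, map_mul, map_inv, hxy, inv_mul_cancel]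
  choose s hs using ofs
  choose τ hτ using hπ
  let f : V → Subgroup.center G := fun v => ⟨s v ^ p, gpow _⟩
  have hf : ∀ x, f (Abelianization.of x) = ⟨x ^ p, gpow x⟩ := by
    intro x
    obtain ⟨z, hz, h⟩ := ofeq x (s (Abelianization.of x)) (hs _).symm
    refine Subtype.ext ?_
    show s (Abelianization.of x) ^ p = x ^ p
    have h1 : z ^ p = 1 := congrArg Subtype.val (zexp ⟨z, hz⟩)
    rw [h, pmul, h1, mul_one]
  let c : V → V → Subgroup.center G := fun v v' => ⟨⁅s v, s v'⁆, g2 _ _⟩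
  have hc : ∀ x y, c (Abelianization.of x) (Abelianization.of y) = ⟨⁅x, y⁆, g2 x y⟩ := by
    intro x y
    obtain ⟨z, hz, h⟩ := ofeq x (s (Abelianization.of x)) (hs _).symm
    obtain ⟨z', hz', h'⟩ := ofeq y (s (Abelianization.of y)) (hs _).symm
    refine Subtype.ext ?_
    show ⁅s (Abelianization.of x), s (Abelianization.of y)⁆ = ⁅x, y⁆
    rw [h, h', comm_mul_left' (g2 _ _), comm_center_left hz, mul_one, comm_mul_right' (g2 _ _),
      comm_center_right hz', mul_one]
  let b0 : V → Subgroup.center G → Subgroup.center H := fun v w =>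
    ⟨⁅τ (s v), τ w⁆, hR _ _ (by rw [hτ]; exact w.2)⟩
  have hb0 : ∀ h t (ht : π t ∈ Subgroup.center G),
      b0 (Abelianization.of (π h)) ⟨π t, ht⟩ = ⟨⁅h, t⁆, hR h t ht⟩ := by
    intro h t ht
    refine Subtype.ext ?_
    show ⁅τ (s (Abelianization.of (π h))), τ (π t)⁆ = ⁅h, t⁆
    obtain ⟨z, hz, hzz⟩ := ofeq (π h) (s (Abelianization.of (π h))) (hs _).symm
    have h1 : t⁻¹ * τ (π t) ∈ Subgroup.center H := hcen (by
      rw [MonoidHom.mem_ker, map_mul, map_inv, hτ, inv_mul_cancel])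
    have h2 : π (h⁻¹ * τ (s (Abelianization.of (π h)))) ∈ Subgroup.center G := by
      rw [map_mul, hτ, hzz, map_inv, inv_mul_cancel_left]; exact hz
    have e1 : τ (π t) = t * (t⁻¹ * τ (π t)) := by group
    have e2 : τ (s (Abelianization.of (π h))) = h * (h⁻¹ * τ (s (Abelianization.of (π h)))) := by
      group
    rw [e1, comm_mul_right' (by rw [comm_center_right h1]; exact one_mem _),
      comm_center_right h1, mul_one, e2, comm_mul_left' (hR _ _ ht), hTT _ _ ht h2, mul_one]
  have vrep : ∀ v : V, ∃ h : H, Abelianization.of (π h) = v := fun v =>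
    ⟨τ (s v), by rw [hτ, hs]⟩
  have wrep : ∀ w : Subgroup.center G, ∃ (t : H) (ht : π t ∈ Subgroup.center G), ⟨π t, ht⟩ = w :=
    fun w => ⟨τ w, by rw [hτ]; exact w.2, Subtype.ext (hτ w)⟩
  let L : Subgroup (Subgroup.center H) := Subgroup.closure {n | ∃ x w, b0 x w = n}
  let b : V → Subgroup.center G → L := fun x w => ⟨b0 x w, Subgroup.subset_closure ⟨x, w, rfl⟩⟩
  have hb0mul1 : ∀ x y z, b0 (x * y) z = b0 x z * b0 y z := by
    intro x y z
    obtain ⟨x, rfl⟩ := vrep x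
    obtain ⟨y, rfl⟩ := vrep y
    obtain ⟨z, hz, rfl⟩ := wrep z
    rw [← map_mul, ← map_mul, hb0, hb0, hb0]
    exact Subtype.ext (comm_mul_left' (hR _ _ hz))
  have hb0mul2 : ∀ x y z, b0 x (y * z) = b0 x y * b0 x z := by
    intro x y z
    obtain ⟨x, rfl⟩ := vrep x
    obtain ⟨y, hy, rfl⟩ := wrep y
    obtain ⟨z, hz, rfl⟩ := wrep z
    have : (⟨π y, hy⟩ * ⟨π z, hz⟩ : Subgroup.center G) =
      ⟨π (y * z), by rw [map_mul]; exact mul_mem hy hz⟩ := Subtype.ext (map_mul π y z).symm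
    rw [this, hb0, hb0, hb0]
    exact Subtype.ext (comm_mul_right' (hR _ _ hz))
  have hVcard : p ^ 10 ≤ Nat.card V := by
    have h1 := Subgroup.card_eq_card_quotient_mul_card_subgroup (commutator G)
    rw [← hzc, hz] at h1
    have h2 : Nat.card (G ⧸ Subgroup.center G) = Nat.card V := by rw [hzc]; rfl
    rw [h1, h2] at hbig
    have h3 : p ^ 10 * p ^ 3 ≤ Nat.card V * p ^ 3 := by rw [← pow_add]; exact hbig
    exact Nat.le_of_mul_le_mul_right h3 (pow_pos hp.out.pos 3)
  have hcfun : ∀ x y (h : ⁅π x, π y⁆ ∈ Subgroup.center G),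
      (⟨⁅π x, π y⁆, h⟩ : Subgroup.center G) = ⟨π ⁅x, y⁆, by
        rw [map_commutatorElement]; exact h⟩ :=
    fun x y h => Subtype.ext (map_commutatorElement π x y).symm
  haveI : Finite V := inferInstanceAs (Finite (G ⧸ _))
  obtain ⟨hLf, hLc⟩ := LA_mul p (V := V) (W := Subgroup.center G) (N := L)
    (by
      intro v
      obtain ⟨x, rfl⟩ : ∃ x, Abelianization.of x = v := ⟨s v, hs v⟩
      rw [← map_pow, ← MonoidHom.mem_ker, Abelianization.ker_of, ← hzc]
      exact gpow x)
    zexp hz hVcard f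
    (by
      intro x y
      obtain ⟨x, rfl⟩ : ∃ x', Abelianization.of x' = x := ⟨s x, hs x⟩
      obtain ⟨y, rfl⟩ : ∃ x', Abelianization.of x' = y := ⟨s y, hs y⟩
      rw [← map_mul, hf, hf, hf]
      exact Subtype.ext (pmul x y))
    (by
      let fh : G →* G := MonoidHom.mk' (fun x => x ^ p) pmul
      have hle : commutator G ≤ fh.range := by
        rw [← hGp, Subgroup.closure_le]
        rintro _ ⟨x, rfl⟩
        exact ⟨x, rfl⟩
      intro w
      obtain ⟨x, hx⟩ := hle (show (w : G) ∈ commutator G by rw [← hzc]; exact w.2)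
      refine ⟨Abelianization.of x, ?_⟩
      rw [hf]
      exact Subtype.ext hx)
    c
    (by
      intro x y z
      obtain ⟨x, rfl⟩ : ∃ x', Abelianization.of x' = x := ⟨s x, hs x⟩
      obtain ⟨y, rfl⟩ : ∃ x', Abelianization.of x' = y := ⟨s y, hs y⟩
      obtain ⟨z, rfl⟩ : ∃ x', Abelianization.of x' = z := ⟨s z, hs z⟩
      rw [← map_mul, hc, hc, hc]
      exact Subtype.ext (comm_mul_left' (g2 _ _)))
    (by
      intro x y z
      obtain ⟨x, rfl⟩ : ∃ x', Abelianization.of x' = x := ⟨s x, hs x⟩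
      obtain ⟨y, rfl⟩ : ∃ x', Abelianization.of x' = y := ⟨s y, hs y⟩
      obtain ⟨z, rfl⟩ : ∃ x', Abelianization.of x' = z := ⟨s z, hs z⟩
      rw [← map_mul, hc, hc, hc]
      exact Subtype.ext (comm_mul_right' (g2 _ _)))
    (fun x => Subtype.ext (commutatorElement_self _))
    (by
      intro x hx
      obtain ⟨x, rfl⟩ : ∃ x', Abelianization.of x' = x := ⟨s x, hs x⟩
      rw [← MonoidHom.mem_ker, Abelianization.ker_of, ← hzc, Subgroup.mem_center_iff]
      intro y
      have := hx (Abelianization.of y)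
      rw [hc] at this
      have h2 : ⁅x, y⁆ = 1 := congrArg Subtype.val this
      exact (commutatorElement_eq_one_iff_mul_comm.1 h2).symm)
    b (fun x y z => Subtype.ext (hb0mul1 x y z)) (fun x y z => Subtype.ext (hb0mul2 x y z))
    (by
      intro x
      refine Subtype.ext ?_
      show b0 x (f x) = 1
      obtain ⟨x, rfl⟩ := vrep x
      rw [hf]
      have : (⟨π x ^ p, gpow (π x)⟩ : Subgroup.center G) =
        ⟨π (x ^ p), by rw [map_pow]; exact gpow _⟩ := Subtype.ext (map_pow π x p).symm
      rw [this, hb0]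
      refine Subtype.ext ?_
      exact commutatorElement_eq_one_iff_commute.2 (Commute.self_pow x p))
    (by
      intro x y z
      refine Subtype.ext ?_
      show b0 x (c y z) * b0 y (c z x) * b0 z (c x y) = 1
      obtain ⟨x, rfl⟩ := vrep x
      obtain ⟨y, rfl⟩ := vrep y
      obtain ⟨z, rfl⟩ := vrep z
      have hconj : ∀ a b : H, Abelianization.of (π b) = Abelianization.of (π (a * b * a⁻¹)) := by
        intro a b
        simp only [map_mul, map_inv]
        rw [mul_comm, inv_mul_cancel_left]
      rw [hc, hc, hc, hcfun, hcfun, hcfun, mul_comm (b0 _ _)]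
      rw [hconj x y, hconj z x, hconj y z]
      rw [hb0, hb0, hb0]
      exact Subtype.ext (commutatorElement_conj_commutatorElement_mul x y z))
    (by
      have := Subgroup.closure_closure_coe_preimage (k := {n | ∃ x w, b0 x w = n})
      rw [← this]
      congr 1
      ext n
      exact ⟨fun ⟨x, w, h⟩ => ⟨x, w, congrArg Subtype.val h⟩,
        fun ⟨x, w, h⟩ => ⟨x, w, Subtype.ext h⟩⟩)
  -- the quotient of `H` by the third term of the lower central series
  let N : Subgroup H := L.map (Subgroup.center H).subtype
  have hNc : N ≤ Subgroup.center H := by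
    rintro _ ⟨x, _, rfl⟩; exact x.2
  haveI hNn : N.Normal := ⟨fun n hn g => by
    rw [Subgroup.mem_center_iff.1 (hNc hn) g, mul_inv_cancel_right]; exact hn⟩
  have hNf : Finite N := (Set.Finite.image _ (Set.toFinite (L : Set (Subgroup.center H)))).to_subtype
  have hNcard : Nat.card N ≤ p := by
    have : Nat.card N = Nat.card L :=
      (Nat.card_congr (L.equivMapOfInjective _ Subtype.val_injective).toEquiv).symm
    rw [this]; exact hLc
  have hNmem : ∀ h t : H, π t ∈ Subgroup.center G → ⁅h, t⁆ ∈ N := by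
    intro h t ht
    exact ⟨⟨⁅h, t⁆, hR h t ht⟩, Subgroup.subset_closure
      ⟨Abelianization.of (π h), ⟨π t, ht⟩, hb0 h t ht⟩, rfl⟩
  let q : H →* H ⧸ N := QuotientGroup.mk' N
  have hq : Function.Surjective q := QuotientGroup.mk'_surjective N
  have hqT : ∀ t, π t ∈ Subgroup.center G → q t ∈ Subgroup.center (H ⧸ N) := by
    intro t ht
    rw [Subgroup.mem_center_iff]
    intro k
    obtain ⟨h, rfl⟩ := hq k
    rw [← commutatorElement_eq_one_iff_mul_comm, ← map_commutatorElement, ← MonoidHom.mem_ker,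
      QuotientGroup.ker_mk']
    exact hNmem h t ht
  have k2 : ∀ x y : H ⧸ N, ⁅x, y⁆ ∈ Subgroup.center (H ⧸ N) := by
    intro x y
    obtain ⟨x, rfl⟩ := hq x
    obtain ⟨y, rfl⟩ := hq y
    rw [← map_commutatorElement]
    apply hqT
    rw [map_commutatorElement]; exact g2 _ _
  let e : G → G → Subgroup.center (H ⧸ N) := fun x y => ⟨⁅q (τ x), q (τ y)⁆, k2 _ _⟩
  have he : ∀ x y, e (π x) (π y) = ⟨⁅q x, q y⁆, k2 _ _⟩ := by
    intro x y
    refine Subtype.ext ?_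
    show ⁅q (τ (π x)), q (τ (π y))⁆ = ⁅q x, q y⁆
    have h1 : ∀ t, q (t⁻¹ * τ (π t)) ∈ Subgroup.center (H ⧸ N) := fun t => hqT _ (by
      rw [map_mul, map_inv, hτ, inv_mul_cancel]; exact one_mem _)
    have e1 : ∀ t, q (τ (π t)) = q t * q (t⁻¹ * τ (π t)) := fun t => by
      rw [← map_mul, mul_inv_cancel_left]
    rw [e1 x, e1 y, comm_mul_left' (k2 _ _), comm_center_left (h1 x), mul_one,
      comm_mul_right' (k2 _ _), comm_center_right (h1 y), mul_one]
  have hrep : ∀ g : G, ∃ h, π h = g := fun g => ⟨τ g, hτ g⟩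
  obtain ⟨D, hD1, hD2, hD3⟩ := card_alt_le p e
    (by
      intro x y z
      obtain ⟨x, rfl⟩ := hrep x
      obtain ⟨y, rfl⟩ := hrep y
      obtain ⟨z, rfl⟩ := hrep z
      rw [← map_mul, he, he, he]
      refine Subtype.ext ?_
      show ⁅q (x * y), q z⁆ = _
      rw [map_mul]
      exact comm_mul_left' (k2 _ _))
    (by
      intro x y z
      obtain ⟨x, rfl⟩ := hrep x
      obtain ⟨y, rfl⟩ := hrep y
      obtain ⟨z, rfl⟩ := hrep z
      rw [← map_mul, he, he, he]
      refine Subtype.ext ?_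
      show ⁅q x, q (y * z)⁆ = _
      rw [map_mul]
      exact comm_mul_right' (k2 _ _))
    (fun x => Subtype.ext (commutatorElement_self _))
    (by
      intro x y
      refine Subtype.ext ?_
      show ⁅q (τ x), q (τ y)⁆ ^ p = 1
      rw [← comm_pow_left k2, ← map_pow]
      apply comm_center_left
      apply hqT
      rw [map_pow]; exact gpow _)
    S hS
  let D' : Subgroup (H ⧸ N) := D.map (Subgroup.center (H ⧸ N)).subtype
  have hD'f : Finite D' :=
    (Set.Finite.image _ (Set.toFinite (D : Set (Subgroup.center (H ⧸ N))))).to_subtype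
  have hD'card : Nat.card D' ≤ p ^ (S.card.choose 2) := by
    have : Nat.card D' = Nat.card D :=
      (Nat.card_congr (D.equivMapOfInjective _ Subtype.val_injective).toEquiv).symm
    rw [this]; exact hD3
  have hHD : ∀ h ∈ commutator H, q h ∈ D' := by
    have : commutator H ≤ D'.comap q := by
      rw [commutator_def, Subgroup.commutator_le]
      intro x _ y _
      refine ⟨e (π x) (π y), hD1 _ _, ?_⟩
      rw [he]
      exact (map_commutatorElement q x y).symm
    exact this
  -- counting
  let qr : commutator H →* D' := (q.comp (commutator H).subtype).codRestrict D'
    (fun h => hHD h h.2)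
  have hkf : ∀ x : qr.ker, ((x : commutator H) : H) ∈ N := by
    intro x
    have := congrArg Subtype.val (MonoidHom.mem_ker.1 x.2)
    exact (QuotientGroup.eq_one_iff _).1 this
  let j : qr.ker → N := fun x => ⟨_, hkf x⟩
  have hj : Function.Injective j := fun x y h =>
    Subtype.ext (Subtype.ext (congrArg (fun n : N => (n : H)) h))
  haveI : Finite qr.ker := Finite.of_injective j hj
  haveI : Finite qr.range := inferInstance
  have hfin : Finite (commutator H) := by
    have : Finite (commutator H ⧸ qr.ker) :=
      Finite.of_equiv _ (QuotientGroup.quotientKerEquivRange qr).symm.toEquiv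
    exact Finite.of_subgroup_quotient qr.ker
  refine ⟨hfin, ?_⟩
  have hcard1 : Nat.card (commutator H) ≤ p ^ (S.card.choose 2) * p := by
    rw [Subgroup.card_eq_card_quotient_mul_card_subgroup qr.ker]
    refine Nat.mul_le_mul ?_ ((Nat.card_le_card_of_injective j hj).trans hNcard)
    rw [Nat.card_congr (QuotientGroup.quotientKerEquivRange qr).toEquiv]
    exact (Subgroup.card_le_card_group _).trans hD'card
  refine le_trans (le_of_eq ?_) hcard1
  let r : commutator H →* G := π.comp (commutator H).subtype
  rw [Subgroup.card_eq_card_quotient_mul_card_subgroup r.ker, mul_comm]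
  have hr1 : Nat.card (commutator H ⧸ r.ker) = p ^ 3 := by
    rw [Nat.card_congr (QuotientGroup.quotientKerEquivRange r).toEquiv]
    have : r.range = Subgroup.center G := by
      rw [MonoidHom.range_comp, Subgroup.range_subtype, commutator_def, Subgroup.map_commutator,
        Subgroup.map_top_of_surjective π (fun g => hrep g), ← commutator_def, hzc]
    rw [this, hz]
  rw [hr1]
  congr 1
  refine Nat.card_congr ⟨fun x => ⟨⟨x, x.2.2⟩, x.2.1⟩, fun x => ⟨x.1, x.2, x.1.2⟩,
    fun x => rfl, fun x => rfl⟩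

end SchurAux

/-- Corollary 3, second part: if moreover `G₂ᵖ = γ₂(G₂)`, then
`|M(G₂)| ≤ p ^ (d * (d - 1) / 2 - 2)`. -/
theorem schur_multiplier_bound_special_center_p_cube_large_Gp (p d : ℕ) (hp : p.Prime)
    (hodd : p ≠ 2)
    (G : Type) [Group G] [Finite G] [Group.IsNilpotent G]
    (hpG : IsPGroup p G)
    (hc : Group.nilpotencyClass G = 2)
    (hzc : Subgroup.center G = commutator G)
    (hzf : Subgroup.center G = frattini G)
    (hz : Nat.card (Subgroup.center G) = p ^ 3)
    (hbig : p ^ 13 ≤ Nat.card G)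
    (hGp : Subgroup.closure (Set.range fun x : G => x ^ p) = commutator G)
    (hd : Group.rank G = d) :
    (Nat.card (schurMultiplier G) : ℝ) ≤ (p : ℝ) ^ ((d : ℝ) * ((d : ℝ) - 1) / 2 - 2) := by

  haveI : Fact p.Prime := ⟨hp⟩
  obtain ⟨S, hScard, hS⟩ := Group.rank_spec G
  let π : FreeGroup G →* G := FreeGroup.lift id
  let Q : Subgroup (FreeGroup G) := ⁅π.ker, (⊤ : Subgroup (FreeGroup G))⁆
  have hQ : Q ≤ π.ker := Subgroup.commutator_le_left _ _
  let π' : FreeGroup G ⧸ Q →* G := QuotientGroup.lift Q π hQ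
  have hπ' : Function.Surjective π' := fun g =>
    ⟨(FreeGroup.of g : FreeGroup G), by simp [π', π]⟩
  have hcen : π'.ker ≤ Subgroup.center (FreeGroup G ⧸ Q) := by
    intro x hx
    obtain ⟨x, rfl⟩ := QuotientGroup.mk'_surjective Q x
    have hx' : x ∈ π.ker := hx
    rw [Subgroup.mem_center_iff]
    intro y
    obtain ⟨y, rfl⟩ := QuotientGroup.mk'_surjective Q y
    refine (commutatorElement_eq_one_iff_mul_comm.1 ?_).symm
    rw [← map_commutatorElement, ← MonoidHom.mem_ker, QuotientGroup.ker_mk']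
    exact Subgroup.commutator_mem_commutator hx' (Subgroup.mem_top y)
  obtain ⟨hfin, hcard⟩ := SchurAux.main_group p hodd π' hπ' hcen hzc hz hbig hGp S hS
  haveI : Finite (π'.ker ⊓ commutator (FreeGroup G ⧸ Q) : Subgroup (FreeGroup G ⧸ Q)) :=
    Finite.of_injective _ (Subgroup.inclusion_injective inf_le_right)
  have hH2 := SchurAux.card_H2_le π' hπ' hcen (by
    intro α hα
    obtain ⟨u, hu⟩ := SchurAux.lift_exists hα π
    refine ⟨u, fun x y => ?_⟩
    obtain ⟨x, rfl⟩ := QuotientGroup.mk'_surjective Q x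
    obtain ⟨y, rfl⟩ := QuotientGroup.mk'_surjective Q y
    exact hu x y)
  rw [hScard, hd] at hcard
  have hb : Nat.card (schurMultiplier G) * p ^ 3 ≤ p ^ (d.choose 2) * p :=
    (Nat.mul_le_mul_right _ hH2).trans hcard
  have hp0 : (0 : ℝ) < p := by exact_mod_cast hp.pos
  have hb' : (Nat.card (schurMultiplier G) : ℝ) * p ^ 3 ≤ p ^ (d.choose 2) * p := by
    exact_mod_cast hb
  have he : (d : ℝ) * ((d : ℝ) - 1) / 2 - 2 = ((d.choose 2 : ℕ) : ℝ) - ((2 : ℕ) : ℝ) := by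
    rw [Nat.cast_choose_two]; norm_num
  rw [he, Real.rpow_sub hp0, Real.rpow_natCast, Real.rpow_natCast, le_div_iff₀ (by positivity)]
  have h3 : (Nat.card (schurMultiplier G) : ℝ) * p ^ 2 * p ≤ p ^ (d.choose 2) * p := by
    calc _ = (Nat.card (schurMultiplier G) : ℝ) * p ^ 3 := by ring
      _ ≤ _ := hb'
  exact le_of_mul_le_mul_right h3 hp0
end

section
/- Let p be an odd prime and G a finite p-group of nilpotency class 2 with G^p ≤ γ₂(G) and G^p cyclic of order p. Then |M(G)| · p = |M(G/G^p)|, i.e., |M(G)| = |M(G/G^p)| / |G^p|. -/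
namespace SchurAux
open scoped commutatorElement

/-- If `x y = w y x` with `w` central, `wᵖ = 1`, `p` odd, then `(y x)ᵖ = yᵖ xᵖ`. -/
lemma mul_pow_aux {E : Type*} [Group E] {x y w : E} (hw : ∀ e, w * e = e * w)
    (h : x * y = w * (y * x)) (n : ℕ) :
    (y * x) ^ n = y ^ n * x ^ n * w ^ (n.choose 2) := by
  have hwk : ∀ (k : ℕ) (e : E), w ^ k * e = e * w ^ k := fun k e =>
    ((show Commute w e from hw e).pow_left k)
  have hx : ∀ k : ℕ, x ^ k * y = w ^ k * (y * x ^ k) := by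
    intro k
    induction k with
    | zero => simp
    | succ k ih =>
      calc x ^ (k+1) * y = x ^ k * (x * y) := by rw [pow_succ]; group
        _ = x ^ k * (w * (y * x)) := by rw [h]
        _ = w * (x ^ k * y) * x := by rw [← mul_assoc (x^k), ← hw]; group
        _ = w * (w ^ k * (y * x ^ k)) * x := by rw [ih]
        _ = w ^ (k+1) * (y * x ^ (k+1)) := by rw [pow_succ' w, pow_succ x]; group
  induction n with
  | zero => simp
  | succ n ih =>
    have : (n+1).choose 2 = n + n.choose 2 := by
      rw [Nat.choose_succ_succ' n 1]; simp
    calc (y * x) ^ (n+1) = y ^ n * x ^ n * w ^ (n.choose 2) * (y * x) := by rw [pow_succ, ih]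
      _ = y ^ n * (x ^ n * y) * x * w ^ (n.choose 2) := by
          rw [mul_assoc _ (w ^ _), hwk]; group
      _ = y ^ n * (w ^ n * (y * x ^ n)) * x * w ^ (n.choose 2) := by rw [hx]
      _ = y ^ n * (y * x ^ n) * x * (w ^ n * w ^ (n.choose 2)) := by
          rw [hwk]; simp only [mul_assoc]; rw [← mul_assoc (w ^ n) x, hwk n x]; simp only [mul_assoc]
      _ = _ := by rw [this, pow_add w, pow_succ y n, pow_succ x n]; simp only [mul_assoc]

lemma mul_pow_p {p : ℕ} (hp : p.Prime) (hodd : p ≠ 2) {E : Type*} [Group E] {x y w : E}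
    (hw : ∀ e, w * e = e * w) (h : x * y = w * (y * x)) (hwp : w ^ p = 1) :
    (y * x) ^ p = y ^ p * x ^ p := by
  rw [mul_pow_aux hw h p]
  have : p ∣ p.choose 2 := hp.dvd_choose_self (by norm_num) (lt_of_le_of_ne hp.two_le (Ne.symm hodd))
  obtain ⟨k, hk⟩ := this
  rw [hk, pow_mul, hwp]; simp

/-- The hom `x ↦ ⁅c, x⁆` when all these commutators are central. -/
def commHom {E : Type*} [Group E] (c : E) (hc : ∀ x, ⁅c, x⁆ ∈ Subgroup.center E) :
    E →* Subgroup.center E where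
  toFun x := ⟨⁅c, x⁆, hc x⟩
  map_one' := by ext; simp
  map_mul' x y := by
    ext
    have h := Subgroup.mem_center_iff.1 (hc y) x
    simp only [Subgroup.coe_mul, commutatorElement_def] at *
    calc c * (x * y) * c⁻¹ * (x * y)⁻¹ = c * x * c⁻¹ * (c * y * c⁻¹ * y⁻¹) * x⁻¹ := by group
      _ = c * x * c⁻¹ * x⁻¹ * (x * (c * y * c⁻¹ * y⁻¹)) * x⁻¹ := by group
      _ = _ := by rw [h]; group

lemma comm_pow {E : Type*} [Group E] (c : E) (hc : ∀ x, ⁅c, x⁆ ∈ Subgroup.center E) (x : E) (n : ℕ) :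
    ⁅c, x ^ n⁆ = ⁅c, x⁆ ^ n := by
  have := congrArg Subtype.val (map_pow (commHom c hc) x n)
  simpa [commHom] using this

lemma central_lift {p : ℕ} (hp : p.Prime) (hodd : p ≠ 2) {E G : Type*} [Group E] [Group G]
    (π : E →* G) (hπ : Function.Surjective π) (hker : π.ker ≤ Subgroup.center E)
    (hcl : commutator G ≤ Subgroup.center G)
    (hGp : Subgroup.closure (Set.range fun x : G => x ^ p) ≤ commutator G)
    (hord : Nat.card ↥(Subgroup.closure (Set.range fun x : G => x ^ p)) = p)
    (e : E) (he : π e ∈ Subgroup.closure (Set.range fun x : G => x ^ p)) :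
    e ∈ Subgroup.center E := by
  have hpow : ∀ x : G, x ^ p ∈ Subgroup.closure (Set.range fun x : G => x ^ p) :=
    fun x => Subgroup.subset_closure ⟨x, rfl⟩
  have hcomG : ∀ x y : G, ⁅x, y⁆ ∈ Subgroup.center G := fun x y =>
    hcl (Subgroup.commutator_mem_commutator (Subgroup.mem_top x) (Subgroup.mem_top y))
  have hcomGp : ∀ x y : G, ⁅x, y⁆ ^ p = 1 := fun x y => by
    rw [← comm_pow x (hcomG x), commutatorElement_eq_one_iff_mul_comm]
    exact Subgroup.mem_center_iff.1 (hcl (hGp (hpow y))) x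
  have hGhom : ∀ x y : G, (y * x) ^ p = y ^ p * x ^ p := fun x y =>
    mul_pow_p hp hodd (w := ⁅x, y⁆) (fun e => (Subgroup.mem_center_iff.1 (hcomG x y) e).symm)
      (by simp [commutatorElement_def]) (hcomGp x y)
  -- elements over the centre
  have hZ2 : ∀ c : E, π c ∈ Subgroup.center G → ∀ x, ⁅c, x⁆ ∈ Subgroup.center E := by
    intro c hc x
    apply hker
    rw [MonoidHom.mem_ker, map_commutatorElement, commutatorElement_eq_one_iff_mul_comm]
    exact (Subgroup.mem_center_iff.1 hc _).symm
  have hkill : ∀ c : E, π c ∈ Subgroup.center G → ∀ d, π d ∈ commutator G → ⁅c, d⁆ = 1 := by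
    intro c hc d hd
    have h1 : commutator E ≤ (commHom c (hZ2 c hc)).ker := by
      rw [commutator_def, Subgroup.commutator_le]
      intro x _ y _
      rw [MonoidHom.mem_ker, map_commutatorElement, commutatorElement_eq_one_iff_mul_comm]
      exact Subtype.ext (Subgroup.mem_center_iff.1 (hZ2 c hc y) _)
    have h2 : (commutator E).map π = commutator G := by
      rw [commutator_def, commutator_def, Subgroup.map_commutator,
        Subgroup.map_top_of_surjective π hπ]
    rw [← h2] at hd
    obtain ⟨d', hd', hdd⟩ := hd
    have h3 : d'⁻¹ * d ∈ (commHom c (hZ2 c hc)).ker := by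
      have : d'⁻¹ * d ∈ Subgroup.center E := hker (by simp [MonoidHom.mem_ker, hdd])
      rw [MonoidHom.mem_ker]
      ext
      simp only [commHom, MonoidHom.coe_mk, OneHom.coe_mk, Subgroup.coe_one]
      rw [commutatorElement_eq_one_iff_mul_comm]
      exact Subgroup.mem_center_iff.1 this c
    have h4 := mul_mem (h1 hd') h3
    rw [mul_inv_cancel_left, MonoidHom.mem_ker] at h4
    simpa [commHom] using congrArg Subtype.val h4
  have hZ2p : ∀ c : E, π c ∈ Subgroup.center G → ∀ x : E, ⁅c, x⁆ ^ p = 1 := by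
    intro c hc x
    rw [← comm_pow c (hZ2 c hc)]
    exact hkill c hc _ (by rw [map_pow]; exact hGp (hpow _))
  have hcomE : ∀ x y : E, π ⁅x, y⁆ ∈ Subgroup.center G := fun x y => by
    rw [map_commutatorElement]; exact hcomG _ _
  have hmain : ∀ x g : E, ⁅x ^ p, g⁆ = ⁅x, g⁆ ^ p := by
    intro x g
    have hc : π (⁅x, g⁆⁻¹) ∈ Subgroup.center G := by
      rw [map_inv]; exact inv_mem (hcomE x g)
    have hw : ⁅x, ⁅x, g⁆⁻¹⁆ ∈ Subgroup.center E := by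
      rw [← commutatorElement_inv]; exact inv_mem (hZ2 _ hc x)
    have hwp : ⁅x, ⁅x, g⁆⁻¹⁆ ^ p = 1 := by
      rw [← commutatorElement_inv, inv_pow, hZ2p _ hc x, inv_one]
    have h1 : (⁅x, g⁆⁻¹ * x) ^ p = ⁅x, g⁆⁻¹ ^ p * x ^ p :=
      mul_pow_p hp hodd (w := ⁅x, ⁅x, g⁆⁻¹⁆) (fun e => (Subgroup.mem_center_iff.1 hw e).symm)
        (by simp [commutatorElement_def, mul_assoc]) hwp
    have h2 : ⁅x, g⁆⁻¹ * x = g * x * g⁻¹ := by simp [commutatorElement_def, mul_assoc]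
    rw [h2, conj_pow] at h1
    rw [commutatorElement_def (x ^ p)]
    calc x ^ p * g * (x ^ p)⁻¹ * g⁻¹ = x ^ p * (g * x ^ p * g⁻¹)⁻¹ := by group
      _ = _ := by rw [h1, inv_pow, mul_inv_rev, inv_inv, mul_inv_cancel_left]
  have hswap : ∀ x g : E, ⁅x ^ p, g⁆ = ⁅x, g ^ p⁆ := by
    intro x g
    rw [hmain, ← commutatorElement_inv (g ^ p) x, hmain, ← inv_pow, commutatorElement_inv]
  -- a nontrivial p-th power
  obtain ⟨x0, hx0⟩ : ∃ x0 : G, x0 ^ p ≠ 1 := by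
    by_contra! hall
    have : Subgroup.closure (Set.range fun x : G => x ^ p) = ⊥ := by
      rw [Subgroup.closure_eq_bot_iff]
      rintro _ ⟨x, rfl⟩
      exact hall x
    rw [this, Subgroup.card_bot] at hord
    exact hp.one_lt.ne hord
  have hgen : ∀ n ∈ Subgroup.closure (Set.range fun x : G => x ^ p), ∃ k : ℤ, (x0 ^ k) ^ p = n := by
    intro n hn
    have := Fact.mk hp
    have hz := zpowers_eq_top_of_prime_card hord (g := ⟨x0 ^ p, hpow x0⟩)
      (fun h => hx0 (congrArg Subtype.val h))
    have : (⟨n, hn⟩ : Subgroup.closure (Set.range fun x : G => x ^ p)) ∈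
      Subgroup.zpowers (⟨x0 ^ p, hpow x0⟩ : Subgroup.closure (Set.range fun x : G => x ^ p)) := by
      rw [hz]; trivial
    obtain ⟨k, hk⟩ := this
    refine ⟨k, ?_⟩
    have := congrArg Subtype.val hk
    simp only [Subgroup.coe_zpow] at this
    rw [← this, ← zpow_natCast, ← zpow_natCast, ← zpow_mul, ← zpow_mul, mul_comm]
  obtain ⟨e0, he0⟩ := hπ x0
  have hcent : e0 ^ p ∈ Subgroup.center E := by
    rw [Subgroup.mem_center_iff]
    intro g
    obtain ⟨k, hk⟩ := hgen (π g ^ p) (hpow _)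
    have h1 : ⁅e0 ^ p, g * (e0 ^ k)⁻¹⁆ = 1 := by
      rw [hswap, commutatorElement_eq_one_iff_mul_comm]
      refine Subgroup.mem_center_iff.1 (hker ?_) e0
      rw [MonoidHom.mem_ker, map_pow, map_mul, hGhom, ← hk, map_inv, map_zpow, he0, inv_pow,
        mul_inv_cancel]
    rw [commutatorElement_eq_one_iff_commute] at h1
    have h2 : Commute (e0 ^ p) (e0 ^ k) := ((Commute.refl e0).pow_left p).zpow_right k
    have h3 := h1.mul_right h2
    rw [inv_mul_cancel_right] at h3
    exact h3.eq.symm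
  obtain ⟨k, hk⟩ := hgen _ he
  have h5 : e * ((e0 ^ p) ^ k)⁻¹ ∈ Subgroup.center E := by
    apply hker
    rw [MonoidHom.mem_ker, map_mul, ← hk, map_inv, map_zpow, map_pow, he0,
      ← zpow_natCast, ← zpow_natCast, ← zpow_mul, ← zpow_mul, mul_comm k, mul_inv_cancel]
  have := mul_mem h5 (zpow_mem hcent k)
  rwa [inv_mul_cancel_right] at this

section
variable {G : Type*} [Group G] {A : Type*} [AddCommGroup A]

/-- Two-cocycles (trivial action). -/
def Coc (f : G × G → A) : Prop :=
  ∀ g h j : G, f (g * h, j) + f (g, h) = f (h, j) + f (g, h * j)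

/-- Two-coboundaries (trivial action). -/
def Cob (f : G × G → A) : Prop :=
  ∃ x : G → A, ∀ g h : G, x h - x (g * h) + x g = f (g, h)

/-- The central extension attached to a cocycle. -/
@[ext] structure CExt_s18 (f : G × G → A) (hf : Coc f) where
  a : A
  g : G

variable {f : G × G → A} {hf : Coc f}

lemma Coc.one_left (hf : Coc f) (g : G) : f (1, g) = f (1, 1) := by
  have := hf 1 1 g
  simp only [one_mul] at this
  exact (add_left_cancel this).symm

lemma Coc.one_right (hf : Coc f) (g : G) : f (g, 1) = f (1, 1) := by
  have := hf g 1 1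
  simp only [mul_one] at this
  exact add_right_cancel this

instance : Group (CExt_s18 f hf) where
  mul x y := ⟨x.a + y.a + f (x.g, y.g), x.g * y.g⟩
  one := ⟨-f (1, 1), 1⟩
  inv x := ⟨-x.a - f (x.g⁻¹, x.g) - f (1, 1), x.g⁻¹⟩
  mul_assoc x y z := by
    apply CExt_s18.ext
    · change x.a + y.a + f (x.g, y.g) + z.a + f (x.g * y.g, z.g) =
        x.a + (y.a + z.a + f (y.g, z.g)) + f (x.g, y.g * z.g)
      have := hf x.g y.g z.g
      rw [← sub_eq_zero] at this ⊢
      refine Eq.trans ?_ this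
      abel
    · exact mul_assoc x.g y.g z.g
  one_mul x := by
    apply CExt_s18.ext
    · change -f (1, 1) + x.a + f (1, x.g) = x.a
      rw [hf.one_left x.g]; abel
    · exact one_mul x.g
  mul_one x := by
    apply CExt_s18.ext
    · change x.a + -f (1, 1) + f (x.g, 1) = x.a
      rw [hf.one_right x.g]; abel
    · exact mul_one x.g
  inv_mul_cancel x := by
    apply CExt_s18.ext
    · change -x.a - f (x.g⁻¹, x.g) - f (1, 1) + x.a + f (x.g⁻¹, x.g) = -f (1, 1)
      abel
    · exact inv_mul_cancel x.g

lemma CExt_s18.mul_a (x y : CExt_s18 f hf) : (x * y).a = x.a + y.a + f (x.g, y.g) := rfl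
lemma CExt_s18.mul_g (x y : CExt_s18 f hf) : (x * y).g = x.g * y.g := rfl
lemma CExt_s18.one_a : (1 : CExt_s18 f hf).a = -f (1, 1) := rfl
lemma CExt_s18.one_g : (1 : CExt_s18 f hf).g = 1 := rfl

/-- The projection. -/
def CExt_s18.proj (f : G × G → A) (hf : Coc f) : CExt_s18 f hf →* G where
  toFun := CExt_s18.g
  map_one' := rfl
  map_mul' _ _ := rfl

/-- The inclusion of the kernel. -/
def CExt_s18.incl (f : G × G → A) (hf : Coc f) : Multiplicative A →* CExt_s18 f hf where
  toFun a := ⟨a.toAdd - f (1, 1), 1⟩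
  map_one' := by apply CExt_s18.ext <;> simp [CExt_s18.one_a, CExt_s18.one_g]
  map_mul' x y := by
    apply CExt_s18.ext
    · simp only [toAdd_mul, CExt_s18.mul_a]; abel
    · simp [CExt_s18.mul_g]

lemma CExt_s18.proj_surj : Function.Surjective (CExt_s18.proj f hf) := fun g => ⟨⟨0, g⟩, rfl⟩

lemma CExt_s18.mem_ker {x : CExt_s18 f hf} (hx : x ∈ (CExt_s18.proj f hf).ker) :
    ∃ a : A, CExt_s18.incl f hf (Multiplicative.ofAdd a) = x := by
  refine ⟨x.a + f (1, 1), ?_⟩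
  apply CExt_s18.ext
  · simp [CExt_s18.incl]
  · exact (show x.g = 1 from hx).symm

lemma CExt_s18.ker_le : (CExt_s18.proj f hf).ker ≤ Subgroup.center (CExt_s18 f hf) := by
  intro x hx
  have hx : x.g = 1 := hx
  rw [Subgroup.mem_center_iff]
  intro y
  apply CExt_s18.ext
  · rw [CExt_s18.mul_a, CExt_s18.mul_a, hx, hf.one_left y.g, hf.one_right y.g]; abel
  · rw [CExt_s18.mul_g, CExt_s18.mul_g, hx]; simp

/-- Splitting over a central subgroup of prime order. -/
lemma exists_split {p : ℕ} (hp : p.Prime) (hdiv : ∀ a : A, ∃ b : A, p • b = a)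
    (N : Subgroup G) (hN : Nat.card N = p)  :
    ∃ s : N →* CExt_s18 f hf, ∀ n, (s n).g = n := by
  have := Fact.mk hp
  have : Finite N := Nat.finite_of_card_ne_zero (by rw [hN]; exact hp.ne_zero)
  have : Nontrivial N := Finite.one_lt_card_iff_nontrivial (α := N) |>.1 (by rw [hN]; exact hp.one_lt)
  obtain ⟨z, hz⟩ := exists_ne (1 : N)
  have hgen : ∀ x : N, x ∈ Subgroup.zpowers z := fun x => by
    rw [zpowers_eq_top_of_prime_card hN hz]; trivial
  have hzo : orderOf z = p := by
    rw [← hN]; exact orderOf_eq_card_of_forall_mem_zpowers hgen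
  obtain ⟨e, he⟩ := CExt_s18.proj_surj (f := f) (hf := hf) (z : G)
  have hep : e ^ p ∈ (CExt_s18.proj f hf).ker := by
    rw [MonoidHom.mem_ker, map_pow, he]
    have := pow_orderOf_eq_one z
    rw [hzo] at this
    exact_mod_cast this
  obtain ⟨a, ha⟩ := CExt_s18.mem_ker hep
  obtain ⟨b, rfl⟩ := hdiv a
  set i := CExt_s18.incl f hf (Multiplicative.ofAdd b) with hi
  have hiker : i ∈ (CExt_s18.proj f hf).ker := rfl
  have hcomm : Commute e i := Subgroup.mem_center_iff.1 (CExt_s18.ker_le hiker) e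
  have he' : (e * i⁻¹) ^ p = 1 := by
    rw [(hcomm.inv_right).mul_pow, ← ha, ofAdd_nsmul, map_pow, ← hi, inv_pow, mul_inv_cancel]
  have hdvd : orderOf (e * i⁻¹) ∣ orderOf z := by rw [hzo]; exact orderOf_dvd_of_pow_eq_one he'
  let s := monoidHomOfForallMemZpowers hgen hdvd
  have hs : s z = e * i⁻¹ := monoidHomOfForallMemZpowers_apply_gen hgen hdvd
  refine ⟨s, fun n => ?_⟩
  obtain ⟨k, rfl⟩ := hgen n
  change CExt_s18.proj f hf (s (z ^ k)) = _
  rw [map_zpow, hs, map_zpow, map_mul, map_inv, MonoidHom.mem_ker.1 hiker, he]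
  simp

/-- Surjectivity of inflation. -/
lemma inflation_surj {p : ℕ} (hp : p.Prime) (hdiv : ∀ a : A, ∃ b : A, p • b = a)
    (N : Subgroup G) [N.Normal] (hN : Nat.card N = p)
    (hcent : ∀ e : CExt_s18 f hf, e.g ∈ N → e ∈ Subgroup.center (CExt_s18 f hf)) :
    ∃ f' : (G ⧸ N) × (G ⧸ N) → A, Coc f' ∧
      Cob (fun x : G × G => f' (x.1, x.2) - f x) := by
  obtain ⟨s, hs⟩ := exists_split (f := f) (hf := hf) hp hdiv N hN
  have hmem : ∀ g : G, (Quotient.out (g : G ⧸ N))⁻¹ * g ∈ N := fun g => by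
    rw [← QuotientGroup.eq]; exact Quotient.out_eq _
  let σ : G → CExt_s18 f hf := fun g => ⟨0, Quotient.out (g : G ⧸ N)⟩ * s ⟨_, hmem g⟩
  have hσg : ∀ g, (σ g).g = g := fun g => by
    simp only [σ, CExt_s18.mul_g, hs]; simp
  have hσm : ∀ (g : G) (m : N), σ (g * m) = σ g * s m := by
    intro g m
    have h1 : ((g * m : G) : G ⧸ N) = g := by
      rw [QuotientGroup.mk_mul_of_mem _ m.2]
    have h2 : (⟨_, hmem (g * m)⟩ : N) = ⟨_, hmem g⟩ * m := by
      apply Subtype.ext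
      simp only [Subgroup.coe_mul]
      rw [h1]; group
    simp only [σ]
    rw [h2, map_mul, h1]; group
  have hsc : ∀ (m : N) (e : CExt_s18 f hf), e * s m = s m * e := fun m e =>
    Subgroup.mem_center_iff.1 (hcent (s m) (by rw [hs]; exact m.2)) e
  let D : G → G → CExt_s18 f hf := fun g h => σ g * σ h * (σ (g * h))⁻¹
  let F : G → G → A := fun g h => f (g, h) + (σ g).a + (σ h).a - (σ (g * h)).a
  have hDF : ∀ g h, D g h = CExt_s18.incl f hf (Multiplicative.ofAdd (F g h)) := by
    intro g h
    simp only [D]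
    rw [mul_inv_eq_iff_eq_mul]
    apply CExt_s18.ext
    · simp only [CExt_s18.mul_a, CExt_s18.incl, hσg, MonoidHom.coe_mk, OneHom.coe_mk, toAdd_ofAdd, F,
        hf.one_left]
      abel
    · simp [CExt_s18.mul_g, hσg, CExt_s18.incl]
  have hinj : ∀ a b : A, CExt_s18.incl f hf (Multiplicative.ofAdd a) =
      CExt_s18.incl f hf (Multiplicative.ofAdd b) → a = b := by
    intro a b h
    have := congrArg CExt_s18.a h
    simpa [CExt_s18.incl] using this
  have hDinv : ∀ (g h : G) (m n : N), D (g * m) (h * n) = D g h := by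
    intro g h m n
    have h1 : g * m * (h * n) = g * h * ((⟨h⁻¹ * m * h, by
        simpa using (inferInstance : N.Normal).conj_mem m m.2 h⁻¹⟩ * n : N) : G) := by
      simp only [Subgroup.coe_mul]; group
    have h2 : ∃ m' : N, g * m * (h * n) = g * h * ((m' * n : N) : G) ∧ s m' = s m := by
      refine ⟨_, h1, ?_⟩
      have hcc : ∀ k : N, (k : G) * h = h * k := by
        intro k
        have := congrArg CExt_s18.g (hsc k ⟨0, h⟩)
        simp only [CExt_s18.mul_g, hs] at this
        exact this.symm
      congr 1
      apply Subtype.ext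
      simp only
      rw [mul_assoc, hcc]; group
    obtain ⟨m', h3, h4⟩ := h2
    simp only [D]
    rw [h3, hσm, hσm, hσm, map_mul, h4]
    have h5 : σ g * s m * (σ h * s n) = σ g * σ h * (s m * s n) := by
      rw [mul_assoc, ← mul_assoc (s m), ← hsc m]; simp only [mul_assoc]
    rw [h5, mul_inv_rev, ← mul_assoc, mul_inv_cancel_right]
  have hFinv : ∀ (g h : G), F (Quotient.out (g : G ⧸ N)) (Quotient.out (h : G ⧸ N)) = F g h := by
    intro g h
    apply hinj
    rw [← hDF, ← hDF]
    have := hDinv (Quotient.out (g : G ⧸ N)) (Quotient.out (h : G ⧸ N)) ⟨_, hmem g⟩ ⟨_, hmem h⟩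
    simp only [mul_inv_cancel_left] at this
    exact this.symm
  refine ⟨fun x => F x.1.out x.2.out, ?_, ?_⟩
  · intro g h j
    induction g using QuotientGroup.induction_on with | _ g
    induction h using QuotientGroup.induction_on with | _ h
    induction j using QuotientGroup.induction_on with | _ j
    simp only [← QuotientGroup.mk_mul, hFinv]
    simp only [F]
    have := hf g h j
    rw [mul_assoc]
    rw [← sub_eq_zero] at this ⊢
    refine Eq.trans ?_ this
    abel
  · refine ⟨fun g => (σ g).a, fun g h => ?_⟩
    simp only [hFinv]
    simp only [F]
    abel

end
section
variable (G : Type*) [Group G] (A : Type*) [AddCommGroup A]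

/-- Group of two-cocycles. -/
def Z2 : AddSubgroup (G × G → A) where
  carrier := {f | Coc f}
  zero_mem' := by intro g h j; simp
  add_mem' := by
    intro a b ha hb g h j
    have h1 := ha g h j
    have h2 := hb g h j
    simp only [Pi.add_apply]
    rw [add_add_add_comm, h1, h2, add_add_add_comm]
  neg_mem' := by
    intro a ha g h j
    have h1 := ha g h j
    simp only [Pi.neg_apply]
    rw [← neg_add, h1, neg_add]

/-- Group of two-coboundaries. -/
def B2 : AddSubgroup (G × G → A) where
  carrier := {f | Cob f}
  zero_mem' := ⟨0, by simp⟩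
  add_mem' := by
    rintro a b ⟨x, hx⟩ ⟨y, hy⟩
    refine ⟨x + y, fun g h => ?_⟩
    simp only [Pi.add_apply]
    rw [← hx, ← hy]; abel
  neg_mem' := by
    rintro a ⟨x, hx⟩
    refine ⟨-x, fun g h => ?_⟩
    simp only [Pi.neg_apply]
    rw [← hx]; abel

/-- Concrete second cohomology. -/
abbrev HH2 := Z2 G A ⧸ (B2 G A).addSubgroupOf (Z2 G A)

end

section
variable {G : Type*} [Group G] (A : Type*) [AddCommGroup A] (N : Subgroup G) [N.Normal]

/-- Inflation on cocycles. -/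
def inflZ : Z2 (G ⧸ N) A →+ Z2 G A where
  toFun f := ⟨fun x => f.1 (x.1, x.2), fun g h j => f.2 g h j⟩
  map_zero' := rfl
  map_add' _ _ := rfl

/-- Inflation on cohomology. -/
def infl : HH2 (G ⧸ N) A →+ HH2 G A :=
  QuotientAddGroup.map _ _ (inflZ A N) (by
    rintro ⟨f, hf⟩ ⟨x, hx⟩
    exact ⟨fun g => x g, fun g h => hx g h⟩)

lemma out_mem (g : G) : (Quotient.out (g : G ⧸ N))⁻¹ * g ∈ N := by
  rw [← QuotientGroup.eq]; exact Quotient.out_eq _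

/-- The `N`-coordinate of `g`. -/
noncomputable def nn (g : G) : N := ⟨_, out_mem N g⟩

lemma out_mul_nn (g : G) : Quotient.out (g : G ⧸ N) * (nn N g : G) = g := by simp [nn]

lemma nn_mul (g : G) (m : N) : nn N (g * m) = nn N g * m := by
  apply Subtype.ext
  simp only [nn, Subgroup.coe_mul]
  rw [QuotientGroup.mk_mul_of_mem _ m.2, mul_assoc]

lemma cc_mem (q r : G ⧸ N) : (Quotient.out (q * r))⁻¹ * (q.out * r.out) ∈ N := by
  have := out_mem N (q.out * r.out)
  rwa [QuotientGroup.mk_mul, QuotientGroup.out_eq', QuotientGroup.out_eq'] at this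

/-- The cocycle of the extension `N → G → G/N`. -/
noncomputable def cc (q r : G ⧸ N) : N := ⟨_, cc_mem N q r⟩

variable {N}
lemma nn_mul' (hN : N ≤ Subgroup.center G) (g h : G) :
    nn N (g * h) = cc N g h * (nn N g * nn N h) := by
  apply Subtype.ext
  have h1 := Subgroup.mem_center_iff.1 (hN (nn N g).2) (Quotient.out (h : G ⧸ N))
  simp only [Subgroup.coe_mul]
  calc ((nn N (g * h) : N) : G)
      = (Quotient.out ((g : G ⧸ N) * (h : G ⧸ N)))⁻¹ * (g * h) := by simp [nn]
    _ = (Quotient.out ((g : G ⧸ N) * (h : G ⧸ N)))⁻¹ * ((Quotient.out (g : G ⧸ N) * (nn N g : G)) *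
          (Quotient.out (h : G ⧸ N) * (nn N h : G))) := by rw [out_mul_nn, out_mul_nn]
    _ = (Quotient.out ((g : G ⧸ N) * (h : G ⧸ N)))⁻¹ * (Quotient.out (g : G ⧸ N) *
          ((nn N g : G) * Quotient.out (h : G ⧸ N)) * (nn N h : G)) := by group
    _ = _ := by rw [← h1]; simp only [cc]; group

/-- Transgression at the level of cochains. -/
noncomputable def tc (χ : N →* Multiplicative A) (x : (G ⧸ N) × (G ⧸ N)) : A :=
  (χ (cc N x.1 x.2)).toAdd

lemma tc_infl (hN : N ≤ Subgroup.center G) (χ : N →* Multiplicative A) (g h : G) :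
    tc A χ (g, h) = (χ (nn N (g * h))).toAdd - (χ (nn N g)).toAdd - (χ (nn N h)).toAdd := by
  rw [nn_mul' hN]; simp only [tc, map_mul, toAdd_mul]; abel

lemma tc_coc (hN : N ≤ Subgroup.center G) (χ : N →* Multiplicative A) : Coc (tc A χ) := by
  intro g h j
  induction g using QuotientGroup.induction_on with | _ g
  induction h using QuotientGroup.induction_on with | _ h
  induction j using QuotientGroup.induction_on with | _ j
  simp only [← QuotientGroup.mk_mul, tc_infl A hN]
  rw [mul_assoc]; abel

/-- Transgression. -/
noncomputable def tr (hN : N ≤ Subgroup.center G) (χ : N →* Multiplicative A) : HH2 (G ⧸ N) A :=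
  QuotientAddGroup.mk ⟨tc A χ, tc_coc A hN χ⟩

lemma tr_inj (hN : N ≤ Subgroup.center G) (hN' : N ≤ commutator G) :
    Function.Injective (tr A hN) := by
  intro χ₁ χ₂ h
  rw [tr, tr, QuotientAddGroup.eq] at h
  obtain ⟨ψ, hψ⟩ := h
  have hψ : ∀ q r : G ⧸ N, ψ r - ψ (q * r) + ψ q = -tc A χ₁ (q, r) + tc A χ₂ (q, r) := hψ
  let Φ : G →* Multiplicative A := MonoidHom.mk' (fun g => Multiplicative.ofAdd
      (ψ g - (χ₁ (nn N g)).toAdd + (χ₂ (nn N g)).toAdd) ) (by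
    intro g h
    rw [← ofAdd_add]
    congr 1
    have := hψ g h
    rw [tc_infl A hN, tc_infl A hN, ← QuotientGroup.mk_mul] at this
    rw [← sub_eq_zero] at this ⊢
    rw [← neg_eq_zero] at this
    refine Eq.trans ?_ this
    abel)
  ext m
  have hk : Φ m = 1 := Abelianization.commutator_subset_ker Φ (hN' m.2)
  have h1 : Φ 1 = 1 := map_one Φ
  have h2 : ((m : G) : G ⧸ N) = (1 : G) := by
    rw [QuotientGroup.mk_one]; exact (QuotientGroup.eq_one_iff _).2 m.2
  have h3 : nn N (m : G) = nn N 1 * m := by rw [← nn_mul, one_mul]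
  have hk' : ψ (m : G) - (χ₁ (nn N (m : G))).toAdd + (χ₂ (nn N (m : G))).toAdd = 0 := hk
  have h1' : ψ (1 : G) - (χ₁ (nn N (1 : G))).toAdd + (χ₂ (nn N (1 : G))).toAdd = 0 := h1
  rw [h2, h3, map_mul χ₁, map_mul χ₂, toAdd_mul, toAdd_mul] at hk'
  rw [← h1', ← sub_eq_zero] at hk'
  change (χ₁ m).toAdd = (χ₂ m).toAdd
  rw [eq_comm, ← sub_eq_zero]
  refine Eq.trans ?_ hk'
  abel

lemma tr_range (hN : N ≤ Subgroup.center G) :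
    Set.range (tr A hN) = ((infl A N).ker : Set (HH2 (G ⧸ N) A)) := by
  ext y
  constructor
  · rintro ⟨χ, rfl⟩
    change infl A N (tr A hN χ) = 0
    simp only [infl, tr, QuotientAddGroup.map_mk]
    rw [QuotientAddGroup.eq_zero_iff]
    refine ⟨fun g => -(χ (nn N g)).toAdd, fun g h => ?_⟩
    change _ = tc A χ (g, h)
    rw [tc_infl A hN, sub_neg_eq_add]; abel
  · induction y using QuotientAddGroup.induction_on with | _ y
    obtain ⟨f, hf⟩ := y
    intro hy
    have hy : infl A N (QuotientAddGroup.mk ⟨f, hf⟩) = 0 := hy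
    simp only [infl, QuotientAddGroup.map_mk] at hy
    rw [QuotientAddGroup.eq_zero_iff] at hy
    obtain ⟨φ, hφ⟩ := hy
    have hφ : ∀ g h : G, φ h - φ (g * h) + φ g = f (g, h) := hφ
    have hf : Coc f := hf
    have key : ∀ (g : G) (m : N), φ (g * m) = φ g + (φ m - φ 1) := by
      intro g m
      have h1 := hφ g m
      have h2 := hφ 1 1
      rw [(QuotientGroup.eq_one_iff (m : G)).2 m.2, hf.one_right] at h1
      rw [QuotientGroup.mk_one, ← h1, mul_one, ← sub_eq_zero] at h2
      rw [← sub_eq_zero]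
      refine Eq.trans ?_ h2
      abel
    let χ : N →* Multiplicative A := MonoidHom.mk' (fun m => Multiplicative.ofAdd (φ 1 - φ m)) (by
      intro m n
      rw [← ofAdd_add, Subgroup.coe_mul, key]
      congr 1; abel)
    refine ⟨χ, ?_⟩
    rw [tr, QuotientAddGroup.eq]
    refine ⟨fun q => φ q.out, fun q r => ?_⟩
    change _ = -tc A χ (q, r) + f (q, r)
    induction q using QuotientGroup.induction_on with | _ g
    induction r using QuotientGroup.induction_on with | _ h
    have hd : ∀ g : G, φ g = φ (Quotient.out (g : G ⧸ N)) - (χ (nn N g)).toAdd := by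
      intro g
      have := key (Quotient.out (g : G ⧸ N)) (nn N g)
      rw [out_mul_nn] at this
      rw [this]
      simp only [χ, MonoidHom.mk'_apply, toAdd_ofAdd]
      abel
    rw [← hφ, tc_infl A hN, hd g, hd h, hd (g * h), QuotientGroup.mk_mul]
    abel

lemma card_infl (hN : N ≤ Subgroup.center G) (hN' : N ≤ commutator G)
    (hs : Function.Surjective (infl A N)) :
    Nat.card (HH2 G A) * Nat.card (N →* Multiplicative A) = Nat.card (HH2 (G ⧸ N) A) := by
  rw [AddSubgroup.card_eq_card_quotient_mul_card_addSubgroup (infl A N).ker,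
    Nat.card_congr (QuotientAddGroup.quotientKerEquivOfSurjective _ hs).toEquiv]
  congr 1
  rw [Nat.card_congr (Equiv.ofInjective _ (tr_inj A hN hN')), tr_range]
  rfl

end

open groupCohomology in
lemma mem_B2 (G : Type) [Group G] (f : G × G → Additive ℂˣ) :
    f ∈ coboundaries₂ (Rep.trivial ℤ G (Additive ℂˣ)) ↔ Cob f := by
  constructor
  · rintro ⟨y, hy⟩
    exact ⟨y, fun g h => congrFun hy (g, h)⟩
  · rintro ⟨y, hy⟩
    exact ⟨y, funext fun z => hy z.1 z.2⟩

open groupCohomology in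
lemma mem_Z2 (G : Type) [Group G] (f : G × G → Additive ℂˣ) :
    f ∈ cocycles₂ (Rep.trivial ℤ G (Additive ℂˣ)) ↔ Coc f :=
  mem_cocycles₂_iff (A := Rep.trivial ℤ G (Additive ℂˣ)) f

open groupCohomology in
/-- The comparison map from concrete cocycles to the cocycles of Mathlib. -/
def toZ2 (G : Type) [Group G] :
    Z2 G (Additive ℂˣ) →+ cocycles₂ (Rep.trivial ℤ G (Additive ℂˣ)) where
  toFun f := ⟨f.1, (mem_Z2 G f.1).2 f.2⟩
  map_zero' := rfl
  map_add' _ _ := rfl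

open groupCohomology in
/-- The comparison map from concrete cocycles to the `H2` of Mathlib. -/
noncomputable def toH2 (G : Type) [Group G] :
    Z2 G (Additive ℂˣ) →+ H2 (Rep.trivial ℤ G (Additive ℂˣ)) :=
  (H2π (Rep.trivial ℤ G (Additive ℂˣ))).hom.toAddMonoidHom.comp (toZ2 G)

open groupCohomology in
lemma toH2_surj (G : Type) [Group G] : Function.Surjective (toH2 G) := by
  intro y
  induction y using H2_induction_on with | _ x
  exact ⟨⟨x.1, (mem_Z2 G x.1).1 x.2⟩, rfl⟩

open groupCohomology in
lemma toH2_ker (G : Type) [Group G] :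
    (toH2 G).ker = (B2 G (Additive ℂˣ)).addSubgroupOf (Z2 G (Additive ℂˣ)) := by
  ext x
  rw [AddMonoidHom.mem_ker, AddSubgroup.mem_addSubgroupOf]
  exact (H2π_eq_zero_iff (A := Rep.trivial ℤ G (Additive ℂˣ)) ⟨x.1, (mem_Z2 G x.1).2 x.2⟩).trans
    (mem_B2 G x.1)

lemma card_schur (G : Type) [Group G] :
    Nat.card (schurMultiplier G) = Nat.card (HH2 G (Additive ℂˣ)) := by
  rw [HH2, ← toH2_ker]
  exact (Nat.card_congr
    (QuotientAddGroup.quotientKerEquivOfSurjective (toH2 G) (toH2_surj G)).toEquiv).symm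

end SchurAux

/-- If `p` is an odd prime and `G` is a finite `p`-group of nilpotency class 2 with
`Gᵖ ≤ γ₂(G)` and `Gᵖ` cyclic of order `p`, then `|M(G)| ⬝ p = |M(G / Gᵖ)|`.
(The subgroup `Gᵖ` is central, hence normal; normality is recorded as an
instance argument so that the quotient group `G ⧸ Gᵖ` can be formed.) -/
theorem schur_multiplier_quotient_Gp (p : ℕ) (hp : p.Prime) (hodd : p ≠ 2)
    (G : Type) [Group G] [Finite G] [Group.IsNilpotent G]
    (hpG : IsPGroup p G)
    (hc : Group.nilpotencyClass G = 2)
    (hGp : Subgroup.closure (Set.range fun x : G => x ^ p) ≤ commutator G)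
    (hcyc : IsCyclic ↥(Subgroup.closure (Set.range fun x : G => x ^ p)))
    (hord : Nat.card ↥(Subgroup.closure (Set.range fun x : G => x ^ p)) = p)
    [hnorm : (Subgroup.closure (Set.range fun x : G => x ^ p)).Normal] :
    Nat.card (schurMultiplier G) * p =
      Nat.card (schurMultiplier
        (G ⧸ Subgroup.closure (Set.range fun x : G => x ^ p))) := by
  classical
  have hcl : commutator G ≤ Subgroup.center G := by
    have h := Subgroup.lowerCentralSeries_nilpotencyClass (G := G)
    rw [hc, Subgroup.lowerCentralSeries_succ, Subgroup.top_lowerCentralSeries_one] at h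
    rw [Subgroup.commutator_eq_bot_iff_le_centralizer, Subgroup.coe_top,
      Subgroup.centralizer_univ] at h
    exact h
  rw [SchurAux.card_schur, SchurAux.card_schur]
  generalize hNdef : Subgroup.closure (Set.range fun x : G => x ^ p) = N at *
  have hNc : N ≤ Subgroup.center G := hGp.trans hcl
  have hdiv : ∀ a : Additive ℂˣ, ∃ b : Additive ℂˣ, p • b = a := by
    intro a
    obtain ⟨z, hz⟩ := IsAlgClosed.exists_pow_nat_eq ((Additive.toMul a : ℂˣ) : ℂ) hp.pos
    have hz0 : z ≠ 0 := by
      rintro rfl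
      rw [zero_pow hp.ne_zero] at hz
      exact (Additive.toMul a).ne_zero hz.symm
    refine ⟨Additive.ofMul (Units.mk0 z hz0), ?_⟩
    rw [← ofMul_pow]
    apply Additive.toMul.injective
    apply Units.ext
    simpa using hz
  have hsurj : Function.Surjective (SchurAux.infl (Additive ℂˣ) N) := by
    intro y
    induction y using QuotientAddGroup.induction_on with | _ y
    obtain ⟨f, hf⟩ := y
    have hfc : SchurAux.Coc f := hf
    obtain ⟨f', hf', hcob⟩ := SchurAux.inflation_surj (f := f) (hf := hfc) hp hdiv N hord (by
      intro e he
      subst hNdef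
      exact SchurAux.central_lift hp hodd (SchurAux.CExt_s18.proj f hfc) SchurAux.CExt_s18.proj_surj
        SchurAux.CExt_s18.ker_le hcl hGp hord e he)
    refine ⟨QuotientAddGroup.mk ⟨f', hf'⟩, ?_⟩
    simp only [SchurAux.infl, QuotientAddGroup.map_mk]
    rw [eq_comm, QuotientAddGroup.eq]
    obtain ⟨x, hx⟩ := hcob
    refine ⟨x, fun g h => (hx g h).trans ?_⟩
    change _ = - f (g, h) + f' (g, h)
    abel
  rw [← SchurAux.card_infl (Additive ℂˣ) hNc hGp hsurj]
  congr 1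
  have : Finite N := Nat.finite_of_card_ne_zero (by rw [hord]; exact hp.ne_zero)
  let _ : CommGroup N := hcyc.commGroup
  have : NeZero (Monoid.exponent N) := ⟨Monoid.exponent_ne_zero_of_finite⟩
  have hh := CommGroup.card_monoidHom_of_hasEnoughRootsOfUnity N ℂ
  rw [hord] at hh
  exact hh.symm
end
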